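/- arXiv:math/0503505 — 4 statements merged into one kernel-verified Lean document; each statement's English description precedes it below -/
import Mathlib

section
/- Let n ≥ 1, let k ≥ 2 be an even integer, and let f : ℝⁿ → ℝ be smooth with f(0) = 0, f(x) = f_k(x) + O(‖x‖^{k+1}) as x → 0, where f_k is homogeneous of degree k and f_k(x) > 0 for all x ≠ 0 (so 0 is a local minimum of f). Then there exists ε > 0 such that for every smooth compactly supported cut-off Θ with support in the ball B(0,ε), Θ = 1 near 0 and 0 ≤ Θ ≤ 1, the integral I_s(z) = ∫_{ℝⁿ} g(z f(x), x) Θ(x) dx admits a full asymptotic expansion as z → ∞: there exist real coefficients c_j, j ∈ ℕ, such that for every N ∈ ℕ, I_s(z) = Σ_{j=0}^{N} c_j z^{-j/k} + O(z^{-(N+1)/k}). -/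
open MeasureTheory Filter Asymptotics

/-!
In polar form `f (r • v) = r ^ k * h (r, v)` with `h` smooth (Hadamard's lemma) and
`h (0, v) = fk v`, so `h` is positive for unit `v` and small `r`. Put `s = z ^ (-1 / k)` and
`x = s • y`: the phase `z * f x` becomes `‖y‖ ^ k * h (s * ‖y‖, y / ‖y‖)`, and `s` enters the
integrand only through the radius `r = s * ‖y‖`. Taylor expansion in `r` then gives the powers of
`s`. It can be integrated over `y` because every `r`-derivative of `g (τ * h (r, v), r • v)` decays
faster than any power of `τ = ‖y‖ ^ k`, uniformly in the direction `v`.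
-/

open Set Topology
open scoped ContDiff SchwartzMap LineDeriv

section Division

variable {E F : Type*} [NormedAddCommGroup E] [NormedSpace ℝ E] [FiniteDimensional ℝ E]
  [NormedAddCommGroup F] [NormedSpace ℝ F]

theorem hasFDerivAt_intervalIntegral_of_contDiff {φ : E × ℝ → F} (hφ : ContDiff ℝ 1 φ) (a b : ℝ)
    (x : E) :
    HasFDerivAt (fun x => ∫ t in a..b, φ (x, t))
      (∫ t in a..b, (fderiv ℝ φ (x, t)).comp (ContinuousLinearMap.inl ℝ E ℝ)) x := by
  have hderiv : Continuous fun q : E × ℝ =>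
      (fderiv ℝ φ q).comp (ContinuousLinearMap.inl ℝ E ℝ) :=
    (hφ.continuous_fderiv one_ne_zero).clm_comp continuous_const
  obtain ⟨C, hC⟩ := ((isCompact_closedBall x 1).prod
    isCompact_uIcc).exists_bound_of_continuousOn hderiv.continuousOn
  refine intervalIntegral.hasFDerivAt_integral_of_dominated_of_fderiv_le (𝕜 := ℝ)
    (F := fun x t => φ (x, t))
    (F' := fun x t => (fderiv ℝ φ (x, t)).comp (ContinuousLinearMap.inl ℝ E ℝ))
    (bound := fun _ => C) (Metric.ball_mem_nhds x one_pos)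
    (.of_forall fun y => ?_) ?_ ?_ (.of_forall fun t ht y hy => ?_) ?_
    (.of_forall fun t _ y _ => ?_)
  · exact (hφ.continuous.comp (by fun_prop)).aestronglyMeasurable
  · exact (hφ.continuous.comp (by fun_prop)).intervalIntegrable _ _
  · exact (hderiv.comp (by fun_prop : Continuous fun t : ℝ => (x, t))).aestronglyMeasurable
  · exact hC (y, t) ⟨Metric.ball_subset_closedBall hy, uIoc_subset_uIcc ht⟩
  · exact intervalIntegrable_const
  · exact (hφ.differentiable one_ne_zero (y, t)).hasFDerivAt.comp y (hasFDerivAt_prodMk_left y t)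

theorem contDiff_nat_intervalIntegral (m : ℕ) {φ : E × ℝ → F} (hφ : ContDiff ℝ m φ) (a b : ℝ) :
    ContDiff ℝ m fun x => ∫ t in a..b, φ (x, t) := by
  induction m generalizing φ with
  | zero =>
    rw [Nat.cast_zero, contDiff_zero] at hφ ⊢
    exact intervalIntegral.continuous_parametric_intervalIntegral_of_continuous' (by exact hφ) a b
  | succ m ih =>
    have hφ₁ : ContDiff ℝ 1 φ := hφ.of_le (by norm_cast; omega)
    have hderiv := hasFDerivAt_intervalIntegral_of_contDiff hφ₁ a b
    push_cast
    refine contDiff_succ_iff_fderiv_apply.2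
      ⟨fun x => (hderiv x).differentiableAt, by simp, fun v => ?_⟩
    have hfderiv_apply : ∀ x, fderiv ℝ (fun x => ∫ t in a..b, φ (x, t)) x v =
        ∫ t in a..b, fderiv ℝ φ (x, t) (v, 0) := fun x => by
      rw [(hderiv x).fderiv, ContinuousLinearMap.intervalIntegral_apply]
      · rfl
      · exact (((hφ₁.continuous_fderiv one_ne_zero).clm_comp continuous_const).comp
          (by fun_prop : Continuous fun t : ℝ => (x, t))).intervalIntegrable _ _
    simp only [hfderiv_apply]
    exact ih ((hφ.fderiv_right (m := m) (by norm_cast)).clm_apply contDiff_const)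

theorem contDiff_intervalIntegral {n : ℕ∞} {φ : E × ℝ → F} (hφ : ContDiff ℝ n φ) (a b : ℝ) :
    ContDiff ℝ n fun x => ∫ t in a..b, φ (x, t) :=
  contDiff_iff_forall_nat_le.2 fun m hm =>
    contDiff_nat_intervalIntegral m (hφ.of_le (by exact_mod_cast hm)) a b

variable [CompleteSpace F]

theorem exists_contDiff_eq_smul {φ : ℝ × E → F} (hφ : ContDiff ℝ ∞ φ)
    (hzero : ∀ v, φ (0, v) = 0) :
    ∃ ψ : ℝ × E → F, ContDiff ℝ ∞ ψ ∧ ∀ r v, φ (r, v) = r • ψ (r, v) := by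
  have hderiv : ContDiff ℝ ∞ fun q => fderiv ℝ φ q (1, 0) :=
    (hφ.fderiv_right (m := ∞) le_rfl).clm_apply contDiff_const
  refine ⟨fun q => ∫ t in (0 : ℝ)..1, fderiv ℝ φ (t * q.1, q.2) (1, 0),
    contDiff_intervalIntegral (φ := fun x : (ℝ × E) × ℝ => fderiv ℝ φ (x.2 * x.1.1, x.1.2) (1, 0))
      (hderiv.comp (f := fun x : (ℝ × E) × ℝ => (x.2 * x.1.1, x.1.2)) (by fun_prop)) 0 1,
    fun r v => ?_⟩
  have hchain : ∀ t ∈ uIcc (0 : ℝ) 1, HasDerivAt (fun t => φ (t * r, v))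
      (r • fderiv ℝ φ (t * r, v) (1, 0)) t := fun t _ => by
    have hcomp := (hφ.differentiable (by simp) (t * r, v)).hasFDerivAt.comp_hasDerivAt t
      (((hasDerivAt_id t).mul_const r).prodMk (hasDerivAt_const t v))
    refine hcomp.congr_deriv ?_
    rw [← map_smul]
    simp
  have hcont : Continuous fun t => r • fderiv ℝ φ (t * r, v) (1, 0) :=
    continuous_const.smul
      (hderiv.continuous.comp (by fun_prop : Continuous fun t : ℝ => (t * r, v)))
  rw [← intervalIntegral.integral_smul,
    intervalIntegral.integral_eq_sub_of_hasDerivAt hchain (hcont.intervalIntegrable _ _)]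
  simp [hzero]

theorem exists_contDiff_eq_pow_smul (k : ℕ) {φ : ℝ × E → F} (hφ : ContDiff ℝ ∞ φ)
    (hO : ∀ v, (fun r => φ (r, v)) =O[𝓝[>] 0] fun r => r ^ k) :
    ∃ ψ : ℝ × E → F, ContDiff ℝ ∞ ψ ∧ ∀ r v, φ (r, v) = r ^ k • ψ (r, v) := by
  induction k generalizing φ with
  | zero => exact ⟨φ, hφ, by simp⟩
  | succ k ih =>
    have hzero : ∀ v, φ (0, v) = 0 := fun v => by
      have hpow : Tendsto (fun r : ℝ => r ^ (k + 1)) (𝓝[>] 0) (𝓝 0) :=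
        tendsto_nhdsWithin_of_tendsto_nhds
          (by simpa using (continuous_pow (M := ℝ) (k + 1)).tendsto 0)
      have hcont : Continuous fun r => φ (r, v) := hφ.continuous.comp (by fun_prop)
      exact tendsto_nhds_unique (tendsto_nhdsWithin_of_tendsto_nhds (hcont.tendsto 0))
        ((hO v).trans_tendsto hpow)
    obtain ⟨ψ, hψ, hφψ⟩ := exists_contDiff_eq_smul hφ hzero
    have hψO : ∀ v, (fun r => ψ (r, v)) =O[𝓝[>] 0] fun r => r ^ k := fun v => by
      refine ((isBigO_refl (fun r : ℝ => r⁻¹) (𝓝[>] 0)).smul (hO v)).congr' ?_ ?_ <;>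
        filter_upwards [self_mem_nhdsWithin] with r (hr : 0 < r)
      · rw [hφψ, inv_smul_smul₀ hr.ne']
      · rw [smul_eq_mul, pow_succ', inv_mul_cancel_left₀ hr.ne']
    obtain ⟨χ, hχ, hψχ⟩ := ih hψ hψO
    exact ⟨χ, hχ, fun r v => by rw [hφψ, hψχ, smul_smul, pow_succ']⟩

theorem exists_contDiff_polar_form {k : ℕ} {f fk : E → F} (hf : ContDiff ℝ ∞ f)
    (hhom : ∀ c : ℝ, 0 < c → ∀ x, fk (c • x) = c ^ k • fk x)
    (hjet : (fun x => f x - fk x) =O[𝓝 0] fun x => ‖x‖ ^ (k + 1)) :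
    ∃ h : ℝ × E → F, ContDiff ℝ ∞ h ∧ (∀ r v, f (r • v) = r ^ k • h (r, v)) ∧
      ∀ v, h (0, v) = fk v := by
  have hray : ∀ v, (fun r : ℝ => f (r • v) - r ^ k • fk v) =O[𝓝[>] 0] fun r => r ^ (k + 1) := by
    intro v
    have hlim : Tendsto (fun r : ℝ => r • v) (𝓝[>] 0) (𝓝 0) :=
      tendsto_nhdsWithin_of_tendsto_nhds
        (by simpa using (by fun_prop : Continuous fun r : ℝ => r • v).tendsto 0)
    refine ((hjet.comp_tendsto hlim).congr' ?_ .rfl).trans (.of_bound (‖v‖ ^ (k + 1)) ?_)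
    · filter_upwards [self_mem_nhdsWithin] with r hr
      simp [hhom r hr]
    · exact .of_forall fun r => by simp [norm_smul, mul_pow, mul_comm]
  obtain ⟨h, hh, hfh⟩ := exists_contDiff_eq_pow_smul k (φ := fun q => f (q.1 • q.2))
    (hf.comp (contDiff_fst.smul contDiff_snd)) fun v => by
      have hpow : (fun r : ℝ => r ^ (k + 1)) =O[𝓝[>] 0] fun r => r ^ k :=
        (isLittleO_pow_pow k.lt_succ_self).isBigO.mono nhdsWithin_le_nhds
      have hfk : (fun r : ℝ => r ^ k • fk v) =O[𝓝[>] 0] fun r => r ^ k :=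
        .of_bound ‖fk v‖ (.of_forall fun r => by rw [norm_smul, mul_comm])
      simpa using ((hray v).trans hpow).add hfk
  refine ⟨h, hh, hfh, fun v => ?_⟩
  have hcont : Continuous fun r => h (r, v) := hh.continuous.comp (by fun_prop)
  have hdiff : (fun r => h (r, v) - fk v) =O[𝓝[>] 0] fun r : ℝ => r := by
    refine ((isBigO_refl (fun r : ℝ => (r ^ k)⁻¹) (𝓝[>] 0)).smul (hray v)).congr' ?_ ?_ <;>
      filter_upwards [self_mem_nhdsWithin] with r (hr : 0 < r)
    · rw [hfh, ← smul_sub, inv_smul_smul₀ (pow_pos hr k).ne']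
    · rw [smul_eq_mul, pow_succ, inv_mul_cancel_left₀ (pow_pos hr k).ne']
  have hlim := hdiff.trans_tendsto (tendsto_nhdsWithin_of_tendsto_nhds tendsto_id)
  exact tendsto_nhds_unique (tendsto_nhdsWithin_of_tendsto_nhds (hcont.tendsto 0))
    (tendsto_sub_nhds_zero_iff.1 hlim)

end Division

/-- The amplitudes in polar coordinates: finite sums of `A (r, v) • G (τ * h (r, v), r • v)` with
`G` Schwartz and `A` smooth where `h` is positive. A point is written `(τ, r, v)`, with `r` the
radius, `v` the direction and `τ ≥ 0` the variable in which decay is measured; the values of `A` off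
`{q | 0 < h q}` are arbitrary. The space is stable under `∂ᵣ` on `{q | 0 < h q}`. -/
def polarSymbols {E : Type*} [NormedAddCommGroup E] [NormedSpace ℝ E] (h : ℝ × E → ℝ)
    (F : Type*) [NormedAddCommGroup F] [NormedSpace ℝ F] : Submodule ℝ (ℝ × ℝ × E → F) :=
  Submodule.span ℝ {p | ∃ (A : ℝ × E → ℝ) (G : 𝓢(ℝ × E, F)), ContDiffOn ℝ ∞ A {q | 0 < h q} ∧
    p = fun x => A x.2 • G (x.1 * h x.2, x.2.1 • x.2.2)}

namespace polarSymbols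

variable {E F : Type*} [NormedAddCommGroup E] [NormedSpace ℝ E] [NormedAddCommGroup F]
  [NormedSpace ℝ F] {h : ℝ × E → ℝ} {p : ℝ × ℝ × E → F}

theorem smul_schwartz_mem {A : ℝ × E → ℝ} (hA : ContDiffOn ℝ ∞ A {q | 0 < h q})
    (G : 𝓢(ℝ × E, F)) :
    (fun x => A x.2 • G (x.1 * h x.2, x.2.1 • x.2.2)) ∈ polarSymbols h F :=
  Submodule.subset_span ⟨A, G, hA, rfl⟩

theorem continuousOn (hh : Continuous h) (hp : p ∈ polarSymbols h F) :
    ContinuousOn p {x | 0 < h x.2} := by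
  induction hp using Submodule.span_induction with
  | mem p hp =>
    obtain ⟨A, G, hA, rfl⟩ := hp
    exact (hA.continuousOn.comp continuousOn_snd fun x hx => hx).smul
      (G.continuous.comp (by fun_prop)).continuousOn
  | zero => exact continuousOn_const
  | add p₁ p₂ _ _ ih₁ ih₂ => exact ih₁.add ih₂
  | smul c p _ ih => exact ih.const_smul c

theorem exists_norm_schwartz_le (G : 𝓢(ℝ × E, F)) {K : Set (ℝ × E)} (hK : IsCompact K)
    (hh : ContinuousOn h K) (hpos : ∀ q ∈ K, 0 < h q) (M : ℕ) :
    ∃ C, ∀ τ, 0 ≤ τ → ∀ q ∈ K, ‖G (τ * h q, q.1 • q.2)‖ ≤ C / (1 + τ) ^ M := by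
  obtain ⟨c, hc, hch⟩ : ∃ c, 0 < c ∧ ∀ q ∈ K, c ≤ h q :=
    hK.exists_forall_le' hh hpos
  obtain ⟨B, hB⟩ : ∃ B, ∀ x, (1 + ‖x‖) ^ M * ‖G x‖ ≤ B :=
    ⟨_, fun x => by
      simpa using SchwartzMap.one_add_le_sup_seminorm_apply (𝕜 := ℝ) (m := (M, 0)) (k := M)
        (n := 0) le_rfl le_rfl G x⟩
  refine ⟨B / (min 1 c) ^ M, fun τ hτ q hq => ?_⟩
  have hnorm : min 1 c * (1 + τ) ≤ 1 + ‖(τ * h q, q.1 • q.2)‖ := by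
    have hfst := (le_abs_self _).trans (norm_fst_le (τ * h q, q.1 • q.2))
    have hτc : min 1 c * τ ≤ h q * τ := by gcongr; exact (min_le_right _ _).trans (hch q hq)
    linarith [min_le_left 1 c]
  rw [div_div, le_div_iff₀ (by positivity), ← mul_pow, mul_comm]
  exact le_trans (by gcongr) (hB _)

theorem exists_norm_le (hh : Continuous h) (hp : p ∈ polarSymbols h F) {K : Set (ℝ × E)}
    (hK : IsCompact K) (hpos : ∀ q ∈ K, 0 < h q) (M : ℕ) :
    ∃ C, ∀ τ, 0 ≤ τ → ∀ q ∈ K, ‖p (τ, q)‖ ≤ C / (1 + τ) ^ M := by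
  induction hp using Submodule.span_induction with
  | mem p hp =>
    obtain ⟨A, G, hA, rfl⟩ := hp
    obtain ⟨a, ha⟩ := hK.exists_bound_of_continuousOn (hA.continuousOn.mono hpos)
    obtain ⟨C, hC⟩ := exists_norm_schwartz_le G hK hh.continuousOn hpos M
    refine ⟨a * C, fun τ hτ q hq => ?_⟩
    rw [norm_smul, mul_div_assoc]
    exact mul_le_mul (ha q hq) (hC τ hτ q hq) (norm_nonneg _) ((norm_nonneg _).trans (ha q hq))
  | zero => exact ⟨0, by simp⟩
  | add p₁ p₂ _ _ ih₁ ih₂ =>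
    obtain ⟨C₁, hC₁⟩ := ih₁
    obtain ⟨C₂, hC₂⟩ := ih₂
    refine ⟨C₁ + C₂, fun τ hτ q hq => ?_⟩
    rw [add_div]
    exact norm_add_le_of_le (hC₁ τ hτ q hq) (hC₂ τ hτ q hq)
  | smul c p _ ih =>
    obtain ⟨C, hC⟩ := ih
    refine ⟨‖c‖ * C, fun τ hτ q hq => ?_⟩
    rw [Pi.smul_apply, norm_smul, mul_div_assoc]
    exact mul_le_mul_of_nonneg_left (hC τ hτ q hq) (norm_nonneg c)

variable [FiniteDimensional ℝ E]

-- The chain rule produces a factor `τ`, which `polarSymbols` does not allow. Writing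
-- `τ * ∂ᵣh = (∂ᵣh / h) * (τ * h)` absorbs it into `u * ∂ᵤG (u, x)`, again a Schwartz function.
theorem hasDerivAt_schwartz {r : ℝ} {v : E} (hh : DifferentiableAt ℝ h (r, v))
    (hne : h (r, v) ≠ 0) (G : 𝓢(ℝ × E, F)) (τ : ℝ) :
    HasDerivAt (fun r => G (τ * h (r, v), r • v))
      ((fderiv ℝ h (r, v) (1, 0) / h (r, v)) •
          SchwartzMap.smulLeftCLM F Prod.fst (∂_{((1 : ℝ), (0 : E))} G) (τ * h (r, v), r • v) +
        ∑ i, (Module.finBasis ℝ E).repr v i •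
          (∂_{((0 : ℝ), Module.finBasis ℝ E i)} G) (τ * h (r, v), r • v)) r := by
  have hray : HasDerivAt (fun r : ℝ => h (r, v)) (fderiv ℝ h (r, v) (1, 0)) r :=
    hh.hasFDerivAt.comp_hasDerivAt r ((hasDerivAt_id r).prodMk (hasDerivAt_const r v))
  have hchain := (G.differentiableAt (x := (τ * h (r, v), r • v))).hasFDerivAt.comp_hasDerivAt r
    ((hray.const_mul τ).prodMk ((hasDerivAt_id r).smul_const v))
  refine hchain.congr_deriv ?_
  have htangent : ((τ * fderiv ℝ h (r, v) (1, 0), (1 : ℝ) • v) : ℝ × E) =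
      (τ * fderiv ℝ h (r, v) (1, 0)) • ((1 : ℝ), (0 : E)) +
        ∑ i, (Module.finBasis ℝ E).repr v i • ((0 : ℝ), Module.finBasis ℝ E i) := by
    ext1
    · simp [Prod.fst_sum]
    · simp [Prod.snd_sum, (Module.finBasis ℝ E).sum_repr v]
  have hfst : Function.HasTemperateGrowth (Prod.fst : ℝ × E → ℝ) :=
    (ContinuousLinearMap.fst ℝ ℝ E).hasTemperateGrowth
  simp only [htangent, map_add, map_sum, map_smul, SchwartzMap.smulLeftCLM_apply_apply hfst,
    SchwartzMap.lineDerivOp_apply_eq_fderiv, smul_smul]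
  congr 2
  field_simp

theorem exists_hasDerivAt_smul_schwartz (hh : ContDiff ℝ ∞ h) {A : ℝ × E → ℝ}
    (hA : ContDiffOn ℝ ∞ A {q | 0 < h q}) (G : 𝓢(ℝ × E, F)) :
    ∃ p' ∈ polarSymbols h F, ∀ τ r v, 0 < h (r, v) →
      HasDerivAt (fun r => A (r, v) • G (τ * h (r, v), r • v)) (p' (τ, r, v)) r := by
  have hopen : IsOpen {q | 0 < h q} := isOpen_lt continuous_const hh.continuous
  have hA' : ContDiffOn ℝ ∞ (fun q => fderiv ℝ A q (1, 0)) {q | 0 < h q} :=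
    (hA.fderiv_of_isOpen hopen (m := ∞) le_rfl).clm_apply contDiffOn_const
  have hlog : ContDiffOn ℝ ∞ (fun q => A q * (fderiv ℝ h q (1, 0) / h q)) {q | 0 < h q} :=
    hA.mul (((hh.fderiv_right (m := ∞) le_rfl).clm_apply contDiff_const).contDiffOn.div
      hh.contDiffOn fun q hq => ne_of_gt hq)
  have hcoord (i) : ContDiffOn ℝ ∞ (fun q : ℝ × E => A q * (Module.finBasis ℝ E).repr q.2 i)
      {q | 0 < h q} :=
    hA.mul (((Module.finBasis ℝ E).coord i).toContinuousLinearMap.contDiff.comp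
      contDiff_snd).contDiffOn
  refine ⟨_, add_mem (smul_schwartz_mem hA' G) (add_mem
    (smul_schwartz_mem hlog (SchwartzMap.smulLeftCLM F Prod.fst (∂_{((1 : ℝ), (0 : E))} G)))
    (sum_mem fun i (_ : i ∈ Finset.univ) =>
      smul_schwartz_mem (hcoord i) (∂_{((0 : ℝ), Module.finBasis ℝ E i)} G))),
    fun τ r v hrv => ?_⟩
  have hAray : HasDerivAt (fun r : ℝ => A (r, v)) (fderiv ℝ A (r, v) (1, 0)) r :=
    ((hA.contDiffAt (hopen.mem_nhds hrv)).differentiableAt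
      (by simp)).hasFDerivAt.comp_hasDerivAt r ((hasDerivAt_id r).prodMk (hasDerivAt_const r v))
  have hG := hasDerivAt_schwartz (hh.differentiable (by simp) (r, v)) hrv.ne' G τ
  refine (hAray.smul hG).congr_deriv ?_
  simp only [Pi.add_apply, Finset.sum_apply, smul_add, Finset.smul_sum, smul_smul]
  abel

theorem exists_hasDerivAt (hh : ContDiff ℝ ∞ h) (hp : p ∈ polarSymbols h F) :
    ∃ p' ∈ polarSymbols h F, ∀ τ r v, 0 < h (r, v) →
      HasDerivAt (fun r => p (τ, r, v)) (p' (τ, r, v)) r := by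
  induction hp using Submodule.span_induction with
  | mem p hp =>
    obtain ⟨A, G, hA, rfl⟩ := hp
    exact exists_hasDerivAt_smul_schwartz hh hA G
  | zero => exact ⟨0, zero_mem _, fun _ _ _ _ => hasDerivAt_const _ _⟩
  | add p₁ p₂ _ _ ih₁ ih₂ =>
    obtain ⟨p₁', hmem₁, hderiv₁⟩ := ih₁
    obtain ⟨p₂', hmem₂, hderiv₂⟩ := ih₂
    exact ⟨_, add_mem hmem₁ hmem₂, fun τ r v hrv => (hderiv₁ τ r v hrv).add (hderiv₂ τ r v hrv)⟩
  | smul c p _ ih =>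
    obtain ⟨p', hmem, hderiv⟩ := ih
    exact ⟨_, Submodule.smul_mem _ c hmem, fun τ r v hrv => (hderiv τ r v hrv).const_smul c⟩

theorem exists_iteratedDeriv_eq (hh : ContDiff ℝ ∞ h) (hp : p ∈ polarSymbols h F) (j : ℕ) :
    ∃ p' ∈ polarSymbols h F, ∀ τ r v, 0 < h (r, v) →
      iteratedDeriv j (fun r => p (τ, r, v)) r = p' (τ, r, v) := by
  induction j with
  | zero => exact ⟨p, hp, by simp⟩
  | succ j ih =>
    obtain ⟨q, hq, hpq⟩ := ih
    obtain ⟨q', hq', hderiv⟩ := exists_hasDerivAt hh hq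
    refine ⟨q', hq', fun τ r v hrv => ?_⟩
    have hray : Continuous fun r => h (r, v) := hh.continuous.comp (by fun_prop)
    have heq : iteratedDeriv j (fun r => p (τ, r, v)) =ᶠ[𝓝 r] fun r => q (τ, r, v) :=
      (hray.continuousAt.eventually_const_lt hrv).mono fun r hr => hpq τ r v hr
    rw [iteratedDeriv_succ, heq.deriv_eq, (hderiv τ r v hrv).deriv]

theorem exists_norm_iteratedDeriv_le (hh : ContDiff ℝ ∞ h) (hp : p ∈ polarSymbols h F)
    {K : Set (ℝ × E)} (hK : IsCompact K) (hpos : ∀ q ∈ K, 0 < h q) (j M : ℕ) :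
    ∃ C, ∀ τ, 0 ≤ τ → ∀ r v, (r, v) ∈ K →
      ‖iteratedDeriv j (fun r => p (τ, r, v)) r‖ ≤ C / (1 + τ) ^ M := by
  obtain ⟨p', hp', heq⟩ := exists_iteratedDeriv_eq hh hp j
  obtain ⟨C, hC⟩ := exists_norm_le hh.continuous hp' hK hpos M
  exact ⟨C, fun τ hτ r v hrv => by rw [heq τ r v (hpos _ hrv)]; exact hC τ hτ _ hrv⟩

end polarSymbols

section Taylor

variable {F : Type*} [NormedAddCommGroup F] [NormedSpace ℝ F]

theorem norm_sub_taylor_le {φ : ℝ → F} {m : ℕ} (hφ : ContDiff ℝ m φ) {a x C : ℝ} (hx : a ≤ x)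
    (hC : ∀ y ∈ Icc a x, ‖iteratedDeriv m φ y‖ ≤ C) :
    ‖φ x - ∑ j ∈ Finset.range m, ((x - a) ^ j / j.factorial) • iteratedDeriv j φ a‖ ≤
      C * (x - a) ^ m := by
  rcases m with _ | m
  · simpa using hC x ⟨hx, le_rfl⟩
  rcases hx.eq_or_lt with rfl | hlt
  · simp [Finset.sum_range_succ']
  have hwithin : ∀ j ≤ m + 1, ∀ y ∈ Icc a x,
      iteratedDerivWithin j φ (Icc a x) y = iteratedDeriv j φ y := fun j hj y hy =>
    iteratedDerivWithin_eq_iteratedDeriv (uniqueDiffOn_Icc hlt)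
      (hφ.of_le (by exact_mod_cast hj)).contDiffAt hy
  have htaylor : taylorWithinEval φ m (Icc a x) a x =
      ∑ j ∈ Finset.range (m + 1), ((x - a) ^ j / j.factorial) • iteratedDeriv j φ a := by
    rw [taylor_within_apply]
    refine Finset.sum_congr rfl fun j hj => ?_
    rw [hwithin j (Finset.mem_range.1 hj).le a (left_mem_Icc.2 hx), div_eq_inv_mul]
  have hbound := taylor_mean_remainder_bound hx hφ.contDiffOn (right_mem_Icc.2 hx) fun y hy =>
    (hwithin (m + 1) le_rfl y hy).symm ▸ hC y hy
  have hC₀ : 0 ≤ C := (norm_nonneg _).trans (hC a (left_mem_Icc.2 hx))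
  rw [← htaylor]
  refine hbound.trans (div_le_self (mul_nonneg hC₀ (pow_nonneg (sub_nonneg.2 hx) _)) ?_)
  exact_mod_cast m.factorial_pos

end Taylor

section AsymptoticExpansion

variable {F : Type*} [NormedAddCommGroup F] [NormedSpace ℝ F]

/-- `I s ~ ∑ j, s ^ j • c j` as `s → 0⁺`, in the sense of Poincaré; convergence of the series is not
required. -/
def HasAsymptoticExpansion (I : ℝ → F) (c : ℕ → F) : Prop :=
  ∀ m, (fun s => I s - ∑ j ∈ Finset.range m, s ^ j • c j) =O[𝓝[>] 0] fun s => s ^ m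

namespace HasAsymptoticExpansion

variable {I : ℝ → F} {c : ℕ → F}

theorem smul_id (hI : HasAsymptoticExpansion I c) :
    HasAsymptoticExpansion (fun s => s • I s) (fun | 0 => 0 | j + 1 => c j) := by
  intro m
  rcases m with _ | m
  · have hid : (fun s : ℝ => s) =O[𝓝[>] 0] fun _ => (1 : ℝ) :=
      (tendsto_nhdsWithin_of_tendsto_nhds tendsto_id).isBigO_one ℝ
    simpa using hid.smul (hI 0)
  · refine ((isBigO_refl (fun s : ℝ => s) (𝓝[>] 0)).smul (hI m)).congr (fun s => ?_) fun s => ?_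
    · simp [Finset.sum_range_succ', smul_sub, Finset.smul_sum, smul_smul, pow_succ']
    · rw [smul_eq_mul, pow_succ']

theorem exists_pow_smul (hI : HasAsymptoticExpansion I c) (d : ℕ) :
    ∃ c', HasAsymptoticExpansion (fun s => s ^ d • I s) c' := by
  induction d with
  | zero => exact ⟨c, by simpa using hI⟩
  | succ d ih =>
    obtain ⟨c', hc'⟩ := ih
    exact ⟨_, by simpa only [smul_smul, ← pow_succ'] using hc'.smul_id⟩

theorem isBigO_comp_rpow (hI : HasAsymptoticExpansion I c) {k : ℕ} (hk : k ≠ 0) (N : ℕ) :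
    (fun z : ℝ => I (z ^ (-1 / k : ℝ)) -
        ∑ j ∈ Finset.range (N + 1), z ^ (-(j : ℝ) / k) • c j)
      =O[atTop] fun z : ℝ => z ^ (-((N : ℝ) + 1) / k) := by
  have hk' : (0 : ℝ) < 1 / k := by positivity
  have hlim : Tendsto (fun z : ℝ => z ^ (-1 / k : ℝ)) atTop (𝓝[>] 0) := by
    refine tendsto_nhdsWithin_iff.2 ⟨?_, (eventually_gt_atTop 0).mono fun z hz => ?_⟩
    · simpa only [neg_div] using tendsto_rpow_neg_atTop hk'
    · exact Real.rpow_pos_of_pos hz _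
  have hpow : ∀ z : ℝ, 0 < z → ∀ j : ℕ, (z ^ (-1 / k : ℝ)) ^ j = z ^ (-(j : ℝ) / k) :=
    fun z hz j => by
      rw [← Real.rpow_natCast, ← Real.rpow_mul hz.le, div_mul_eq_mul_div, neg_one_mul]
  refine ((hI (N + 1)).comp_tendsto hlim).congr' ?_ ?_ <;>
    filter_upwards [eventually_gt_atTop 0] with z hz
  · simp only [Function.comp_apply, hpow z hz]
  · simp only [Function.comp_apply, hpow z hz, Nat.cast_succ]

end HasAsymptoticExpansion

end AsymptoticExpansion

section Measure

theorem aestronglyMeasurable_of_continuousOn_compl_singleton {X F : Type*} [TopologicalSpace X]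
    [T1Space X] [SecondCountableTopology X] [MeasurableSpace X] [OpensMeasurableSpace X]
    [TopologicalSpace F] [TopologicalSpace.PseudoMetrizableSpace F] {μ : Measure X}
    [NullSingletonClass μ] {f : X → F} {a : X} (hf : ContinuousOn f {a}ᶜ) :
    AEStronglyMeasurable f μ := by
  have := hf.aestronglyMeasurable (μ := μ) (measurableSet_singleton a).compl
  rwa [Measure.restrict_eq_self_of_ae_mem (s := {a}ᶜ) (Measure.ae_ne μ a)] at this

variable {E : Type*} [NormedAddCommGroup E] [NormedSpace ℝ E]

theorem continuousOn_inv_norm_smul : ContinuousOn (fun y : E => ‖y‖⁻¹ • y) {0}ᶜ :=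
  (continuousOn_id.norm.inv₀ fun _ hy => norm_ne_zero_iff.2 hy).smul continuousOn_id

variable [FiniteDimensional ℝ E] [MeasurableSpace E] [BorelSpace E]

theorem integrable_norm_pow_div_one_add_norm_pow (μ : Measure E) [μ.IsAddHaarMeasure] {k : ℕ}
    (hk : k ≠ 0) (m : ℕ) :
    Integrable (fun y : E => ‖y‖ ^ m / (1 + ‖y‖ ^ k) ^ (m + Module.finrank ℝ E + 1)) μ := by
  set d := Module.finrank ℝ E
  have hdom := (integrable_one_add_norm (E := E) (μ := μ) (r := (d + 1 : ℕ))
    (by push_cast; linarith)).const_mul (2 ^ (m + d + 1))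
  refine hdom.mono' ?_ (.of_forall fun y => ?_)
  · exact (Continuous.div (by fun_prop) (by fun_prop)
      fun y => by positivity).aestronglyMeasurable
  · have hone : 1 + ‖y‖ ≤ 2 * (1 + ‖y‖ ^ k) := by
      rcases le_total ‖y‖ 1 with hy | hy
      · linarith [pow_nonneg (norm_nonneg y) k]
      · linarith [le_self_pow₀ hy hk]
    rw [Real.norm_of_nonneg (by positivity), Real.rpow_neg (by positivity), Real.rpow_natCast,
      ← div_eq_mul_inv, div_le_div_iff₀ (by positivity) (by positivity)]
    calc ‖y‖ ^ m * (1 + ‖y‖) ^ (d + 1)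
        ≤ (1 + ‖y‖) ^ m * (1 + ‖y‖) ^ (d + 1) := by gcongr; linarith
      _ = (1 + ‖y‖) ^ (m + d + 1) := by ring
      _ ≤ (2 * (1 + ‖y‖ ^ k)) ^ (m + d + 1) := by gcongr
      _ = 2 ^ (m + d + 1) * (1 + ‖y‖ ^ k) ^ (m + d + 1) := mul_pow _ _ _

end Measure

section RescaledPolar

variable {E F : Type*} [NormedAddCommGroup E] [NormedSpace ℝ E] [NormedAddCommGroup F]

/-- The integrand at `x = s • y` in terms of its polar representation `p (τ, r, v)`, where
`r = s * ‖y‖` and `v = y / ‖y‖`. The large parameter `z` is tied to `s` by `z * s ^ k = 1`, so that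
`τ = z * r ^ k = ‖y‖ ^ k` does not depend on `s`. At `y = 0` the direction is the junk value `0`. -/
noncomputable def rescaledPolar (k : ℕ) (p : ℝ × ℝ × E → F) (s : ℝ) (y : E) : F :=
  p (‖y‖ ^ k, s * ‖y‖, ‖y‖⁻¹ • y)

theorem continuousOn_rescaledPolar {k : ℕ} {s : ℝ} {p : ℝ × ℝ × E → F} {S : Set (ℝ × ℝ × E)}
    (hp : ContinuousOn p S) (hS : ∀ y : E, y ≠ 0 → (‖y‖ ^ k, s * ‖y‖, ‖y‖⁻¹ • y) ∈ S) :
    ContinuousOn (rescaledPolar k p s) {0}ᶜ :=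
  hp.comp (.prodMk (by fun_prop) (.prodMk (by fun_prop) continuousOn_inv_norm_smul)) hS

variable [NormedSpace ℝ F]

/-- The coefficient of `s ^ j` in the Taylor expansion of `rescaledPolar k p s y` at `s = 0`; its
integral over `y` is the `j`-th coefficient of the asymptotic expansion. -/
noncomputable def radialTaylorCoeff (k : ℕ) (p : ℝ × ℝ × E → F) (j : ℕ) (y : E) : F :=
  (‖y‖ ^ j / j.factorial) • iteratedDeriv j (fun r => p (‖y‖ ^ k, r, ‖y‖⁻¹ • y)) 0

theorem inv_norm_smul_mem_sphere {y : E} (hy : y ≠ 0) : ‖y‖⁻¹ • y ∈ Metric.sphere (0 : E) 1 := by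
  simp [norm_smul, hy]

namespace polarSymbols

variable [FiniteDimensional ℝ E] {h : ℝ × E → ℝ} {p : ℝ × ℝ × E → F}

theorem integrable_radialTaylorCoeff [MeasurableSpace E] [BorelSpace E] [Nontrivial E]
    (μ : Measure E) [μ.IsAddHaarMeasure] {k : ℕ} (hh : ContDiff ℝ ∞ h) (hp : p ∈ polarSymbols h F)
    (hpos : ∀ v ∈ Metric.sphere (0 : E) 1, 0 < h (0, v)) (hk : k ≠ 0) (j : ℕ) :
    Integrable (radialTaylorCoeff k p j) μ := by
  obtain ⟨p', hp', heq⟩ := exists_iteratedDeriv_eq hh hp j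
  have hK : ∀ q ∈ ({0} : Set ℝ) ×ˢ Metric.sphere (0 : E) 1, 0 < h q := by
    rintro ⟨_, v⟩ ⟨rfl, hv⟩
    exact hpos v hv
  obtain ⟨C, hC⟩ := exists_norm_le hh.continuous hp'
    (isCompact_singleton.prod (isCompact_sphere 0 1)) hK (j + Module.finrank ℝ E + 1)
  have hdir : ∀ y : E, y ≠ 0 → (0 * ‖y‖, ‖y‖⁻¹ • y) ∈ ({0} : Set ℝ) ×ˢ Metric.sphere (0 : E) 1 :=
    fun y hy => ⟨zero_mul _, inv_norm_smul_mem_sphere hy⟩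
  have hcoeff : ∀ y : E, y ≠ 0 → radialTaylorCoeff k p j y =
      (‖y‖ ^ j / j.factorial) • rescaledPolar k p' 0 y := fun y hy => by
    rw [radialTaylorCoeff, rescaledPolar, ← heq _ _ _ (hK _ (hdir y hy)), zero_mul]
  have hcont : ContinuousOn (radialTaylorCoeff k p j) {0}ᶜ :=
    ContinuousOn.congr (.smul (by fun_prop) (continuousOn_rescaledPolar
      (continuousOn hh.continuous hp') fun y hy => hK _ (hdir y hy))) hcoeff
  refine ((integrable_norm_pow_div_one_add_norm_pow μ hk j).const_mul C).mono'
    (aestronglyMeasurable_of_continuousOn_compl_singleton hcont) ?_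
  filter_upwards [Measure.ae_ne μ 0] with y hy
  rw [hcoeff y hy, norm_smul, Real.norm_of_nonneg (by positivity)]
  calc ‖y‖ ^ j / j.factorial * ‖rescaledPolar k p' 0 y‖
      ≤ ‖y‖ ^ j * (C / (1 + ‖y‖ ^ k) ^ (j + Module.finrank ℝ E + 1)) := by
        gcongr
        · exact div_le_self (by positivity) (by exact_mod_cast j.factorial_pos)
        · exact hC _ (by positivity) _ (hdir y hy)
    _ = C * (‖y‖ ^ j / (1 + ‖y‖ ^ k) ^ (j + Module.finrank ℝ E + 1)) := by ring

variable {ε : ℝ} (hh : ContDiff ℝ ∞ h) (hp : p ∈ polarSymbols h F) (hε : 0 ≤ ε)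
  (hpos : ∀ q ∈ Icc 0 ε ×ˢ Metric.sphere (0 : E) 1, 0 < h q)
  (hsupp : ∀ τ r, ε < r → ∀ v ∈ Metric.sphere (0 : E) 1, p (τ, r, v) = 0)

include hh hp hε hpos hsupp

theorem exists_norm_iteratedDeriv_le_of_nonneg (j M : ℕ) :
    ∃ C, ∀ τ, 0 ≤ τ → ∀ r, 0 ≤ r → ∀ v ∈ Metric.sphere (0 : E) 1,
      ‖iteratedDeriv j (fun r => p (τ, r, v)) r‖ ≤ C / (1 + τ) ^ M := by
  obtain ⟨C, hC⟩ := exists_norm_iteratedDeriv_le hh hp (isCompact_Icc.prod (isCompact_sphere 0 1))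
    hpos j M
  refine ⟨C, fun τ hτ r hr v hv => ?_⟩
  rcases le_or_gt r ε with hrε | hrε
  · exact hC τ hτ r v ⟨⟨hr, hrε⟩, hv⟩
  · have hzero : (fun r => p (τ, r, v)) =ᶠ[𝓝 r] fun _ => 0 :=
      (eventually_gt_nhds hrε).mono fun r' hr' => hsupp τ r' hr' v hv
    rw [hzero.iteratedDeriv_eq, iteratedDeriv_fun_const_zero, norm_zero]
    exact (norm_nonneg _).trans (hC τ hτ 0 v ⟨⟨le_rfl, hε⟩, hv⟩)

variable (hps : ContDiff ℝ ∞ p)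

include hps

theorem exists_norm_sub_taylor_le (m M : ℕ) :
    ∃ C, ∀ τ, 0 ≤ τ → ∀ r, 0 ≤ r → ∀ v ∈ Metric.sphere (0 : E) 1,
      ‖p (τ, r, v) - ∑ j ∈ Finset.range m,
        (r ^ j / j.factorial) • iteratedDeriv j (fun r => p (τ, r, v)) 0‖ ≤
      C / (1 + τ) ^ M * r ^ m := by
  obtain ⟨C, hC⟩ := exists_norm_iteratedDeriv_le_of_nonneg hh hp hε hpos hsupp m M
  refine ⟨C, fun τ hτ r hr v hv => ?_⟩
  have hray : ContDiff ℝ m fun r => p (τ, r, v) :=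
    (hps.comp (by fun_prop : ContDiff ℝ ∞ fun r : ℝ => (τ, r, v))).of_le (by exact_mod_cast le_top)
  simpa only [sub_zero] using norm_sub_taylor_le hray hr fun y hy => hC τ hτ y hy.1 v hv

theorem exists_norm_rescaledPolar_sub_le (k m M : ℕ) :
    ∃ C, ∀ s, 0 ≤ s → ∀ y, y ≠ 0 →
      ‖rescaledPolar k p s y - ∑ j ∈ Finset.range m, s ^ j • radialTaylorCoeff k p j y‖ ≤
        s ^ m * (C * (‖y‖ ^ m / (1 + ‖y‖ ^ k) ^ M)) := by
  obtain ⟨C, hC⟩ := exists_norm_sub_taylor_le hh hp hε hpos hsupp hps m M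
  refine ⟨C, fun s hs y hy => ?_⟩
  have hbound := hC (‖y‖ ^ k) (by positivity) (s * ‖y‖) (by positivity) (‖y‖⁻¹ • y)
    (inv_norm_smul_mem_sphere hy)
  simp only [mul_pow, mul_div_assoc, ← smul_smul] at hbound
  exact hbound.trans_eq (by ring)

variable [MeasurableSpace E] [BorelSpace E] [Nontrivial E] (μ : Measure E) [μ.IsAddHaarMeasure]
  {k : ℕ}

theorem integrable_rescaledPolar (hk : k ≠ 0) {s : ℝ} (hs : 0 ≤ s) :
    Integrable (rescaledPolar k p s) μ := by
  obtain ⟨C, hC⟩ := exists_norm_rescaledPolar_sub_le hh hp hε hpos hsupp hps k 0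
    (0 + Module.finrank ℝ E + 1)
  refine ((integrable_norm_pow_div_one_add_norm_pow μ hk 0).const_mul C).mono' ?_ ?_
  · exact aestronglyMeasurable_of_continuousOn_compl_singleton (continuousOn_rescaledPolar
      hps.continuous.continuousOn fun y _ => mem_univ _)
  · filter_upwards [Measure.ae_ne μ 0] with y hy
    simpa using hC s hs y hy

theorem hasAsymptoticExpansion_integral (hk : k ≠ 0) :
    HasAsymptoticExpansion (fun s => ∫ y, rescaledPolar k p s y ∂μ)
      (fun j => ∫ y, radialTaylorCoeff k p j y ∂μ) := by
  intro m
  obtain ⟨C, hC⟩ := exists_norm_rescaledPolar_sub_le hh hp hε hpos hsupp hps k m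
    (m + Module.finrank ℝ E + 1)
  have hcoeff := integrable_radialTaylorCoeff μ hh hp
    (fun v hv => hpos (0, v) ⟨⟨le_rfl, hε⟩, hv⟩) hk
  have hdom := (integrable_norm_pow_div_one_add_norm_pow μ hk m).const_mul C
  refine .of_bound (∫ y, C * (‖y‖ ^ m / (1 + ‖y‖ ^ k) ^ (m + Module.finrank ℝ E + 1)) ∂μ) ?_
  filter_upwards [self_mem_nhdsWithin] with s (hs : 0 < s)
  have hterm : ∀ j ∈ Finset.range m, Integrable (fun y => s ^ j • radialTaylorCoeff k p j y) μ :=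
    fun j _ => (hcoeff j).smul (s ^ j)
  have hdiff : ∫ y, rescaledPolar k p s y ∂μ -
      ∑ j ∈ Finset.range m, s ^ j • ∫ y, radialTaylorCoeff k p j y ∂μ =
      ∫ y, (rescaledPolar k p s y -
        ∑ j ∈ Finset.range m, s ^ j • radialTaylorCoeff k p j y) ∂μ := by
    simp only [← integral_smul]
    rw [← integral_finsetSum _ hterm, ← integral_sub
      (integrable_rescaledPolar hh hp hε hpos hsupp hps μ hk hs.le) (integrable_finsetSum _ hterm)]
  rw [hdiff, Real.norm_of_nonneg (by positivity), mul_comm, ← integral_const_mul]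
  exact norm_integral_le_of_norm_le (hdom.const_mul _)
    ((Measure.ae_ne μ 0).mono fun y hy => hC s hs.le y hy)

end polarSymbols

end RescaledPolar

section PolarIntegrand

variable {E F : Type*} [NormedAddCommGroup E] [NormedSpace ℝ E] [NormedAddCommGroup F]
  [NormedSpace ℝ F]

/-- The polar representation of `x ↦ Θ x • g (z * f x, x)` at `x = r • v` when
`f (r • v) = r ^ k * h (r, v)`, with `τ` standing for `z * r ^ k`. -/
noncomputable def polarIntegrand (h : ℝ × E → ℝ) (g : 𝓢(ℝ × E, F)) (Θ : E → ℝ)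
    (x : ℝ × ℝ × E) : F :=
  Θ (x.2.1 • x.2.2) • g (x.1 * h x.2, x.2.1 • x.2.2)

variable {h : ℝ × E → ℝ} {Θ : E → ℝ}

theorem polarIntegrand_mem_polarSymbols (g : 𝓢(ℝ × E, F)) (hΘ : ContDiff ℝ ∞ Θ) :
    polarIntegrand h g Θ ∈ polarSymbols h F :=
  polarSymbols.smul_schwartz_mem (A := fun q => Θ (q.1 • q.2))
    (hΘ.comp (contDiff_fst.smul contDiff_snd)).contDiffOn g

theorem contDiff_polarIntegrand (hh : ContDiff ℝ ∞ h) (g : 𝓢(ℝ × E, F)) (hΘ : ContDiff ℝ ∞ Θ) :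
    ContDiff ℝ ∞ (polarIntegrand h g Θ) := by
  unfold polarIntegrand
  have hg := g.smooth ⊤
  fun_prop

theorem polarIntegrand_eq_zero (g : 𝓢(ℝ × E, F)) {ε : ℝ} (hΘ : tsupport Θ ⊆ Metric.ball 0 ε)
    (τ : ℝ) {r : ℝ} (hr : ε < r) {v : E} (hv : v ∈ Metric.sphere (0 : E) 1) :
    polarIntegrand h g Θ (τ, r, v) = 0 := by
  have hmem : r • v ∉ tsupport Θ := fun hmem => by
    have hball := hΘ hmem
    rw [mem_ball_zero_iff, norm_smul, mem_sphere_zero_iff_norm.1 hv, mul_one] at hball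
    exact absurd (hr.trans_le (le_abs_self r)) hball.not_gt
  rw [polarIntegrand, image_eq_zero_of_notMem_tsupport hmem, zero_smul]

theorem integral_smul_eq_integral_rescaledPolar [FiniteDimensional ℝ E] [MeasurableSpace E]
    [BorelSpace E] (μ : Measure E) [μ.IsAddHaarMeasure] {k : ℕ} {f : E → ℝ}
    (hfh : ∀ r v, f (r • v) = r ^ k • h (r, v)) (g : 𝓢(ℝ × E, F)) (Θ : E → ℝ) {s z : ℝ}
    (hs : 0 < s) (hzs : z * s ^ k = 1) :
    ∫ x, Θ x • g (z * f x, x) ∂μ =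
      s ^ Module.finrank ℝ E • ∫ y, rescaledPolar k (polarIntegrand h g Θ) s y ∂μ := by
  have hscale : ∀ y, rescaledPolar k (polarIntegrand h g Θ) s y =
      Θ (s • y) • g (z * f (s • y), s • y) := fun y => by
    have hpolar : (s * ‖y‖) • ‖y‖⁻¹ • y = s • y := by
      rcases eq_or_ne y 0 with rfl | hy
      · simp
      · rw [smul_smul, mul_inv_cancel_right₀ (norm_ne_zero_iff.2 hy)]
    have hphase : z * f (s • y) = ‖y‖ ^ k * h (s * ‖y‖, ‖y‖⁻¹ • y) := by
      rw [← hpolar, hfh, smul_eq_mul, mul_pow, ← mul_assoc, ← mul_assoc, hzs, one_mul]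
    simp only [rescaledPolar, polarIntegrand, hpolar, hphase]
  have hsd : 0 < s ^ Module.finrank ℝ E := pow_pos hs _
  simp only [hscale]
  rw [Measure.integral_comp_smul μ fun x => Θ x • g (z * f x, x),
    abs_of_pos (inv_pos.2 hsd), smul_inv_smul₀ hsd.ne']

end PolarIntegrand

theorem exists_pos_forall_mem_Icc_prod {X : Type*} [TopologicalSpace X] {K : Set X}
    (hK : IsCompact K) {h : ℝ × X → ℝ} (hh : Continuous h) (hpos : ∀ v ∈ K, 0 < h (0, v)) :
    ∃ ε, 0 < ε ∧ ∀ q ∈ Icc 0 ε ×ˢ K, 0 < h q := by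
  have hev : ∀ᶠ r : ℝ in 𝓝 0, ∀ v ∈ K, 0 < h (r, v) :=
    hK.eventually_forall_of_forall_eventually fun v hv =>
      hh.continuousAt.eventually_const_lt (hpos v hv)
  obtain ⟨ε, hε, hball⟩ := Metric.nhds_basis_closedBall.eventually_iff.1 hev
  exact ⟨ε, hε, fun q hq => hball (by simpa [abs_of_nonneg hq.1.1] using hq.1.2) q.2 hq.2⟩

theorem extremum_full_expansion_general {E F : Type*} [NormedAddCommGroup E] [NormedSpace ℝ E]
    [FiniteDimensional ℝ E] [Nontrivial E] [MeasurableSpace E] [BorelSpace E] (μ : Measure E)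
    [μ.IsAddHaarMeasure] [NormedAddCommGroup F] [NormedSpace ℝ F] [CompleteSpace F] {k : ℕ}
    (hk : k ≠ 0) {f fk : E → ℝ} (hf : ContDiff ℝ ∞ f)
    (hfk_hom : ∀ c : ℝ, 0 < c → ∀ x, fk (c • x) = c ^ k * fk x)
    (hfk_pos : ∀ x, x ≠ 0 → 0 < fk x)
    (hjet : (fun x => f x - fk x) =O[𝓝 0] fun x => ‖x‖ ^ (k + 1)) :
    ∃ ε : ℝ, 0 < ε ∧ ∀ (g : 𝓢(ℝ × E, F)) (Θ : E → ℝ),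
      ContDiff ℝ ∞ Θ → tsupport Θ ⊆ Metric.ball 0 ε →
      ∃ c : ℕ → F, ∀ N : ℕ,
        (fun z : ℝ => (∫ x, Θ x • g (z * f x, x) ∂μ) -
            ∑ j ∈ Finset.range (N + 1), z ^ (-(j : ℝ) / k) • c j)
          =O[atTop] fun z : ℝ => z ^ (-((N : ℝ) + 1) / k) := by
  obtain ⟨h, hh, hfh, hh₀⟩ := exists_contDiff_polar_form hf hfk_hom hjet
  obtain ⟨ε, hε, hpos⟩ := exists_pos_forall_mem_Icc_prod (isCompact_sphere (0 : E) 1)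
    hh.continuous fun v hv => hh₀ v ▸ hfk_pos v (ne_zero_of_mem_unit_sphere ⟨v, hv⟩)
  refine ⟨ε, hε, fun g Θ hΘ hsupp => ?_⟩
  have hvanish : ∀ τ r, ε < r → ∀ v ∈ Metric.sphere (0 : E) 1, polarIntegrand h g Θ (τ, r, v) = 0 :=
    fun τ r hr v hv => polarIntegrand_eq_zero g hsupp τ hr hv
  have hexp := polarSymbols.hasAsymptoticExpansion_integral hh
    (polarIntegrand_mem_polarSymbols g hΘ) hε.le hpos hvanish (contDiff_polarIntegrand hh g hΘ) μ hk
  obtain ⟨c, hc⟩ := hexp.exists_pow_smul (Module.finrank ℝ E)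
  refine ⟨c, fun N => (hc.isBigO_comp_rpow hk N).congr' ?_ .rfl⟩
  filter_upwards [eventually_gt_atTop 0] with z hz
  have hzs : z * (z ^ (-1 / k : ℝ)) ^ k = 1 := by
    rw [← Real.rpow_natCast, ← Real.rpow_mul hz.le, div_mul_cancel₀ _ (Nat.cast_ne_zero.2 hk),
      Real.rpow_neg_one, mul_inv_cancel₀ hz.ne']
  rw [integral_smul_eq_integral_rescaledPolar μ hfh g Θ (Real.rpow_pos_of_pos hz _) hzs]

/-- Theorem 1.2 (existence of the expansion for a local extremum): if `f` vanishes at `0` with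
homogeneous positive-definite `k`-jet `f_k` (`k` even), then for every admissible cut-off `Θ`
supported near `0`, `I_s(z) = ∫ g(zf(x),x) Θ(x) dx` has a full expansion in powers `z^{-j/k}`. -/
theorem extremum_full_expansion
    (n k : ℕ) (hn : 1 ≤ n) (hk : 2 ≤ k) (hke : Even k)
    (f fk : EuclideanSpace ℝ (Fin n) → ℝ)
    (hf : ContDiff ℝ (⊤ : ℕ∞) f) (hf0 : f 0 = 0)
    (hfk_hom : ∀ c : ℝ, 0 < c → ∀ x, fk (c • x) = c ^ k * fk x)
    (hfk_pos : ∀ x : EuclideanSpace ℝ (Fin n), x ≠ 0 → 0 < fk x)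
    (hjet : ∃ C δ : ℝ, 0 < C ∧ 0 < δ ∧ ∀ x : EuclideanSpace ℝ (Fin n),
      ‖x‖ < δ → |f x - fk x| ≤ C * ‖x‖ ^ (k + 1))
    (g : SchwartzMap (ℝ × EuclideanSpace ℝ (Fin n)) ℝ) :
    ∃ ε : ℝ, 0 < ε ∧ ∀ Θ : EuclideanSpace ℝ (Fin n) → ℝ,
      ContDiff ℝ (⊤ : ℕ∞) Θ → HasCompactSupport Θ →
      tsupport Θ ⊆ Metric.ball 0 ε → (∀ᶠ x in nhds 0, Θ x = 1) →
      (∀ x, 0 ≤ Θ x ∧ Θ x ≤ 1) →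
      ∃ c : ℕ → ℝ, ∀ N : ℕ,
        (fun z : ℝ =>
            (∫ x, g (z * f x, x) * Θ x) -
            ∑ j ∈ Finset.range (N + 1), c j * z ^ (-(j : ℝ) / k))
          =O[atTop] fun z : ℝ => z ^ (-((N : ℝ) + 1) / k) := by
  have : Nonempty (Fin n) := ⟨⟨0, hn⟩⟩
  obtain ⟨C, δ, -, hδ, hC⟩ := hjet
  have hjet' : (fun x => f x - fk x) =O[𝓝 0] fun x => ‖x‖ ^ (k + 1) :=
    .of_bound C <| Metric.eventually_nhds_iff.2 ⟨δ, hδ, fun x hx => by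
      simpa using hC x (by simpa using hx)⟩
  obtain ⟨ε, hε, hexp⟩ :=
    extremum_full_expansion_general (F := ℝ) volume (by omega) hf hfk_hom hfk_pos hjet'
  exact ⟨ε, hε, fun Θ hΘ _ hsupp _ _ => by
    simpa only [smul_eq_mul, mul_comm] using hexp g Θ hΘ hsupp⟩
end

section
/- Let n ≥ 1, k ≥ 2 an integer, and let f : ℝⁿ → ℝ be smooth with f(0) = 0, ∇f(0) = 0, and f(x) = f_k(x) + O(‖x‖^{k+1}) as x → 0, where f_k is a nonzero function homogeneous of degree k satisfying the principal-type condition (H1): ∇f_k(x) ≠ 0 for every x ≠ 0 with f_k(x) = 0. Then there exists ε > 0 such that for every smooth compactly supported cut-off Θ with support in B(0,ε), Θ = 1 near 0 and 0 ≤ Θ ≤ 1, the integral I_s(z) = ∫_{ℝⁿ} g(z f(x), x) Θ(x) dx admits a full asymptotic expansion with logarithms: there exist real coefficients c_j (j ∈ ℕ) and d_j (j ∈ ℕ) such that for every N ∈ ℕ, I_s(z) = Σ_{j=0}^{N} c_j z^{-j/k} + Σ_{j ∈ ℕ, j ≤ N/k} d_j z^{-j} log z + O(z^{-(N+1)/k}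 log z) as z → ∞. -/
open MeasureTheory Filter Asymptotics

/-!
Put `R = k f - x · ∇f`, which vanishes to order `k + 1` at the origin. Since
`|∇f| ≥ c |x| ^ (k - 1)` near the origin, the vector field `x + R ∇f / |∇f|²` is a small
perturbation of the radial field, and it maps `f` to `k f` exactly. Integration by parts along it
shows that an integral `I` of an amplitude vanishing to order `i` solves an Euler equation
`k z I' + (n + i) I = I₁`, where the amplitude of `I₁` vanishes to higher order (the division by
`|∇f|²` is kept track of through the exponent `b`). Once the order is large, the field
`∇f / |∇f|²`, which maps `f` to `1`, gives `z I' + I = z⁻¹ I₂`, a gain of a full power of `z`.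
Solving these equations backwards from a bounded integral produces the powers `z ^ (-j / k)`, and
a logarithm only where the right-hand side is resonant, which happens only at integral powers of
`z`. The expansions obtained for different `N` fit together because an expansion determines its
coefficients.
-/

namespace PrincipalType

open scoped ContDiff Topology SchwartzMap LineDeriv

/-! ### Order of vanishing at the origin -/

section VanishesToOrder

variable {E F : Type*} [NormedAddCommGroup E] [NormedSpace ℝ E]
  [NormedAddCommGroup F] [NormedSpace ℝ F]

theorem differentiable_of_hasTemperateGrowth {h : E → F} (hh : h.HasTemperateGrowth) :
    Differentiable ℝ h :=
  hh.1.differentiable (by simp)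

theorem norm_iteratedFDeriv_fderiv_apply_le {h : E → F} (hh : ContDiff ℝ ∞ h) (v : E) (m : ℕ)
    (x : E) : ‖iteratedFDeriv ℝ m (fun y => fderiv ℝ h y v) x‖
      ≤ ‖v‖ * ‖iteratedFDeriv ℝ (m + 1) h x‖ := by
  rw [← norm_iteratedFDeriv_fderiv]
  have hd : ContDiffAt ℝ m (fderiv ℝ h) x :=
    (hh.fderiv_right (m := m) (by exact_mod_cast le_top)).contDiffAt
  refine ((ContinuousLinearMap.apply ℝ F v).norm_iteratedFDeriv_comp_left hd le_rfl).trans ?_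
  gcongr
  refine ContinuousLinearMap.opNorm_le_bound _ (norm_nonneg v) fun L => ?_
  rw [mul_comm]
  exact L.le_opNorm v

theorem hasTemperateGrowth_fderiv_apply {h : E → F} (hh : h.HasTemperateGrowth) (v : E) :
    (fun x => fderiv ℝ h x v).HasTemperateGrowth := by
  refine ⟨(hh.1.fderiv_right (m := ∞) (by simp)).clm_apply contDiff_const, fun m => ?_⟩
  obtain ⟨k, C, hC⟩ := hh.2 (m + 1)
  refine ⟨k, ‖v‖ * C, fun x => (norm_iteratedFDeriv_fderiv_apply_le hh.1 v m x).trans ?_⟩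
  rw [mul_assoc]
  gcongr
  exact hC x

theorem norm_le_of_norm_iteratedFDeriv_le {h : E → F} (hh : ContDiff ℝ ∞ h) {p : ℕ}
    (hzero : ∀ m < p, iteratedFDeriv ℝ m h 0 = 0) {C r : ℝ}
    (hC : ∀ x, ‖x‖ ≤ r → ‖iteratedFDeriv ℝ p h x‖ ≤ C) {x : E} (hx : ‖x‖ ≤ r) :
    ‖h x‖ ≤ C * ‖x‖ ^ p := by
  induction p generalizing h C x with
  | zero => simpa using hC x hx
  | succ p ih =>
    have hC0 : 0 ≤ C := (norm_nonneg _).trans (hC x hx)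
    have hfderiv : ∀ y ∈ Metric.closedBall (0 : E) ‖x‖, ‖fderiv ℝ h y‖ ≤ C * ‖x‖ ^ p := by
      intro y hy
      have hyx : ‖y‖ ≤ ‖x‖ := by simpa using hy
      refine ContinuousLinearMap.opNorm_le_bound _ (by positivity) fun v => ?_
      have hv : ‖fderiv ℝ h y v‖ ≤ ‖v‖ * C * ‖y‖ ^ p := by
        refine ih (h := fun y => fderiv ℝ h y v)
          ((hh.fderiv_right (m := ∞) (by simp)).clm_apply contDiff_const) (fun m hm => ?_)
          (fun u hu => ?_) (hyx.trans hx)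
        · have hle := norm_iteratedFDeriv_fderiv_apply_le hh v m 0
          rwa [hzero (m + 1) (by omega), norm_zero, mul_zero, norm_le_zero_iff] at hle
        · exact (norm_iteratedFDeriv_fderiv_apply_le hh v p u).trans (by gcongr; exact hC u hu)
      calc ‖fderiv ℝ h y v‖ ≤ ‖v‖ * C * ‖y‖ ^ p := hv
        _ ≤ ‖v‖ * C * ‖x‖ ^ p := by gcongr
        _ = C * ‖x‖ ^ p * ‖v‖ := by ring
    have hh0 : h 0 = 0 := by
      have hnorm := congrArg norm (hzero 0 p.succ_pos)
      rwa [norm_iteratedFDeriv_zero, norm_zero, norm_eq_zero] at hnorm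
    have hmean := (convex_closedBall (0 : E) ‖x‖).norm_image_sub_le_of_norm_fderiv_le
      (fun y _ => hh.differentiable (by simp) y) hfderiv (x := 0) (y := x) (by simp) (by simp)
    rw [pow_succ, ← mul_assoc]
    simpa only [hh0, sub_zero] using hmean

/-- `h` has temperate growth and all its derivatives of order `< p` vanish at `0`. The growth
condition is what makes multiplication by `h` act on Schwartz functions. -/
structure VanishesToOrder (p : ℕ) (h : E → F) : Prop where
  hasTemperateGrowth : h.HasTemperateGrowth
  iteratedFDeriv_zero : ∀ m < p, iteratedFDeriv ℝ m h 0 = 0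

theorem vanishesToOrder_zero {h : E → F} (hh : h.HasTemperateGrowth) : VanishesToOrder 0 h :=
  ⟨hh, fun m hm => absurd hm m.not_lt_zero⟩

namespace VanishesToOrder

variable {p q : ℕ} {h h₁ h₂ : E → F}

theorem mono (hh : VanishesToOrder p h) (hqp : q ≤ p) : VanishesToOrder q h :=
  ⟨hh.hasTemperateGrowth, fun m hm => hh.iteratedFDeriv_zero m (hm.trans_le hqp)⟩

theorem contDiffAt (hh : VanishesToOrder p h) (m : ℕ) (x : E) : ContDiffAt ℝ m h x :=
  hh.hasTemperateGrowth.1.contDiffAt.of_le (by exact_mod_cast le_top)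

theorem apply_zero (hh : VanishesToOrder p h) (hp : p ≠ 0) : h 0 = 0 := by
  have hnorm := congrArg norm (hh.iteratedFDeriv_zero 0 (Nat.pos_of_ne_zero hp))
  rwa [norm_iteratedFDeriv_zero, norm_zero, norm_eq_zero] at hnorm

theorem zero (p : ℕ) : VanishesToOrder p (fun _ : E => (0 : F)) :=
  ⟨.zero, fun m _ => by simp⟩

theorem add (hh₁ : VanishesToOrder p h₁) (hh₂ : VanishesToOrder p h₂) :
    VanishesToOrder p (fun x => h₁ x + h₂ x) := by
  refine ⟨hh₁.hasTemperateGrowth.fun_add hh₂.hasTemperateGrowth, fun m hm => ?_⟩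
  rw [fun_iteratedFDeriv_add_apply (hh₁.contDiffAt m 0) (hh₂.contDiffAt m 0),
    hh₁.iteratedFDeriv_zero m hm, hh₂.iteratedFDeriv_zero m hm, add_zero]

theorem sub (hh₁ : VanishesToOrder p h₁) (hh₂ : VanishesToOrder p h₂) :
    VanishesToOrder p (fun x => h₁ x - h₂ x) := by
  refine ⟨hh₁.hasTemperateGrowth.fun_sub hh₂.hasTemperateGrowth, fun m hm => ?_⟩
  rw [fun_iteratedFDeriv_sub_apply (hh₁.contDiffAt m 0) (hh₂.contDiffAt m 0),
    hh₁.iteratedFDeriv_zero m hm, hh₂.iteratedFDeriv_zero m hm, sub_zero]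

theorem sum {ι : Type*} (s : Finset ι) {h : ι → E → F} (hh : ∀ j, VanishesToOrder p (h j)) :
    VanishesToOrder p (fun x => ∑ j ∈ s, h j x) := by
  classical
  induction s using Finset.induction_on with
  | empty => simpa using zero p
  | insert j s hj ih =>
    simp only [Finset.sum_insert hj]
    exact (hh j).add ih

theorem smul {g : E → ℝ} (hg : VanishesToOrder p g) (hh : VanishesToOrder q h) :
    VanishesToOrder (p + q) (fun x => g x • h x) := by
  refine ⟨hg.hasTemperateGrowth.fun_smul hh.hasTemperateGrowth, fun m hm => ?_⟩
  rw [← norm_le_zero_iff]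
  refine (norm_iteratedFDeriv_smul_le hg.hasTemperateGrowth.1 hh.hasTemperateGrowth.1 0
    (by exact_mod_cast le_top)).trans (Finset.sum_nonpos fun i hi => ?_)
  rcases lt_or_ge i p with hip | hpi
  · simp [hg.iteratedFDeriv_zero i hip]
  · simp [hh.iteratedFDeriv_zero (m - i) (by simp only [Finset.mem_range] at hi; omega)]

theorem mul {g h : E → ℝ} (hg : VanishesToOrder p g) (hh : VanishesToOrder q h) :
    VanishesToOrder (p + q) (fun x => g x * h x) :=
  hg.smul hh

theorem const_smul (hh : VanishesToOrder p h) (c : ℝ) : VanishesToOrder p (fun x => c • h x) := by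
  simpa using (vanishesToOrder_zero (.const c)).smul hh

theorem const_mul {h : E → ℝ} (hh : VanishesToOrder p h) (c : ℝ) :
    VanishesToOrder p (fun x => c * h x) :=
  hh.const_smul c

theorem fderiv_apply (hh : VanishesToOrder p h) (v : E) :
    VanishesToOrder (p - 1) (fun x => fderiv ℝ h x v) := by
  refine ⟨hasTemperateGrowth_fderiv_apply hh.hasTemperateGrowth v, fun m hm => ?_⟩
  have hle := norm_iteratedFDeriv_fderiv_apply_le hh.hasTemperateGrowth.1 v m 0
  rwa [hh.iteratedFDeriv_zero (m + 1) (by omega), norm_zero, mul_zero, norm_le_zero_iff] at hle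

theorem continuousLinearMap (L : E →L[ℝ] F) : VanishesToOrder 1 L := by
  refine ⟨L.hasTemperateGrowth, fun m hm => ?_⟩
  obtain rfl := Nat.lt_one_iff.1 hm
  rw [← norm_eq_zero, norm_iteratedFDeriv_zero, map_zero, norm_zero]

theorem isBigO [FiniteDimensional ℝ E] (hh : VanishesToOrder p h) :
    h =O[nhds 0] fun x => ‖x‖ ^ p := by
  obtain ⟨C, hC⟩ := (isCompact_closedBall (0 : E) 1).exists_bound_of_continuousOn
    (hh.hasTemperateGrowth.1.continuous_iteratedFDeriv (m := p)
      (by exact_mod_cast le_top)).continuousOn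
  refine .of_bound C ?_
  filter_upwards [Metric.closedBall_mem_nhds (0 : E) one_pos] with x hx
  simpa using norm_le_of_norm_iteratedFDeriv_le hh.hasTemperateGrowth.1 hh.iteratedFDeriv_zero
    (r := 1) (fun y hy => hC y (by simpa using hy)) (by simpa using hx)

end VanishesToOrder

end VanishesToOrder

/-! ### Partial derivatives and Taylor terms -/

theorem fderiv_fderiv_apply_comm {E F : Type*} [NormedAddCommGroup E] [NormedSpace ℝ E]
    [NormedAddCommGroup F] [NormedSpace ℝ F] {h : E → F} (hh : ContDiff ℝ ∞ h) (v w x : E) :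
    fderiv ℝ (fun y => fderiv ℝ h y v) x w = fderiv ℝ (fun y => fderiv ℝ h y w) x v := by
  have hd : DifferentiableAt ℝ (fderiv ℝ h) x :=
    (hh.fderiv_right (m := ∞) (by simp)).differentiable (by simp) x
  have hsymm : IsSymmSndFDerivAt ℝ h x :=
    hh.contDiffAt.isSymmSndFDerivAt (by simpa using ENat.LEInfty.out)
  rw [fderiv_clm_apply hd (differentiableAt_const v),
    fderiv_clm_apply hd (differentiableAt_const w)]
  simpa using hsymm.eq w v

section PartialDeriv

variable {E F : Type*} [NormedAddCommGroup E] [NormedSpace ℝ E] [FiniteDimensional ℝ E]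
  [NormedAddCommGroup F] [NormedSpace ℝ F] {h : E → F}

/-- The coordinate `xᵢ` in the basis `Module.finBasis ℝ E`. -/
noncomputable def coord (i : Fin (Module.finrank ℝ E)) : E →L[ℝ] ℝ :=
  ((Module.finBasis ℝ E).coord i).toContinuousLinearMap

/-- The partial derivative `∂ᵢ` in the basis `Module.finBasis ℝ E`. -/
noncomputable def partialDeriv (i : Fin (Module.finrank ℝ E)) (h : E → F) : E → F :=
  fun x => fderiv ℝ h x (Module.finBasis ℝ E i)

theorem coord_finBasis (i j : Fin (Module.finrank ℝ E)) :
    coord i (Module.finBasis ℝ E j) = if j = i then 1 else 0 := by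
  simp [coord, Finsupp.single_apply]

theorem sum_coord_smul_finBasis (x : E) : ∑ i, coord i x • Module.finBasis ℝ E i = x :=
  (Module.finBasis ℝ E).sum_repr x

theorem sum_coord_smul_partialDeriv (h : E → F) (x : E) :
    ∑ i, coord i x • partialDeriv i h x = fderiv ℝ h x x := by
  calc ∑ i, coord i x • partialDeriv i h x
      = fderiv ℝ h x (∑ i, coord i x • Module.finBasis ℝ E i) := by
        simp only [partialDeriv, map_sum, map_smul]
    _ = fderiv ℝ h x x := by rw [sum_coord_smul_finBasis]

theorem fderiv_eq_zero_iff_partialDeriv (h : E → F) (x : E) :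
    fderiv ℝ h x = 0 ↔ ∀ i, partialDeriv i h x = 0 :=
  ⟨fun h0 i => by simp [partialDeriv, h0], fun h0 => ContinuousLinearMap.coe_injective
    ((Module.finBasis ℝ E).ext h0)⟩

theorem partialDeriv_sub {h₁ h₂ : E → F} (hh₁ : Differentiable ℝ h₁) (hh₂ : Differentiable ℝ h₂)
    (i : Fin (Module.finrank ℝ E)) : partialDeriv i (fun x => h₁ x - h₂ x)
      = fun x => partialDeriv i h₁ x - partialDeriv i h₂ x := by
  ext x
  simp only [partialDeriv, fderiv_fun_sub (hh₁ x) (hh₂ x), sub_apply]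

theorem partialDeriv_const_smul (hh : Differentiable ℝ h) (c : ℝ)
    (i : Fin (Module.finrank ℝ E)) :
    partialDeriv i (fun x => c • h x) = fun x => c • partialDeriv i h x := by
  ext x
  simp only [partialDeriv, fderiv_fun_const_smul (hh x) c, smul_apply]

theorem partialDeriv_sum_coord_smul {h : Fin (Module.finrank ℝ E) → E → F}
    (hh : ∀ i, Differentiable ℝ (h i)) (j : Fin (Module.finrank ℝ E)) :
    partialDeriv j (fun x => ∑ i, coord i x • h i x)
      = fun x => h j x + ∑ i, coord i x • partialDeriv j (h i) x := by
  ext x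
  have hsum : HasFDerivAt (fun x => ∑ i, coord i x • h i x)
      (∑ i, (coord i x • fderiv ℝ (h i) x + (coord i).smulRight (h i x))) x :=
    HasFDerivAt.fun_sum fun i _ => (coord i).hasFDerivAt.fun_smul (hh i x).hasFDerivAt
  simp [partialDeriv, hsum.fderiv, Finset.sum_add_distrib, coord_finBasis, add_comm]

theorem partialDeriv_comm (hh : ContDiff ℝ ∞ h) (i j : Fin (Module.finrank ℝ E)) :
    partialDeriv i (partialDeriv j h) = partialDeriv j (partialDeriv i h) :=
  funext fun x => fderiv_fderiv_apply_comm hh _ _ x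

theorem contDiff_partialDeriv (hh : ContDiff ℝ ∞ h) (i : Fin (Module.finrank ℝ E)) :
    ContDiff ℝ ∞ (partialDeriv i h) :=
  (hh.fderiv_right (by simp)).clm_apply contDiff_const

theorem hasTemperateGrowth_partialDeriv (hh : h.HasTemperateGrowth)
    (i : Fin (Module.finrank ℝ E)) : (partialDeriv i h).HasTemperateGrowth :=
  hasTemperateGrowth_fderiv_apply hh _

theorem VanishesToOrder.partialDeriv {p : ℕ} (hh : VanishesToOrder p h)
    (i : Fin (Module.finrank ℝ E)) : VanishesToOrder (p - 1) (partialDeriv i h) :=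
  hh.fderiv_apply _

theorem VanishesToOrder.of_partialDeriv {p : ℕ} (hh : h.HasTemperateGrowth) (hzero : h 0 = 0)
    (hpartial : ∀ i, VanishesToOrder p (PrincipalType.partialDeriv i h)) :
    VanishesToOrder (p + 1) h := by
  refine ⟨hh, fun m hm => ?_⟩
  cases m with
  | zero => rw [← norm_eq_zero, norm_iteratedFDeriv_zero, hzero, norm_zero]
  | succ m =>
    rw [← norm_eq_zero, ← norm_iteratedFDeriv_fderiv, norm_eq_zero]
    ext u v
    have hd : ContDiffAt ℝ m (fderiv ℝ h) 0 :=
      (hh.1.fderiv_right (m := m) (by exact_mod_cast le_top)).contDiffAt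
    suffices (iteratedFDeriv ℝ m (fderiv ℝ h) 0 u : E →ₗ[ℝ] F) = 0 from
      LinearMap.congr_fun this v
    refine (Module.finBasis ℝ E).ext fun i => ?_
    have hcomp := (ContinuousLinearMap.apply ℝ F (Module.finBasis ℝ E i)).iteratedFDeriv_comp_left
      hd le_rfl
    have hi : iteratedFDeriv ℝ m (PrincipalType.partialDeriv i h) 0 u = 0 := by
      rw [(hpartial i).iteratedFDeriv_zero m (by omega), zero_apply]
    exact (DFunLike.congr_fun hcomp u).symm.trans hi

theorem VanishesToOrder.fderiv_apply_self_sub {p : ℕ} (hh : VanishesToOrder p h) :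
    VanishesToOrder (p + 1) (fun x => fderiv ℝ h x x - (p : ℝ) • h x) := by
  simp only [← sum_coord_smul_partialDeriv]
  have hgrowth {h : E → F} (hh : h.HasTemperateGrowth) :
      (fun x => ∑ i, coord i x • PrincipalType.partialDeriv i h x).HasTemperateGrowth :=
    .sum fun i _ => (coord i).hasTemperateGrowth.fun_smul (hasTemperateGrowth_partialDeriv hh i)
  induction p generalizing h with
  | zero =>
    simp only [Nat.cast_zero, zero_smul, sub_zero]
    refine of_partialDeriv (hgrowth hh.hasTemperateGrowth) (by simp) fun i => ?_
    exact vanishesToOrder_zero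
      (hasTemperateGrowth_partialDeriv (hgrowth hh.hasTemperateGrowth) i)
  | succ p ih =>
    have hh' := hh.hasTemperateGrowth
    have hd := differentiable_of_hasTemperateGrowth hh'
    refine of_partialDeriv ((hgrowth hh').fun_sub (hh.const_smul _).hasTemperateGrowth)
      (by simp [hh.apply_zero]) fun j => ?_
    rw [partialDeriv_sub (differentiable_of_hasTemperateGrowth (hgrowth hh')) (hd.fun_const_smul _),
      partialDeriv_const_smul hd, partialDeriv_sum_coord_smul fun i =>
        differentiable_of_hasTemperateGrowth (hasTemperateGrowth_partialDeriv hh' i)]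
    convert ih (hh.partialDeriv j) using 2 with x
    simp only [partialDeriv_comm hh'.1 j]
    push_cast
    module

/-- The homogeneous term of degree `p` in the Taylor expansion of `h` at `0`. -/
noncomputable def taylorTerm : ℕ → (E → F) → E → F
  | 0, h => fun _ => h 0
  | p + 1, h => fun x => ((p : ℝ) + 1)⁻¹ • ∑ i, coord i x • taylorTerm p (partialDeriv i h) x

theorem hasTemperateGrowth_taylorTerm (p : ℕ) (h : E → F) :
    (taylorTerm p h).HasTemperateGrowth := by
  induction p generalizing h with
  | zero => exact .const _
  | succ p ih =>
    exact (Function.HasTemperateGrowth.const _).fun_smul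
      (.sum fun i _ => (coord i).hasTemperateGrowth.fun_smul (ih _))

theorem taylorTerm_smul (p : ℕ) (h : E → F) (s : ℝ) (x : E) :
    taylorTerm p h (s • x) = s ^ p • taylorTerm p h x := by
  induction p generalizing h with
  | zero => simp [taylorTerm]
  | succ p ih =>
    simp only [taylorTerm, ih, map_smul, Finset.smul_sum, smul_smul, smul_eq_mul]
    exact Finset.sum_congr rfl fun i _ => by ring_nf

theorem partialDeriv_taylorTerm_succ (p : ℕ) (hh : ContDiff ℝ ∞ h)
    (j : Fin (Module.finrank ℝ E)) :
    partialDeriv j (taylorTerm (p + 1) h) = taylorTerm p (partialDeriv j h) := by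
  have hd (p : ℕ) (h : E → F) : Differentiable ℝ (taylorTerm p h) :=
    differentiable_of_hasTemperateGrowth (hasTemperateGrowth_taylorTerm p h)
  have hsucc (p : ℕ) (h : E → F) : partialDeriv j (taylorTerm (p + 1) h) = fun x =>
      ((p : ℝ) + 1)⁻¹ • (fun x => taylorTerm p (partialDeriv j h) x
        + ∑ i, coord i x • partialDeriv j (taylorTerm p (partialDeriv i h)) x) x := by
    have hsum := partialDeriv_sum_coord_smul (fun i => hd p (partialDeriv i h)) j
    rw [← hsum]
    exact partialDeriv_const_smul (.fun_sum fun i _ => (coord i).differentiable.smul (hd p _)) _ j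
  induction p generalizing h with
  | zero =>
    rw [hsucc]
    ext x
    simp [taylorTerm, partialDeriv]
  | succ p ih =>
    rw [hsucc]
    ext x
    simp only [ih (contDiff_partialDeriv hh _), partialDeriv_comm hh j]
    rw [show ∑ i, coord i x • taylorTerm p (partialDeriv i (partialDeriv j h)) x
        = ((p : ℝ) + 1) • taylorTerm (p + 1) (partialDeriv j h) x from
      (smul_inv_smul₀ (by positivity) _).symm]
    push_cast
    match_scalars
    field_simp
    ring

theorem VanishesToOrder.sub_taylorTerm {p : ℕ} (hh : VanishesToOrder p h) :
    VanishesToOrder (p + 1) (fun x => h x - taylorTerm p h x) := by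
  induction p generalizing h with
  | zero =>
    have hsub := hh.hasTemperateGrowth.fun_sub (hasTemperateGrowth_taylorTerm 0 h)
    exact of_partialDeriv hsub (by simp [taylorTerm]) fun i =>
      vanishesToOrder_zero (hasTemperateGrowth_partialDeriv hsub i)
  | succ p ih =>
    refine of_partialDeriv
      (hh.hasTemperateGrowth.fun_sub (hasTemperateGrowth_taylorTerm (p + 1) h))
      (by simp [taylorTerm, hh.apply_zero]) fun i => ?_
    rw [partialDeriv_sub (differentiable_of_hasTemperateGrowth hh.hasTemperateGrowth)
      (differentiable_of_hasTemperateGrowth (hasTemperateGrowth_taylorTerm _ h)),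
      partialDeriv_taylorTerm_succ p hh.hasTemperateGrowth.1]
    exact ih (hh.partialDeriv i)

end PartialDeriv

/-! ### Homogeneous functions and jets -/

open scoped Topology

/-- `T (c • x) = c ^ p • T x` for all `c > 0`. -/
def PosHomogeneous {E F : Type*} [SMul ℝ E] [SMul ℝ F] (p : ℕ) (T : E → F) : Prop :=
  ∀ c : ℝ, 0 < c → ∀ x, T (c • x) = c ^ p • T x

namespace PosHomogeneous

variable {E F : Type*} [NormedAddCommGroup E] [NormedSpace ℝ E]
  [NormedAddCommGroup F] [NormedSpace ℝ F] {p : ℕ} {T : E → F}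

theorem fderiv (hT : PosHomogeneous (p + 1) T) : PosHomogeneous p (fderiv ℝ T) := by
  intro c hc x
  have hscaled : (fun y => T (c • y)) = c ^ (p + 1) • T := funext (hT c hc)
  have hchain : _root_.fderiv ℝ (fun y => T (c • y)) x = c • _root_.fderiv ℝ T (c • x) :=
    fderiv_comp_smul c
  rw [hscaled, fderiv_const_smul_field, Pi.smul_apply, pow_succ', mul_smul] at hchain
  exact (smul_right_injective _ hc.ne' hchain).symm

theorem fderiv_apply_self (hT : PosHomogeneous p T) {x : E} (hd : DifferentiableAt ℝ T x) :
    _root_.fderiv ℝ T x x = (p : ℝ) • T x := by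
  have hray : HasDerivAt (fun c : ℝ => T (c • x)) (_root_.fderiv ℝ T x x) 1 := by
    have hline : HasDerivAt (fun c : ℝ => c • x) x 1 := by
      simpa using (hasDerivAt_id (1 : ℝ)).smul_const x
    exact HasFDerivAt.comp_hasDerivAt 1 (by simpa using hd.hasFDerivAt) hline
  have hpow : HasDerivAt (fun c : ℝ => T (c • x)) ((p : ℝ) • T x) 1 := by
    have hmonomial : HasDerivAt (fun c : ℝ => c ^ p • T x) ((p : ℝ) • T x) 1 := by
      simpa using (hasDerivAt_pow p (1 : ℝ)).smul_const (T x)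
    refine hmonomial.congr_of_eventuallyEq ?_
    filter_upwards [lt_mem_nhds one_pos] with c hc using hT c hc x
  exact hray.unique hpow

theorem exists_lower_bound [FiniteDimensional ℝ E] [Nontrivial E] {T : E → ℝ}
    (hT : PosHomogeneous p T) (hcont : Continuous T) (hpos : ∀ x, x ≠ 0 → 0 < T x) :
    ∃ κ, 0 < κ ∧ ∀ x, κ * ‖x‖ ^ p ≤ T x := by
  obtain ⟨u, hu, hmin⟩ := (isCompact_sphere (0 : E) 1).exists_isMinOn
    (NormedSpace.sphere_nonempty.2 zero_le_one) hcont.continuousOn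
  refine ⟨T u, hpos u (ne_zero_of_mem_unit_sphere ⟨u, hu⟩), fun x => ?_⟩
  have hclosed : IsClosed {x : E | T u * ‖x‖ ^ p ≤ T x} :=
    isClosed_le (by fun_prop) hcont
  have hne : ({0}ᶜ : Set E) ⊆ {x | T u * ‖x‖ ^ p ≤ T x} := by
    intro y hy
    have hy0 : 0 < ‖y‖ := norm_pos_iff.2 hy
    have hunit : ‖y‖⁻¹ • y ∈ Metric.sphere (0 : E) 1 := by
      simp [norm_smul, inv_mul_cancel₀ hy0.ne']
    calc T u * ‖y‖ ^ p ≤ T (‖y‖⁻¹ • y) * ‖y‖ ^ p := by gcongr; exact hmin hunit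
      _ = T (‖y‖ • ‖y‖⁻¹ • y) := by rw [hT _ hy0, smul_eq_mul, mul_comm]
      _ = T y := by rw [smul_inv_smul₀ hy0.ne']
  exact hclosed.closure_subset_iff.2 hne (dense_compl_singleton (0 : E) x)

end PosHomogeneous

section Jet

variable {E F : Type*} [NormedAddCommGroup E] [NormedSpace ℝ E]
  [NormedAddCommGroup F] [NormedSpace ℝ F] {p : ℕ} {h T : E → F}

theorem posHomogeneous_taylorTerm [FiniteDimensional ℝ E] (p : ℕ) (h : E → F) :
    PosHomogeneous p (taylorTerm p h) :=
  fun c _ x => taylorTerm_smul p h c x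

theorem PosHomogeneous.tendsto_of_sub_isLittleO (hT : PosHomogeneous p T)
    (hjet : (fun x => h x - T x) =o[𝓝 0] fun x => ‖x‖ ^ p) (v : E) :
    Tendsto (fun s : ℝ => (s ^ p)⁻¹ • h (s • v)) (𝓝[>] 0) (𝓝 (T v)) := by
  have hray : Tendsto (fun s : ℝ => s • v) (𝓝[>] 0) (𝓝 0) := by
    have hcont : Continuous fun s : ℝ => s • v := by fun_prop
    simpa using (hcont.tendsto 0).mono_left nhdsWithin_le_nhds
  have hsmall : (fun s : ℝ => h (s • v) - T (s • v)) =o[𝓝[>] 0] fun s : ℝ => s ^ p := by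
    refine (hjet.comp_tendsto hray).trans_isBigO (.of_bound (‖v‖ ^ p) (.of_forall fun s => ?_))
    simp [norm_smul, mul_pow, mul_comm]
  refine tendsto_sub_nhds_zero_iff.1 (hsmall.tendsto_inv_smul_nhds_zero.congr' ?_)
  filter_upwards [self_mem_nhdsWithin] with s (hs : 0 < s)
  rw [hT s hs, smul_sub, inv_smul_smul₀ (by positivity)]

variable [FiniteDimensional ℝ E]

theorem VanishesToOrder.tendsto_taylorTerm (hh : VanishesToOrder p h) (v : E) :
    Tendsto (fun s : ℝ => (s ^ p)⁻¹ • h (s • v)) (𝓝[>] 0) (𝓝 (taylorTerm p h v)) :=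
  (posHomogeneous_taylorTerm p h).tendsto_of_sub_isLittleO (hh.sub_taylorTerm.isBigO.trans_isLittleO
    ((isLittleO_norm_pow_norm_pow p.lt_succ_self))) v

theorem PosHomogeneous.vanishesToOrder_of_sub_isLittleO (hT : PosHomogeneous p T)
    (hh : h.HasTemperateGrowth) (hjet : (fun x => h x - T x) =o[𝓝 0] fun x => ‖x‖ ^ p) :
    VanishesToOrder p h := by
  suffices ∀ j ≤ p, VanishesToOrder j h from this p le_rfl
  intro j hj
  induction j with
  | zero => exact vanishesToOrder_zero hh
  | succ j ih =>
    have hvanish := ih (Nat.le_of_succ_le hj)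
    have hzero : taylorTerm j h = fun _ => 0 := by
      ext v
      have hpow : Tendsto (fun s : ℝ => s ^ (p - j)) (𝓝[>] 0) (𝓝 0) := by
        have hcont : Continuous fun s : ℝ => s ^ (p - j) := by fun_prop
        simpa [zero_pow (Nat.sub_ne_zero_of_lt hj)] using
          (hcont.tendsto 0).mono_left nhdsWithin_le_nhds
      have hlim := hpow.smul (hT.tendsto_of_sub_isLittleO hjet v)
      rw [zero_smul] at hlim
      refine tendsto_nhds_unique (hvanish.tendsto_taylorTerm v) (hlim.congr' ?_)
      filter_upwards [self_mem_nhdsWithin] with s (hs : 0 < s)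
      rw [smul_smul, pow_sub₀ s hs.ne' (Nat.le_of_succ_le hj)]
      congr 1
      field_simp
    simpa [hzero] using hvanish.sub_taylorTerm

theorem PosHomogeneous.taylorTerm_eq_of_sub_isLittleO (hT : PosHomogeneous p T)
    (hh : h.HasTemperateGrowth) (hjet : (fun x => h x - T x) =o[𝓝 0] fun x => ‖x‖ ^ p) :
    taylorTerm p h = T :=
  funext fun v => tendsto_nhds_unique
    ((hT.vanishesToOrder_of_sub_isLittleO hh hjet).tendsto_taylorTerm v)
    (hT.tendsto_of_sub_isLittleO hjet v)

end Jet

/-! ### Phases of principal type -/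

section GradSq

variable {E : Type*} [NormedAddCommGroup E] [NormedSpace ℝ E] [FiniteDimensional ℝ E]
  {p q : ℕ} {h T : E → ℝ}

/-- The squared length `|∇h|²` of the gradient, for the Euclidean structure in which
`Module.finBasis ℝ E` is orthonormal. -/
noncomputable def gradSq (h : E → ℝ) : E → ℝ :=
  fun x => ∑ i, partialDeriv i h x ^ 2

theorem gradSq_nonneg (h : E → ℝ) (x : E) : 0 ≤ gradSq h x :=
  Finset.sum_nonneg fun _ _ => sq_nonneg _

theorem fderiv_eq_zero_of_gradSq_eq_zero {x : E} (hx : gradSq h x = 0) : fderiv ℝ h x = 0 :=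
  (fderiv_eq_zero_iff_partialDeriv h x).2 fun i => by
    simpa using (Finset.sum_eq_zero_iff_of_nonneg fun i _ => sq_nonneg _).1 hx i (Finset.mem_univ i)

theorem gradSq_le_two_mul_add {h₁ h₂ : E → ℝ} (hh₁ : Differentiable ℝ h₁)
    (hh₂ : Differentiable ℝ h₂) (x : E) :
    gradSq h₁ x ≤ 2 * (gradSq h₂ x + gradSq (fun x => h₁ x - h₂ x) x) := by
  simp only [gradSq, partialDeriv_sub hh₁ hh₂, ← Finset.sum_add_distrib, Finset.mul_sum]
  exact Finset.sum_le_sum fun i _ => by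
    nlinarith [sq_nonneg (partialDeriv i h₁ x - 2 * partialDeriv i h₂ x)]

theorem VanishesToOrder.gradSq (hh : VanishesToOrder p h) :
    VanishesToOrder (2 * (p - 1)) (gradSq h) := by
  unfold PrincipalType.gradSq
  simp only [two_mul, sq]
  exact .sum _ fun i => (hh.partialDeriv i).mul (hh.partialDeriv i)

theorem PosHomogeneous.gradSq (hT : PosHomogeneous (p + 1) T) :
    PosHomogeneous (2 * p) (gradSq T) := by
  intro c hc x
  simp only [PrincipalType.gradSq, partialDeriv, hT.fderiv c hc x, smul_apply, smul_eq_mul,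
    Finset.mul_sum]
  exact Finset.sum_congr rfl fun i _ => by ring

theorem PosHomogeneous.gradSq_pos (hT : PosHomogeneous (p + 1) T) {x : E}
    (hd : DifferentiableAt ℝ T x) (hne : T x = 0 → _root_.fderiv ℝ T x ≠ 0) :
    0 < PrincipalType.gradSq T x := by
  refine (gradSq_nonneg T x).lt_of_ne' fun hzero => ?_
  have hcrit := fderiv_eq_zero_of_gradSq_eq_zero hzero
  have heuler := hT.fderiv_apply_self hd
  rw [hcrit, zero_apply] at heuler
  exact hne ((smul_eq_zero.1 heuler.symm).resolve_left (by positivity)) hcrit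

theorem VanishesToOrder.exists_gradSq_lower_bound [Nontrivial E] (hh : VanishesToOrder (q + 1) h)
    (hprincipal : ∀ x, x ≠ 0 → taylorTerm (q + 1) h x = 0 →
      fderiv ℝ (taylorTerm (q + 1) h) x ≠ 0) :
    ∃ κ, 0 < κ ∧ ∀ᶠ x in 𝓝 0, κ * ‖x‖ ^ (2 * q) ≤ PrincipalType.gradSq h x := by
  set T := taylorTerm (q + 1) h
  have hTgrowth : T.HasTemperateGrowth := hasTemperateGrowth_taylorTerm _ _
  have hTdiff := differentiable_of_hasTemperateGrowth hTgrowth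
  have hThom := posHomogeneous_taylorTerm (q + 1) h
  obtain ⟨κ, hκ, hlower⟩ := hThom.gradSq.exists_lower_bound
    (vanishesToOrder_zero hTgrowth).gradSq.hasTemperateGrowth.1.continuous
    fun x hx => hThom.gradSq_pos (hTdiff x) (hprincipal x hx)
  have hremainder : PrincipalType.gradSq (fun x => T x - h x) =o[𝓝 0] fun x => ‖x‖ ^ (2 * q) := by
    have hsub : VanishesToOrder (q + 2) fun x => T x - h x := by
      simpa using hh.sub_taylorTerm.const_smul (-1)
    exact hsub.gradSq.isBigO.trans_isLittleO (isLittleO_norm_pow_norm_pow (by omega))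
  refine ⟨κ / 4, by positivity, ?_⟩
  filter_upwards [hremainder.def (show 0 < κ / 4 by positivity)] with x hx
  rw [norm_pow, norm_norm] at hx
  have hsplit := gradSq_le_two_mul_add hTdiff
    (differentiable_of_hasTemperateGrowth hh.hasTemperateGrowth) x
  linarith [hlower x, (le_abs_self _).trans hx]

end GradSq

/-- `f` vanishes to order `q + 1` at `0`, and `|∇f| ≥ κ^{1/2} ‖x‖ ^ q` on the ball of radius `ρ`. -/
structure IsPhase {E : Type*} [NormedAddCommGroup E] [NormedSpace ℝ E] [FiniteDimensional ℝ E]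
    (f : E → ℝ) (q : ℕ) (ρ κ : ℝ) : Prop where
  vanishes : VanishesToOrder (q + 1) f
  pos : 0 < κ
  radius_pos : 0 < ρ
  lower : ∀ x, ‖x‖ ≤ ρ → κ * ‖x‖ ^ (2 * q) ≤ gradSq f x

theorem exists_isPhase {E : Type*} [NormedAddCommGroup E] [NormedSpace ℝ E]
    [FiniteDimensional ℝ E] [Nontrivial E] {f fk : E → ℝ} {q : ℕ} (hf : ContDiff ℝ ∞ f)
    (hhom : PosHomogeneous (q + 1) fk) (hprincipal : ∀ x, x ≠ 0 → fk x = 0 → fderiv ℝ fk x ≠ 0)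
    (hjet : (fun x => f x - fk x) =o[𝓝 0] fun x => ‖x‖ ^ (q + 1)) :
    ∃ (F : E → ℝ) (ρ κ : ℝ), IsPhase F q ρ κ ∧ ∀ x, ‖x‖ ≤ ρ → F x = f x := by
  let χ : ContDiffBump (0 : E) := ⟨1, 2, one_pos, one_lt_two⟩
  set F : E → ℝ := fun x => χ x * f x
  have hgrowth : F.HasTemperateGrowth :=
    χ.hasCompactSupport.mul_right.hasTemperateGrowth (χ.contDiff.mul hf)
  have hFf : ∀ᶠ x in 𝓝 0, F x = f x := by
    filter_upwards [χ.eventuallyEq_one] with x hx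
    simp only [F, hx, Pi.one_apply, one_mul]
  have hFjet : (fun x => F x - fk x) =o[𝓝 0] fun x => ‖x‖ ^ (q + 1) :=
    hjet.congr' (hFf.mono fun x hx => congrArg (· - fk x) hx.symm) .rfl
  have hvanishes := hhom.vanishesToOrder_of_sub_isLittleO hgrowth hFjet
  obtain ⟨κ, hκ, hlower⟩ := hvanishes.exists_gradSq_lower_bound
    (by rwa [hhom.taylorTerm_eq_of_sub_isLittleO hgrowth hFjet])
  obtain ⟨ρ, hρ, hball⟩ := Metric.nhds_basis_closedBall.eventually_iff.1 (hlower.and hFf)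
  have hmem {x : E} (hx : ‖x‖ ≤ ρ) := hball (mem_closedBall_zero_iff.2 hx)
  exact ⟨F, ρ, κ, ⟨hvanishes, hκ, hρ, fun x hx => (hmem hx).1⟩, fun x hx => (hmem hx).2⟩

/-! ### Amplitudes -/

section Amplitude

variable {E : Type*} [NormedAddCommGroup E] [NormedSpace ℝ E]

/-- The derivative of `a (t, x)` in `t`. -/
noncomputable def dt (a : 𝓢(ℝ × E, ℝ)) : 𝓢(ℝ × E, ℝ) := ∂_{((1 : ℝ), (0 : E))} a

/-- Multiplication of `a (t, x)` by `t`. -/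
noncomputable def mulT (a : 𝓢(ℝ × E, ℝ)) : 𝓢(ℝ × E, ℝ) :=
  SchwartzMap.smulLeftCLM ℝ (fun y : ℝ × E => y.1) a

/-- Multiplication of `a (t, x)` by `h x`, for `h` of temperate growth. -/
noncomputable def mulX (h : E → ℝ) (a : 𝓢(ℝ × E, ℝ)) : 𝓢(ℝ × E, ℝ) :=
  SchwartzMap.smulLeftCLM ℝ (fun y : ℝ × E => h y.2) a

variable (a : 𝓢(ℝ × E, ℝ)) (t : ℝ) (x : E)

theorem dt_apply (y : ℝ × E) : dt a y = fderiv ℝ a y (1, 0) :=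
  SchwartzMap.lineDerivOp_apply_eq_fderiv _ _ _

theorem mulT_apply : mulT a (t, x) = t * a (t, x) := by
  have hfst : (fun y : ℝ × E => y.1).HasTemperateGrowth :=
    (ContinuousLinearMap.fst ℝ ℝ E).hasTemperateGrowth
  rw [mulT, SchwartzMap.smulLeftCLM_apply_apply hfst, smul_eq_mul]

theorem mulX_apply {h : E → ℝ} (hh : h.HasTemperateGrowth) : mulX h a (t, x) = h x * a (t, x) := by
  have hsnd : (fun y : ℝ × E => h y.2).HasTemperateGrowth :=
    hh.comp (ContinuousLinearMap.snd ℝ ℝ E).hasTemperateGrowth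
  rw [mulX, SchwartzMap.smulLeftCLM_apply_apply hsnd, smul_eq_mul]

theorem dt_mulT : dt (mulT a) (t, x) = a (t, x) + t * dt a (t, x) := by
  have hmul : (mulT a : ℝ × E → ℝ) = fun y => y.1 * a y := funext fun y => mulT_apply a y.1 y.2
  have hderiv : HasFDerivAt (fun y : ℝ × E => y.1 * a y) _ (t, x) :=
    hasFDerivAt_fst.mul (a.differentiable (t, x)).hasFDerivAt
  rw [dt_apply, dt_apply, hmul, hderiv.fderiv]
  simp [add_comm]

theorem hasTemperateGrowth_slice : (fun x => a (t, x)).HasTemperateGrowth := by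
  have hshift :
      (fun x : E => (t, x)) = fun x => (t, (0 : E)) + ContinuousLinearMap.inr ℝ ℝ E x := by
    ext x <;> simp
  refine a.hasTemperateGrowth.comp (g := a) (f := fun x : E => (t, x)) ?_
  rw [hshift]
  fun_prop

theorem norm_iteratedFDeriv_slice_le (m : ℕ) :
    ‖iteratedFDeriv ℝ m (fun x => a (t, x)) x‖ ≤ ‖iteratedFDeriv ℝ m a (t, x)‖ := by
  have hslice : (fun x => a (t, x))
      = (fun y => a ((t, 0) + y)) ∘ ContinuousLinearMap.inr ℝ ℝ E := by
    ext x
    simp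
  have hsmooth : ContDiff ℝ m fun y => a ((t, 0) + y) :=
    (a.smooth m).comp (contDiff_const.add contDiff_id)
  rw [hslice, ContinuousLinearMap.iteratedFDeriv_comp_right _ hsmooth x le_rfl,
    iteratedFDeriv_comp_add_left]
  refine (ContinuousMultilinearMap.norm_compContinuousLinearMap_le _ _).trans ?_
  rw [Finset.prod_const, ContinuousLinearMap.inr_apply, Prod.mk_add_mk, add_zero, zero_add]
  exact mul_le_of_le_one_right (norm_nonneg _)
    (pow_le_one₀ (norm_nonneg _) (ContinuousLinearMap.norm_inr_le_one ℝ ℝ E))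

variable {a t x}

theorem fderiv_slice (a : 𝓢(ℝ × E, ℝ)) (t : ℝ) (x v : E) :
    fderiv ℝ (fun x => a (t, x)) x v = fderiv ℝ a (t, x) (0, v) := by
  have hchain := (a.differentiable (t, x)).hasFDerivAt.comp x (hasFDerivAt_prodMk_right t x)
  exact DFunLike.congr_fun hchain.fderiv v

theorem eventuallyEq_zero_of_support {ρ : ℝ} (hsupp : ∀ t x, ρ < ‖x‖ → a (t, x) = 0)
    (hx : ρ < ‖x‖) : (a : ℝ × E → ℝ) =ᶠ[𝓝 (t, x)] fun _ => 0 := by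
  have hopen : IsOpen {y : ℝ × E | ρ < ‖y.2‖} := isOpen_lt continuous_const (by fun_prop)
  filter_upwards [hopen.mem_nhds hx] with y hy using hsupp y.1 y.2 hy

end Amplitude

/-- An amplitude `a (t, x)` which vanishes to order `p` in `x` at `x = 0`, for every `t`, and is
supported in `‖x‖ ≤ ρ`. -/
structure IsAmplitude {E : Type*} [NormedAddCommGroup E] [NormedSpace ℝ E] (ρ : ℝ) (p : ℕ)
    (a : 𝓢(ℝ × E, ℝ)) : Prop where
  vanishes : ∀ t, VanishesToOrder p fun x => a (t, x)
  support : ∀ t x, ρ < ‖x‖ → a (t, x) = 0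

namespace IsAmplitude

variable {E : Type*} [NormedAddCommGroup E] [NormedSpace ℝ E] {ρ : ℝ} {p r : ℕ}
  {a a₁ a₂ : 𝓢(ℝ × E, ℝ)}

theorem mono (ha : IsAmplitude ρ p a) (hrp : r ≤ p) : IsAmplitude ρ r a :=
  ⟨fun t => (ha.vanishes t).mono hrp, ha.support⟩

theorem zero (ρ : ℝ) (p : ℕ) : IsAmplitude ρ p (0 : 𝓢(ℝ × E, ℝ)) :=
  ⟨fun _ => .zero p, fun _ _ _ => rfl⟩

theorem add (ha₁ : IsAmplitude ρ p a₁) (ha₂ : IsAmplitude ρ p a₂) :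
    IsAmplitude ρ p (a₁ + a₂) :=
  ⟨fun t => (ha₁.vanishes t).add (ha₂.vanishes t), fun t x hx => by
    rw [add_apply, ha₁.support t x hx, ha₂.support t x hx, add_zero]⟩

theorem smul (ha : IsAmplitude ρ p a) (s : ℝ) : IsAmplitude ρ p (s • a) :=
  ⟨fun t => (ha.vanishes t).const_smul s, fun t x hx => by
    rw [smul_apply, ha.support t x hx, smul_zero]⟩

theorem sum {ι : Type*} (s : Finset ι) {a : ι → 𝓢(ℝ × E, ℝ)}
    (ha : ∀ j, IsAmplitude ρ p (a j)) : IsAmplitude ρ p (∑ j ∈ s, a j) :=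
  Finset.sum_induction a (IsAmplitude ρ p) (fun _ _ => add) (zero ρ p) fun j _ => ha j

theorem mulT (ha : IsAmplitude ρ p a) : IsAmplitude ρ p (mulT a) := by
  refine ⟨fun t => ?_, fun t x hx => by rw [mulT_apply, ha.support t x hx, mul_zero]⟩
  simp only [mulT_apply]
  exact (ha.vanishes t).const_mul t

theorem mulX (ha : IsAmplitude ρ p a) {h : E → ℝ} (hh : VanishesToOrder r h) :
    IsAmplitude ρ (r + p) (mulX h a) := by
  have hmul (t : ℝ) (x : E) := mulX_apply a t x hh.hasTemperateGrowth
  refine ⟨fun t => ?_, fun t x hx => by rw [hmul, ha.support t x hx, mul_zero]⟩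
  simp only [hmul]
  exact hh.mul (ha.vanishes t)

theorem exists_bound (ha : IsAmplitude ρ p a) : ∃ C, 0 ≤ C ∧ ∀ t x, |a (t, x)| ≤ C * ‖x‖ ^ p := by
  obtain ⟨C, hC₀, hC⟩ := a.decay 0 p
  refine ⟨C, hC₀.le, fun t x => ?_⟩
  refine norm_le_of_norm_iteratedFDeriv_le (hasTemperateGrowth_slice a t).1
    (ha.vanishes t).iteratedFDeriv_zero (fun y _ => ?_) le_rfl
  simpa using (norm_iteratedFDeriv_slice_le a t y p).trans (by simpa using hC (t, y))

end IsAmplitude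

section PartialDerivX

variable {E : Type*} [NormedAddCommGroup E] [NormedSpace ℝ E] [FiniteDimensional ℝ E]

/-- The partial derivative of `a (t, x)` in `xᵢ`. -/
noncomputable def dx (i : Fin (Module.finrank ℝ E)) (a : 𝓢(ℝ × E, ℝ)) : 𝓢(ℝ × E, ℝ) :=
  ∂_{((0 : ℝ), Module.finBasis ℝ E i)} a

variable (i : Fin (Module.finrank ℝ E)) (a : 𝓢(ℝ × E, ℝ))

theorem dx_apply (y : ℝ × E) : dx i a y = fderiv ℝ a y (0, Module.finBasis ℝ E i) :=
  SchwartzMap.lineDerivOp_apply_eq_fderiv _ _ _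

theorem partialDeriv_slice (t : ℝ) :
    partialDeriv i (fun x => a (t, x)) = fun x => dx i a (t, x) :=
  funext fun x => (fderiv_slice a t x _).trans (dx_apply i a _).symm

theorem dx_dt : dx i (dt a) = dt (dx i a) := by
  have hdt : (dt a : ℝ × E → ℝ) = fun y => fderiv ℝ a y (1, 0) := funext (dt_apply a)
  have hdx : (dx i a : ℝ × E → ℝ) = fun y => fderiv ℝ a y (0, Module.finBasis ℝ E i) :=
    funext (dx_apply i a)
  ext y
  rw [dx_apply, dt_apply, hdt, hdx, fderiv_fderiv_apply_comm (a.smooth ⊤)]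

variable {i a} {ρ : ℝ} {p : ℕ}

theorem IsAmplitude.dx (ha : IsAmplitude ρ p a) (i : Fin (Module.finrank ℝ E)) :
    IsAmplitude ρ (p - 1) (dx i a) := by
  refine ⟨fun t => ?_, fun t x hx => ?_⟩
  · rw [← partialDeriv_slice]
    exact (ha.vanishes t).partialDeriv i
  · rw [dx_apply, (eventuallyEq_zero_of_support ha.support hx).fderiv_eq]
    simp

theorem vanishesToOrder_dt_slice (ha : ∀ t, VanishesToOrder p fun x => a (t, x)) (t : ℝ) :
    VanishesToOrder p fun x => dt a (t, x) := by
  induction p generalizing a with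
  | zero => exact vanishesToOrder_zero (hasTemperateGrowth_slice _ t)
  | succ p ih =>
    refine .of_partialDeriv (hasTemperateGrowth_slice _ t) ?_ fun i => ?_
    · have haxis : a ∘ (fun s => (s, (0 : E))) = fun _ => 0 :=
        funext fun s => (ha s).apply_zero p.succ_ne_zero
      have hchain := HasFDerivAt.comp (g := a) (f := fun s => (s, (0 : E))) t
        (a.differentiable (t, 0)).hasFDerivAt (hasFDerivAt_prodMk_left t (0 : E))
      rw [haxis] at hchain
      rw [dt_apply]
      exact DFunLike.congr_fun (hchain.unique (hasFDerivAt_const 0 t)) 1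
    · rw [partialDeriv_slice, dx_dt]
      refine ih fun s => ?_
      rw [← partialDeriv_slice]
      exact (ha s).partialDeriv i

theorem IsAmplitude.dt (ha : IsAmplitude ρ p a) : IsAmplitude ρ p (dt a) := by
  refine ⟨vanishesToOrder_dt_slice ha.vanishes, fun t x hx => ?_⟩
  rw [dt_apply, (eventuallyEq_zero_of_support ha.support hx).fderiv_eq]
  simp

end PartialDerivX

/-! ### Oscillatory integrals -/

section OscInt

variable {E : Type*} [NormedAddCommGroup E] [NormedSpace ℝ E] [FiniteDimensional ℝ E]
  [MeasurableSpace E]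

/-- The integral of `a (z f(x), x) / |∇f(x)| ^ (2 b)`; the integrand is `0` at zeros of `∇f` if
`b ≠ 0`. -/
noncomputable def oscInt (μ : Measure E) (f : E → ℝ) (b : ℕ) (a : 𝓢(ℝ × E, ℝ)) (z : ℝ) : ℝ :=
  ∫ x, a (z * f x, x) / gradSq f x ^ b ∂μ

theorem oscInt_smul (μ : Measure E) (f : E → ℝ) (b : ℕ) (a : 𝓢(ℝ × E, ℝ)) (s z : ℝ) :
    oscInt μ f b (s • a) z = s * oscInt μ f b a z := by
  simp only [oscInt, smul_apply, smul_eq_mul, mul_div_assoc, integral_const_mul]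

end OscInt

namespace IsPhase

section Bounds

variable {E : Type*} [NormedAddCommGroup E] [NormedSpace ℝ E] [FiniteDimensional ℝ E]
  {f : E → ℝ} {q p b : ℕ} {ρ κ : ℝ} {a : 𝓢(ℝ × E, ℝ)}

theorem hasTemperateGrowth (hf : IsPhase f q ρ κ) : f.HasTemperateGrowth :=
  hf.vanishes.hasTemperateGrowth

theorem vanishes_partialDeriv (hf : IsPhase f q ρ κ) (i : Fin (Module.finrank ℝ E)) :
    VanishesToOrder q (partialDeriv i f) :=
  hf.vanishes.partialDeriv i

theorem vanishes_gradSq (hf : IsPhase f q ρ κ) : VanishesToOrder (2 * q) (gradSq f) :=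
  hf.vanishes.gradSq

theorem gradSq_ne_zero (hf : IsPhase f q ρ κ) {x : E} (hx : ‖x‖ ≤ ρ) (hx₀ : x ≠ 0) :
    gradSq f x ≠ 0 :=
  ((mul_pos hf.pos (pow_pos (norm_pos_iff.2 hx₀) _)).trans_le (hf.lower x hx)).ne'

theorem abs_div_gradSq_pow_le (hf : IsPhase f q ρ κ) (hpb : 2 * q * b ≤ p) {C u : ℝ} (hC : 0 ≤ C)
    {x : E} (hx : ‖x‖ ≤ ρ) (hu : |u| ≤ C * ‖x‖ ^ p) :
    |u / gradSq f x ^ b| ≤ C / κ ^ b * ‖x‖ ^ (p - 2 * q * b) := by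
  have hκ := hf.pos
  have hgrad := pow_nonneg (gradSq_nonneg f x) b
  rw [abs_div, abs_of_nonneg hgrad]
  refine div_le_of_le_mul₀ hgrad (by positivity) ?_
  calc |u| ≤ C * ‖x‖ ^ (p - 2 * q * b + 2 * q * b) := by rwa [Nat.sub_add_cancel hpb]
    _ = C / κ ^ b * ‖x‖ ^ (p - 2 * q * b) * (κ * ‖x‖ ^ (2 * q)) ^ b := by
      rw [pow_add, mul_pow, ← pow_mul]
      field_simp
    _ ≤ C / κ ^ b * ‖x‖ ^ (p - 2 * q * b) * gradSq f x ^ b := by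
      gcongr
      exact hf.lower x hx

theorem differentiable (hf : IsPhase f q ρ κ) : Differentiable ℝ f :=
  differentiable_of_hasTemperateGrowth hf.hasTemperateGrowth

theorem differentiable_gradSq (hf : IsPhase f q ρ κ) : Differentiable ℝ (gradSq f) :=
  differentiable_of_hasTemperateGrowth hf.vanishes_gradSq.hasTemperateGrowth

variable [MeasurableSpace E] [BorelSpace E]

theorem measurable_integrand (hf : IsPhase f q ρ κ) (b : ℕ) (a : 𝓢(ℝ × E, ℝ)) (z : ℝ) :
    Measurable fun x => a (z * f x, x) / gradSq f x ^ b := by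
  have hnum : Continuous fun x => a (z * f x, x) :=
    a.continuous.comp ((hf.differentiable.continuous.const_mul z).prodMk continuous_id)
  exact hnum.measurable.div (hf.differentiable_gradSq.continuous.measurable.pow_const b)

theorem exists_integrable_bound (hf : IsPhase f q ρ κ) (μ : Measure E)
    [IsFiniteMeasureOnCompacts μ] (hpb : 2 * q * b ≤ p) (ha : IsAmplitude ρ p a) :
    ∃ B : E → ℝ, Integrable B μ ∧ ∀ t x, |a (t, x) / gradSq f x ^ b| ≤ B x := by
  obtain ⟨C, hC₀, hC⟩ := ha.exists_bound
  refine ⟨(Metric.closedBall 0 ρ).indicator fun _ => C / κ ^ b * ρ ^ (p - 2 * q * b),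
    (integrable_indicator_iff measurableSet_closedBall).2
      (integrableOn_const measure_closedBall_lt_top.ne), fun t x => ?_⟩
  have hκ := hf.pos
  by_cases hx : ‖x‖ ≤ ρ
  · rw [Set.indicator_of_mem (mem_closedBall_zero_iff.2 hx)]
    exact (hf.abs_div_gradSq_pow_le hpb hC₀ hx (hC t x)).trans (by gcongr)
  · rw [Set.indicator_of_notMem (mt mem_closedBall_zero_iff.1 hx),
      ha.support t x (not_le.1 hx), zero_div, abs_zero]

variable {μ : Measure E} [IsFiniteMeasureOnCompacts μ]

theorem integrable (hf : IsPhase f q ρ κ) (hpb : 2 * q * b ≤ p) (ha : IsAmplitude ρ p a) (z : ℝ) :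
    Integrable (fun x => a (z * f x, x) / gradSq f x ^ b) μ := by
  obtain ⟨B, hB, hbound⟩ := hf.exists_integrable_bound μ hpb ha
  exact hB.mono' (hf.measurable_integrand b a z).aestronglyMeasurable
    (.of_forall fun x => hbound _ x)

theorem exists_abs_oscInt_le (hf : IsPhase f q ρ κ) (hpb : 2 * q * b ≤ p)
    (ha : IsAmplitude ρ p a) : ∃ B, ∀ z, |oscInt μ f b a z| ≤ B := by
  obtain ⟨B, hB, hbound⟩ := hf.exists_integrable_bound μ hpb ha
  refine ⟨∫ x, B x ∂μ, fun z => ?_⟩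
  rw [oscInt, ← Real.norm_eq_abs]
  exact norm_integral_le_of_norm_le hB (.of_forall fun x => hbound _ x)

theorem oscInt_add (hf : IsPhase f q ρ κ) (hpb : 2 * q * b ≤ p) {a₁ a₂ : 𝓢(ℝ × E, ℝ)}
    (ha₁ : IsAmplitude ρ p a₁) (ha₂ : IsAmplitude ρ p a₂) (z : ℝ) :
    oscInt μ f b (a₁ + a₂) z = oscInt μ f b a₁ z + oscInt μ f b a₂ z := by
  simp only [oscInt, add_apply, add_div]
  exact integral_add (hf.integrable hpb ha₁ z) (hf.integrable hpb ha₂ z)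

theorem oscInt_sum (hf : IsPhase f q ρ κ) (hpb : 2 * q * b ≤ p) {ι : Type*} (s : Finset ι)
    {a : ι → 𝓢(ℝ × E, ℝ)} (ha : ∀ j, IsAmplitude ρ p (a j)) (z : ℝ) :
    oscInt μ f b (∑ j ∈ s, a j) z = ∑ j ∈ s, oscInt μ f b (a j) z := by
  simp only [oscInt, sum_apply, Finset.sum_div]
  exact integral_finsetSum s fun j _ => hf.integrable hpb (ha j) z

theorem hasDerivAt_oscInt (hf : IsPhase f q ρ κ) (hpb : 2 * q * b ≤ p) (ha : IsAmplitude ρ p a)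
    (z : ℝ) : HasDerivAt (oscInt μ f b a) (oscInt μ f b (mulX f (dt a)) z) z := by
  have hderiv (x : E) (y : ℝ) : HasDerivAt (fun y => a (y * f x, x) / gradSq f x ^ b)
      (mulX f (dt a) (y * f x, x) / gradSq f x ^ b) y := by
    have hcurve : HasDerivAt (fun s : ℝ => (s * f x, x)) (f x • ((1 : ℝ), (0 : E))) y := by
      simpa using (hasDerivAt_mul_const (x := y) (f x)).prodMk (hasDerivAt_const y x)
    have hcomp := (a.differentiable (y * f x, x)).hasFDerivAt.comp_hasDerivAt y hcurve
    rw [map_smul, smul_eq_mul, ← dt_apply, ← mulX_apply _ _ _ hf.hasTemperateGrowth] at hcomp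
    exact hcomp.div_const _
  have hamp : IsAmplitude ρ p (mulX f (dt a)) := (ha.dt.mulX hf.vanishes).mono (by omega)
  obtain ⟨B, hB, hbound⟩ := hf.exists_integrable_bound μ hpb hamp
  exact (hasDerivAt_integral_of_dominated_loc_of_deriv_le univ_mem
    (.of_forall fun y => (hf.measurable_integrand b a y).aestronglyMeasurable)
    (hf.integrable hpb ha z) (hf.measurable_integrand b _ z).aestronglyMeasurable
    (.of_forall fun x y _ => hbound _ x) hB (.of_forall fun x y _ => hderiv x y)).2

end Bounds

end IsPhase

/-! ### Integration by parts -/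

section PartialDeriv

variable {E : Type*} [NormedAddCommGroup E] [NormedSpace ℝ E]

theorem differentiableAt_div_pow {u g : E → ℝ} {x : E} (hu : DifferentiableAt ℝ u x)
    (hg : DifferentiableAt ℝ g x) (hx : g x ≠ 0) (b : ℕ) :
    DifferentiableAt ℝ (fun y => u y / g y ^ b) x := by
  simpa only [div_eq_mul_inv] using hu.fun_mul ((hg.fun_pow b).fun_inv (pow_ne_zero b hx))

theorem differentiable_comp_phase (c : 𝓢(ℝ × E, ℝ)) {f : E → ℝ} (hf : Differentiable ℝ f)
    (z : ℝ) : Differentiable ℝ fun x => c (z * f x, x) :=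
  c.differentiable.comp ((hf.const_mul z).prodMk differentiable_id)

variable [FiniteDimensional ℝ E]

theorem partialDeriv_mul_div_pow {u v g : E → ℝ} {x : E} (hu : DifferentiableAt ℝ u x)
    (hv : DifferentiableAt ℝ v x) (hg : DifferentiableAt ℝ g x) (hx : g x ≠ 0) (b : ℕ)
    (i : Fin (Module.finrank ℝ E)) :
    partialDeriv i (fun y => u y * v y / g y ^ (b + 1)) x
      = (g x * (partialDeriv i u x * v x + u x * partialDeriv i v x)
          - (b + 1) * (u x * v x) * partialDeriv i g x) / g x ^ (b + 2) := by
  have hline {h : E → ℝ} (hh : DifferentiableAt ℝ h x) :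
      HasDerivAt (fun s : ℝ => h (x + s • Module.finBasis ℝ E i)) (partialDeriv i h x) 0 :=
    hh.hasFDerivAt.hasLineDerivAt _
  have hquot := ((hline hu).fun_mul (hline hv)).fun_div ((hline hg).fun_pow (b + 1))
    (by simpa using pow_ne_zero (b + 1) hx)
  have hdiff : DifferentiableAt ℝ (fun y => u y * v y / g y ^ (b + 1)) x :=
    differentiableAt_div_pow (hu.fun_mul hv) hg hx _
  rw [(hline hdiff).unique hquot]
  simp only [zero_smul, add_zero, Nat.add_sub_cancel]
  push_cast
  field_simp
  ring

theorem integral_partialDeriv_eq_zero [MeasurableSpace E] [BorelSpace E] {μ : Measure E}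
    [μ.IsAddHaarMeasure] {φ : E → ℝ} {i : Fin (Module.finrank ℝ E)} (hφ : Differentiable ℝ φ)
    (hint : Integrable φ μ) (hderiv : Integrable (partialDeriv i φ) μ) :
    ∫ x, partialDeriv i φ x ∂μ = 0 := by
  simpa [partialDeriv] using integral_mul_fderiv_eq_neg_fderiv_mul_of_integrable
    (f := fun _ => (1 : ℝ)) (v := Module.finBasis ℝ E i) (by simp)
    (by simpa [partialDeriv] using! hderiv) (by simpa using hint)
    (fun x _ => differentiableAt_const _) (fun x _ => hφ x)

theorem partialDeriv_comp_phase (c : 𝓢(ℝ × E, ℝ)) {f : E → ℝ} {x : E}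
    (hf : DifferentiableAt ℝ f x) (z : ℝ) (i : Fin (Module.finrank ℝ E)) :
    partialDeriv i (fun x => c (z * f x, x)) x
      = z * partialDeriv i f x * dt c (z * f x, x) + dx i c (z * f x, x) := by
  have hchain := HasFDerivAt.comp (g := c) (f := fun x => (z * f x, id x)) x
    (c.differentiable (z * f x, x)).hasFDerivAt
    ((hf.hasFDerivAt.const_mul z).prodMk (hasFDerivAt_id x))
  have hsplit : ((z * partialDeriv i f x, Module.finBasis ℝ E i) : ℝ × E)
      = (z * partialDeriv i f x) • ((1 : ℝ), (0 : E)) + ((0 : ℝ), Module.finBasis ℝ E i) := by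
    ext <;> simp
  calc partialDeriv i (fun x => c (z * f x, x)) x
      = fderiv ℝ c (z * f x, x) (z * partialDeriv i f x, Module.finBasis ℝ E i) :=
        DFunLike.congr_fun hchain.fderiv _
    _ = z * partialDeriv i f x * dt c (z * f x, x) + dx i c (z * f x, x) := by
        rw [hsplit, map_add, map_smul, smul_eq_mul, dt_apply, dx_apply]

/-- The part of `∂ᵢ (v c(z f, ·) / |∇f| ^ (2 (b + 1)))` that does not involve `∂c / ∂t`, multiplied
by `|∇f| ^ (2 (b + 2))`. -/
noncomputable def flux (f : E → ℝ) (b : ℕ) (i : Fin (Module.finrank ℝ E)) (v : E → ℝ)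
    (c : 𝓢(ℝ × E, ℝ)) : 𝓢(ℝ × E, ℝ) :=
  mulX (fun x => gradSq f x * partialDeriv i v x - (b + 1) * (v x * partialDeriv i (gradSq f) x)) c
    + mulX (fun x => gradSq f x * v x) (dx i c)

end PartialDeriv

namespace IsPhase

variable {E : Type*} [NormedAddCommGroup E] [NormedSpace ℝ E] [FiniteDimensional ℝ E]
  {f v : E → ℝ} {q w p b : ℕ} {ρ κ : ℝ} {c : 𝓢(ℝ × E, ℝ)}

section Flux

variable (b : ℕ) (i : Fin (Module.finrank ℝ E))

theorem vanishes_flux_coeff (hf : IsPhase f q ρ κ) (hv : VanishesToOrder w v) :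
    VanishesToOrder (2 * q + w - 1) fun x =>
      gradSq f x * partialDeriv i v x - (b + 1) * (v x * partialDeriv i (gradSq f) x) :=
  ((hf.vanishes_gradSq.mul (hv.partialDeriv i)).mono (by omega)).sub
    (((hv.mul (hf.vanishes_gradSq.partialDeriv i)).mono (by omega)).const_mul _)

theorem flux_apply (hf : IsPhase f q ρ κ) (hv : VanishesToOrder w v) (c : 𝓢(ℝ × E, ℝ)) (t : ℝ)
    (x : E) : flux f b i v c (t, x)
      = (gradSq f x * partialDeriv i v x - (b + 1) * (v x * partialDeriv i (gradSq f) x)) * c (t, x)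
        + gradSq f x * v x * dx i c (t, x) := by
  rw [flux, add_apply, mulX_apply _ _ _ (hf.vanishes_flux_coeff b i hv).hasTemperateGrowth,
    mulX_apply _ _ _ (hf.vanishes_gradSq.mul hv).hasTemperateGrowth]

theorem isAmplitude_flux (hf : IsPhase f q ρ κ) (hv : VanishesToOrder w v)
    (hc : IsAmplitude ρ p c) : IsAmplitude ρ (2 * q + w + p - 1) (flux f b i v c) :=
  ((hc.mulX (hf.vanishes_flux_coeff b i hv)).mono (by omega)).add
    (((hc.dx i).mulX (hf.vanishes_gradSq.mul hv)).mono (by omega))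

theorem partialDeriv_quotient (hf : IsPhase f q ρ κ) (hv : VanishesToOrder w v)
    (c : 𝓢(ℝ × E, ℝ)) (z : ℝ) {x : E} (hx : gradSq f x ≠ 0) :
    partialDeriv i (fun x => v x * c (z * f x, x) / gradSq f x ^ (b + 1)) x
      = z * (mulX (fun x => v x * partialDeriv i f x) (dt c) (z * f x, x) / gradSq f x ^ (b + 1))
        + flux f b i v c (z * f x, x) / gradSq f x ^ (b + 2) := by
  rw [partialDeriv_mul_div_pow (differentiable_of_hasTemperateGrowth hv.hasTemperateGrowth x)
      (differentiable_comp_phase c hf.differentiable z x) (hf.differentiable_gradSq x) hx,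
    partialDeriv_comp_phase c (hf.differentiable x), hf.flux_apply b i hv,
    mulX_apply _ _ _ (hv.mul (hf.vanishes_partialDeriv i)).hasTemperateGrowth]
  field_simp
  ring

end Flux

theorem differentiable_quotient (hf : IsPhase f q ρ κ) (hv : VanishesToOrder w v)
    (hc : IsAmplitude ρ p c) {z : ℝ}
    (hzero : DifferentiableAt ℝ (fun x => v x * c (z * f x, x) / gradSq f x ^ b) 0) :
    Differentiable ℝ fun x => v x * c (z * f x, x) / gradSq f x ^ b := by
  intro x
  rcases lt_or_ge ρ ‖x‖ with hx | hx
  · refine (differentiableAt_const (0 : ℝ)).congr_of_eventuallyEq ?_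
    filter_upwards [(isOpen_lt continuous_const continuous_norm).mem_nhds hx] with y hy
    rw [hc.support _ y hy, mul_zero, zero_div]
  · rcases eq_or_ne x 0 with rfl | hx₀
    · exact hzero
    · exact differentiableAt_div_pow
        ((differentiable_of_hasTemperateGrowth hv.hasTemperateGrowth x).fun_mul
          (differentiable_comp_phase c hf.differentiable z x))
        (hf.differentiable_gradSq x) (hf.gradSq_ne_zero hx hx₀) b

theorem differentiableAt_zero_quotient (hf : IsPhase f q ρ κ) (hv : VanishesToOrder w v)
    (hc : IsAmplitude ρ p c) (hwp : 2 * q * b + 2 ≤ w + p) (z : ℝ) :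
    DifferentiableAt ℝ (fun x => v x * c (z * f x, x) / gradSq f x ^ b) 0 := by
  obtain ⟨C, hC₀, hC⟩ := (hc.mulX hv).exists_bound
  refine (IsBigO.hasFDerivAt (𝕜 := ℝ) (n := w + p - 2 * q * b) (.of_bound (C / κ ^ b) ?_)
    (by omega)).differentiableAt
  filter_upwards [Metric.closedBall_mem_nhds (0 : E) hf.radius_pos] with x hx
  have hbound := hf.abs_div_gradSq_pow_le (b := b) (by omega) hC₀ (mem_closedBall_zero_iff.1 hx)
    (hC (z * f x) x)
  rw [mulX_apply _ _ _ hv.hasTemperateGrowth] at hbound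
  simpa only [sub_zero, Real.norm_eq_abs, abs_norm, abs_pow] using hbound

section Integral

variable [Nontrivial E] [MeasurableSpace E] [BorelSpace E] {μ : Measure E} [μ.IsAddHaarMeasure]

theorem ae_eq_of_support (hf : IsPhase f q ρ κ) {F : Type*} {φ ψ : E → F}
    (hout : ∀ x, ρ < ‖x‖ → φ x = ψ x) (hin : ∀ x, gradSq f x ≠ 0 → φ x = ψ x) : φ =ᵐ[μ] ψ := by
  filter_upwards [Measure.ae_ne μ (0 : E)] with x hx
  rcases lt_or_ge ρ ‖x‖ with hρ | hρ
  · exact hout x hρ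
  · exact hin x (hf.gradSq_ne_zero hρ hx)

theorem mul_oscInt_eq_neg_oscInt_flux (hf : IsPhase f q ρ κ) (hv : VanishesToOrder w v)
    (hc : IsAmplitude ρ p c) (hwp : 2 * q * (b + 1) + 1 ≤ w + p) (z : ℝ)
    (i : Fin (Module.finrank ℝ E))
    (hzero : DifferentiableAt ℝ (fun x => v x * c (z * f x, x) / gradSq f x ^ (b + 1)) 0) :
    z * oscInt μ f (b + 1) (mulX (fun x => v x * partialDeriv i f x) (dt c)) z
      = - oscInt μ f (b + 2) (flux f b i v c) z := by
  set φ : E → ℝ := fun x => v x * c (z * f x, x) / gradSq f x ^ (b + 1)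
  have horder : 2 * q * (b + 2) = 2 * q * (b + 1) + 2 * q := by ring
  have hmain := hc.dt.mulX (hv.mul (hf.vanishes_partialDeriv i))
  have hflux := hf.isAmplitude_flux b i hv hc
  have hmain_int := (hf.integrable (μ := μ) (b := b + 1) (by omega) hmain z).const_mul z
  have hflux_int := hf.integrable (μ := μ) (b := b + 2) (by omega) hflux z
  have hφ : Differentiable ℝ φ := hf.differentiable_quotient hv hc hzero
  have hφ_int : Integrable φ μ := by
    simpa only [mulX_apply _ _ _ hv.hasTemperateGrowth] using
      hf.integrable (b := b + 1) (by omega) (hc.mulX hv) z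
  have hderiv : partialDeriv i φ =ᵐ[μ] _ := hf.ae_eq_of_support
    (fun x hx => ?_) fun x hx => hf.partialDeriv_quotient b i hv c z hx
  · have hzero := integral_partialDeriv_eq_zero hφ hφ_int
      ((hmain_int.add hflux_int).congr hderiv.symm)
    rw [integral_congr_ae hderiv, integral_add hmain_int hflux_int, integral_const_mul] at hzero
    exact eq_neg_of_add_eq_zero_left hzero
  · have hlocal : φ =ᶠ[𝓝 x] fun _ => 0 := by
      filter_upwards [(isOpen_lt continuous_const continuous_norm).mem_nhds hx] with y hy
      simp only [φ, hc.support _ y hy, mul_zero, zero_div]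
    rw [partialDeriv, hlocal.fderiv_eq, hmain.support _ x hx, hflux.support _ x hx]
    simp

end Integral

end IsPhase

/-! ### The radial field -/

section RadialField

variable {E : Type*} [NormedAddCommGroup E] [NormedSpace ℝ E]

/-- The defect in Euler's identity for `f` at degree `q + 1`. -/
noncomputable def eulerDefect (f : E → ℝ) (q : ℕ) : E → ℝ :=
  fun x => (q + 1) * f x - fderiv ℝ f x x

variable [FiniteDimensional ℝ E]

/-- The components of `|∇f|² x + R ∇f`, where `R` is the Euler defect of `f`: a vector field along
which the derivative of `f` is `(q + 1) f |∇f|²`. -/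
noncomputable def radialField (f : E → ℝ) (q : ℕ) (i : Fin (Module.finrank ℝ E)) : E → ℝ :=
  fun x => coord i x * gradSq f x + eulerDefect f q x * partialDeriv i f x

theorem sum_radialField_mul_partialDeriv (f h : E → ℝ) (q : ℕ) (x : E) :
    ∑ i, radialField f q i x * partialDeriv i h x
      = gradSq f x * fderiv ℝ h x x
        + eulerDefect f q x * ∑ i, partialDeriv i f x * partialDeriv i h x := by
  simp only [← sum_coord_smul_partialDeriv, radialField, smul_eq_mul, Finset.mul_sum,
    ← Finset.sum_add_distrib]
  exact Finset.sum_congr rfl fun i _ => by ring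

theorem sum_radialField_mul_partialDeriv_self (f : E → ℝ) (q : ℕ) (x : E) :
    ∑ i, radialField f q i x * partialDeriv i f x = gradSq f x * ((q + 1) * f x) := by
  have hgrad : ∑ i, partialDeriv i f x * partialDeriv i f x = gradSq f x := by
    simp only [gradSq, sq]
  rw [sum_radialField_mul_partialDeriv, hgrad, eulerDefect]
  ring

end RadialField

namespace IsPhase

variable {E : Type*} [NormedAddCommGroup E] [NormedSpace ℝ E] [FiniteDimensional ℝ E]
  {f : E → ℝ} {q p b : ℕ} {ρ κ : ℝ} {a : 𝓢(ℝ × E, ℝ)}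

theorem vanishes_eulerDefect (hf : IsPhase f q ρ κ) :
    VanishesToOrder (q + 2) (eulerDefect f q) := by
  have hsub := hf.vanishes.fderiv_apply_self_sub.const_mul (-1)
  push_cast [smul_eq_mul, neg_one_mul, neg_sub] at hsub
  exact hsub

theorem vanishes_radialField (hf : IsPhase f q ρ κ) (i : Fin (Module.finrank ℝ E)) :
    VanishesToOrder (2 * q + 1) (radialField f q i) :=
  (((VanishesToOrder.continuousLinearMap (coord i)).mul hf.vanishes_gradSq).mono (by omega)).add
    ((hf.vanishes_eulerDefect.mul (hf.vanishes_partialDeriv i)).mono (by omega))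

theorem partialDeriv_radialField (hf : IsPhase f q ρ κ) (i : Fin (Module.finrank ℝ E)) (x : E) :
    partialDeriv i (radialField f q i) x
      = gradSq f x + coord i x * partialDeriv i (gradSq f) x
        + (partialDeriv i (eulerDefect f q) x * partialDeriv i f x
          + eulerDefect f q x * partialDeriv i (partialDeriv i f) x) := by
  have hdefect : DifferentiableAt ℝ (eulerDefect f q) x :=
    differentiable_of_hasTemperateGrowth hf.vanishes_eulerDefect.hasTemperateGrowth x
  have hpartial : DifferentiableAt ℝ (partialDeriv i f) x :=
    differentiable_of_hasTemperateGrowth (hf.vanishes_partialDeriv i).hasTemperateGrowth x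
  have hderiv : HasFDerivAt (radialField f q i) _ x :=
    ((coord i).hasFDerivAt.mul (hf.differentiable_gradSq x).hasFDerivAt).add
      (hdefect.hasFDerivAt.mul hpartial.hasFDerivAt)
  rw [partialDeriv, hderiv.fderiv]
  simp only [partialDeriv, add_apply, smul_apply, coord_finBasis, if_true, smul_eq_mul]
  ring

theorem vanishes_divergence_radialField_sub (hf : IsPhase f q ρ κ) :
    VanishesToOrder (2 * q + 1) fun x => ∑ i, partialDeriv i (radialField f q i) x
      - (Module.finrank ℝ E + 2 * q) * gradSq f x := by
  have hdefect := hf.vanishes_eulerDefect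
  have hremainder : VanishesToOrder (2 * q + 1) fun x =>
      ∑ i, (partialDeriv i (eulerDefect f q) x * partialDeriv i f x
        + eulerDefect f q x * partialDeriv i (partialDeriv i f) x) :=
    .sum _ fun i => (((hdefect.partialDeriv i).mul (hf.vanishes_partialDeriv i)).mono
      (by omega)).add ((hdefect.mul ((hf.vanishes_partialDeriv i).partialDeriv i)).mono (by omega))
  convert hf.vanishes_gradSq.fderiv_apply_self_sub.add hremainder using 2 with x
  simp only [hf.partialDeriv_radialField, Finset.sum_add_distrib, ← sum_coord_smul_partialDeriv,
    Finset.sum_const, Finset.card_univ, Fintype.card_fin, nsmul_eq_mul, smul_eq_mul]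
  push_cast
  ring

theorem vanishes_sum_radialField_mul_partialDeriv_sub (hf : IsPhase f q ρ κ) {h : E → ℝ}
    (hh : VanishesToOrder p h) :
    VanishesToOrder (2 * q + p + 1) fun x =>
      ∑ i, radialField f q i x * partialDeriv i h x - p * (gradSq f x * h x) := by
  have hremainder : VanishesToOrder (2 * q + p + 1) fun x =>
      eulerDefect f q x * ∑ i, partialDeriv i f x * partialDeriv i h x :=
    (hf.vanishes_eulerDefect.mul (.sum _ fun i =>
      (hf.vanishes_partialDeriv i).mul (hh.partialDeriv i))).mono (by omega)
  have hmain := hf.vanishes_gradSq.mul hh.fderiv_apply_self_sub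
  convert (hmain.mono (by omega)).add hremainder using 2 with x
  rw [sum_radialField_mul_partialDeriv, smul_eq_mul]
  ring

theorem sum_flux_radialField_apply (hf : IsPhase f q ρ κ) (b : ℕ) (a : 𝓢(ℝ × E, ℝ)) (t : ℝ)
    (x : E) : (∑ i, flux f b i (radialField f q i) a) (t, x)
      = gradSq f x * (∑ i, partialDeriv i (radialField f q i) x) * a (t, x)
        - (b + 1) * (∑ i, radialField f q i x * partialDeriv i (gradSq f) x) * a (t, x)
        + gradSq f x * ∑ i, radialField f q i x * partialDeriv i (fun x => a (t, x)) x := by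
  simp only [sum_apply, hf.flux_apply b _ (hf.vanishes_radialField _), partialDeriv_slice,
    Finset.mul_sum, Finset.sum_mul, ← Finset.sum_sub_distrib, ← Finset.sum_add_distrib]
  exact Finset.sum_congr rfl fun i _ => by ring

/-- At leading order the factor `dim E + i` is the sum of the divergence `dim E + 2 q` of the field
`x + R ∇f / |∇f|²`, scaled by `|∇f|²`, of the degree `-2 q (b + 1)` of the denominator, and of the
order `p` of the amplitude. -/
theorem isAmplitude_sub_sum_flux_radialField (hf : IsPhase f q ρ κ) {i : ℕ}
    (hp : p = i + 2 * q * b) (ha : IsAmplitude ρ p a) :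
    IsAmplitude ρ (4 * q + p + 1)
      (mulX (fun x => gradSq f x * (gradSq f x * (Module.finrank ℝ E + i))) a
        - ∑ j, flux f b j (radialField f q j) a) := by
  have hgrad := hf.vanishes_gradSq
  have hconst : VanishesToOrder 0 fun _ : E => (Module.finrank ℝ E + i : ℝ) :=
    vanishesToOrder_zero (.const _)
  have hmul (t : ℝ) (x : E) :=
    mulX_apply a t x (hgrad.mul (hgrad.mul hconst)).hasTemperateGrowth
  refine ⟨fun t => ?_, fun t x hx => ?_⟩
  · have hslice := ha.vanishes t
    have hdiv := hgrad.mul (hf.vanishes_divergence_radialField_sub.mul hslice)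
    have hquot := (hf.vanishes_sum_radialField_mul_partialDeriv_sub hgrad).mul hslice
    have htransport := hgrad.mul (hf.vanishes_sum_radialField_mul_partialDeriv_sub hslice)
    convert ((hquot.mono (by omega)).const_mul (b + 1)).sub
      ((hdiv.mono (show 4 * q + p + 1 ≤ _ by omega)).add (htransport.mono (by omega)))
      using 2 with x
    rw [sub_apply, hmul, hf.sum_flux_radialField_apply, hp]
    push_cast
    ring
  · rw [sub_apply, hmul, ha.support t x hx, (IsAmplitude.sum _ fun j =>
      hf.isAmplitude_flux b j (hf.vanishes_radialField j) ha).support t x hx, mul_zero, sub_zero]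

theorem differentiableAt_zero_radialField_quotient (hf : IsPhase f q ρ κ)
    (ha : IsAmplitude ρ 0 a) (z : ℝ) (i : Fin (Module.finrank ℝ E)) :
    DifferentiableAt ℝ (fun x => radialField f q i x * a (z * f x, x) / gradSq f x ^ 1) 0 := by
  have hdefect := hf.differentiableAt_zero_quotient (b := 1)
    (hf.vanishes_eulerDefect.mul (hf.vanishes_partialDeriv i)) ha (by omega) z
  have hcoord : DifferentiableAt ℝ (fun x => coord i x * a (z * f x, x)) 0 :=
    (coord i).differentiableAt.fun_mul (differentiable_comp_phase a hf.differentiable z 0)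
  refine (hcoord.fun_add hdefect).congr_of_eventuallyEq ?_
  filter_upwards [Metric.closedBall_mem_nhds (0 : E) hf.radius_pos] with x hx
  simp only [radialField, pow_one]
  rcases eq_or_ne x 0 with rfl | hx₀
  · simp [hf.vanishes_eulerDefect.apply_zero]
  · have hne := hf.gradSq_ne_zero (mem_closedBall_zero_iff.1 hx) hx₀
    field_simp

theorem differentiableAt_zero_radialField_quotient_of_order (hf : IsPhase f q ρ κ) {i : ℕ}
    (hp : p = i + 2 * q * b) (ha : IsAmplitude ρ p a) (hbi : b = 0 ∨ 1 ≤ i) (z : ℝ)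
    (j : Fin (Module.finrank ℝ E)) :
    DifferentiableAt ℝ
      (fun x => radialField f q j x * a (z * f x, x) / gradSq f x ^ (b + 1)) 0 := by
  rcases i.eq_zero_or_pos with rfl | hi
  · obtain rfl : b = 0 := by omega
    exact hf.differentiableAt_zero_radialField_quotient (ha.mono p.zero_le) z j
  · have horder : 2 * q * (b + 1) = 2 * q * b + 2 * q := by ring
    exact hf.differentiableAt_zero_quotient (hf.vanishes_radialField j) ha (by omega) z

section Integral

variable [Nontrivial E] [MeasurableSpace E] [BorelSpace E] {μ : Measure E} [μ.IsAddHaarMeasure]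

theorem oscInt_mulX_gradSq_mul (hf : IsPhase f q ρ κ) (ha : IsAmplitude ρ p a) {u : E → ℝ}
    (hu : u.HasTemperateGrowth) (b : ℕ) (z : ℝ) :
    oscInt μ f (b + 1) (mulX (fun x => gradSq f x * u x) a) z = oscInt μ f b (mulX u a) z := by
  refine integral_congr_ae (hf.ae_eq_of_support (fun x hx => ?_) fun x hx => ?_)
  all_goals rw [mulX_apply _ _ _ hu,
    mulX_apply _ _ _ (hf.vanishes_gradSq.hasTemperateGrowth.fun_mul hu)]
  · simp only [ha.support _ x hx, mul_zero, zero_div]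
  · field_simp
    ring

theorem mul_oscInt_eq_neg_oscInt_sum_flux (hf : IsPhase f q ρ κ) {w : ℕ}
    {v : Fin (Module.finrank ℝ E) → E → ℝ} (hv : ∀ i, VanishesToOrder w (v i))
    (ha : IsAmplitude ρ p a) (hwp : 2 * q * (b + 1) + 1 ≤ w + p) {z : ℝ}
    (hzero : ∀ i, DifferentiableAt ℝ (fun x => v i x * a (z * f x, x) / gradSq f x ^ (b + 1)) 0)
    {u : E → ℝ} (hu : u.HasTemperateGrowth)
    (huv : ∀ x, ∑ i, v i x * partialDeriv i f x = gradSq f x * u x) :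
    z * oscInt μ f b (mulX u (dt a)) z = - oscInt μ f (b + 2) (∑ i, flux f b i (v i) a) z := by
  have horder : 2 * q * (b + 2) = 2 * q * (b + 1) + 2 * q := by ring
  have hvf (i) := (hv i).mul (hf.vanishes_partialDeriv i)
  have hsum : mulX (fun x => gradSq f x * u x) (dt a)
      = ∑ i, mulX (fun x => v i x * partialDeriv i f x) (dt a) := by
    ext ⟨t, x⟩
    rw [mulX_apply _ _ _ (hf.vanishes_gradSq.hasTemperateGrowth.fun_mul hu), ← huv, sum_apply,
      Finset.sum_mul]
    exact Finset.sum_congr rfl fun i _ => (mulX_apply _ _ _ (hvf i).hasTemperateGrowth).symm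
  rw [← hf.oscInt_mulX_gradSq_mul ha.dt hu, hsum,
    hf.oscInt_sum (by omega) _ fun i => ha.dt.mulX (hvf i),
    hf.oscInt_sum (by omega) _ fun i => hf.isAmplitude_flux b i (hv i) ha, Finset.mul_sum,
    ← Finset.sum_neg_distrib]
  exact Finset.sum_congr rfl fun i _ =>
    hf.mul_oscInt_eq_neg_oscInt_flux (hv i) ha hwp z i (hzero i)

theorem exists_gradient_step (hf : IsPhase f q ρ κ) (ha : IsAmplitude ρ p a)
    (hp : 2 * q * b + q + 2 ≤ p) :
    ∃ a', IsAmplitude ρ (3 * q + p - 1) a' ∧ ∀ z,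
      z * (z * oscInt μ f b (mulX f (dt a)) z + oscInt μ f b a z) = oscInt μ f (b + 2) a' z := by
  have horder : 2 * q * (b + 1) = 2 * q * b + 2 * q := by ring
  have hone : Function.HasTemperateGrowth fun _ : E => (1 : ℝ) := .const 1
  refine ⟨(-1 : ℝ) • ∑ i, flux f b i (partialDeriv i f) (mulT a), (IsAmplitude.sum _ fun i =>
    (hf.isAmplitude_flux b i (hf.vanishes_partialDeriv i) ha.mulT).mono (by omega)).smul _,
    fun z => ?_⟩
  have hparts := hf.mul_oscInt_eq_neg_oscInt_sum_flux (μ := μ) (b := b)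
    hf.vanishes_partialDeriv ha.mulT (by omega) (fun i =>
      hf.differentiableAt_zero_quotient (hf.vanishes_partialDeriv i) ha.mulT (by omega) z)
    hone fun x => by simp only [mul_one, gradSq, sq]
  have hamp : IsAmplitude ρ p (mulX f (dt a)) := (ha.dt.mulX hf.vanishes).mono (by omega)
  rw [oscInt_smul, neg_one_mul, ← hparts, ← oscInt_smul,
    ← hf.oscInt_add (by omega) (hamp.smul z) ha]
  congr 1
  refine integral_congr_ae (.of_forall fun x => ?_)
  simp only [add_apply, smul_apply, smul_eq_mul, mulX_apply _ _ _ hf.hasTemperateGrowth,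
    mulX_apply _ _ _ hone, dt_mulT]
  ring

theorem exists_radial_step (hf : IsPhase f q ρ κ) {i : ℕ} (hp : p = i + 2 * q * b)
    (ha : IsAmplitude ρ p a) (hbi : b = 0 ∨ 1 ≤ i) :
    ∃ a', IsAmplitude ρ (4 * q + p + 1) a' ∧ ∀ z,
      (q + 1) * (z * oscInt μ f b (mulX f (dt a)) z)
        + (Module.finrank ℝ E + i) * oscInt μ f b a z = oscInt μ f (b + 2) a' z := by
  have horder₁ : 2 * q * (b + 1) = 2 * q * b + 2 * q := by ring
  have horder₂ : 2 * q * (b + 2) = 2 * q * b + 4 * q := by ring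
  set d : ℝ := Module.finrank ℝ E + i
  refine ⟨_, hf.isAmplitude_sub_sum_flux_radialField hp ha, fun z => ?_⟩
  have hgrad := hf.vanishes_gradSq
  have hconst : VanishesToOrder 0 fun _ : E => d := vanishesToOrder_zero (.const d)
  have hu := hf.vanishes.const_mul ((q : ℝ) + 1)
  have hparts := hf.mul_oscInt_eq_neg_oscInt_sum_flux (μ := μ) (b := b) hf.vanishes_radialField ha
    (by omega) (hf.differentiableAt_zero_radialField_quotient_of_order hp ha hbi z)
    hu.hasTemperateGrowth (sum_radialField_mul_partialDeriv_self f q)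
  have hmain : IsAmplitude ρ (4 * q + p) (mulX (fun x => gradSq f x * (gradSq f x * d)) a) :=
    (ha.mulX (hgrad.mul (hgrad.mul hconst))).mono (by omega)
  have hflux : IsAmplitude ρ (4 * q + p) (∑ j, flux f b j (radialField f q j) a) :=
    .sum _ fun j => (hf.isAmplitude_flux b j (hf.vanishes_radialField j) ha).mono (by omega)
  have hsmul : mulX (fun x => ((q : ℝ) + 1) * f x) (dt a) = ((q : ℝ) + 1) • mulX f (dt a) := by
    ext ⟨t, x⟩
    simp only [smul_apply, smul_eq_mul, mulX_apply _ _ _ hu.hasTemperateGrowth,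
      mulX_apply _ _ _ hf.hasTemperateGrowth, mul_assoc]
  have hmulX_const : mulX (fun _ => d) a = d • a := by
    ext ⟨t, x⟩
    rw [mulX_apply _ _ _ hconst.hasTemperateGrowth, smul_apply, smul_eq_mul]
  rw [sub_eq_add_neg, ← neg_one_smul ℝ, hf.oscInt_add (by omega) hmain (hflux.smul _), oscInt_smul,
    neg_one_mul, ← hparts, hsmul, oscInt_smul,
    hf.oscInt_mulX_gradSq_mul ha (hgrad.mul hconst).hasTemperateGrowth,
    hf.oscInt_mulX_gradSq_mul ha hconst.hasTemperateGrowth, hmulX_const, oscInt_smul]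
  ring

end Integral

end IsPhase

/-! ### Expansions of solutions of Euler equations -/

theorem norm_sub_le_of_norm_deriv_le_rpow {w w' : ℝ → ℝ} {C Z β : ℝ} (hZ : 0 < Z) (hβ : β ≠ 0)
    (hw : ∀ z, 0 < z → HasDerivAt w (w' z) z) (hbound : ∀ z, Z ≤ z → ‖w' z‖ ≤ C * z ^ (-β - 1))
    {y z : ℝ} (hy : Z ≤ y) (hyz : y ≤ z) : ‖w z - w y‖ ≤ C / β * (y ^ (-β) - z ^ (-β)) := by
  have hpos {x : ℝ} (hx : y ≤ x) : 0 < x := hZ.trans_le (hy.trans hx)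
  have hmajorant (x : ℝ) (hx : y ≤ x) :
      HasDerivAt (fun x => C / β * (y ^ (-β) - x ^ (-β))) (C * x ^ (-β - 1)) x := by
    refine (((Real.hasDerivAt_rpow_const (Or.inl (hpos hx).ne')).const_sub _).const_mul
      (C / β)).congr_deriv ?_
    field_simp
  exact image_norm_le_of_norm_deriv_right_le_deriv_boundary'
    (fun x hx => ((hw x (hpos hx.1)).sub_const (w y)).continuousAt.continuousWithinAt)
    (fun x hx => ((hw x (hpos hx.1)).sub_const (w y)).hasDerivWithinAt)
    (by simp)
    (fun x hx => (hmajorant x hx.1).continuousAt.continuousWithinAt)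
    (fun x hx => (hmajorant x hx.1).hasDerivWithinAt)
    (fun x hx => hbound x (hy.trans hx.1)) (Set.right_mem_Icc.2 hyz)

theorem exists_norm_sub_le_of_norm_sub_le {w b : ℝ → ℝ} {Z : ℝ}
    (hw : ∀ y z, Z ≤ y → y ≤ z → ‖w z - w y‖ ≤ b y) (hb : Tendsto b atTop (𝓝 0)) :
    ∃ c, ∀ y, Z ≤ y → ‖w y - c‖ ≤ b y := by
  have hmax : Tendsto (max Z) atTop atTop := tendsto_atTop_mono (le_max_right Z) tendsto_id
  have hcauchy : CauchySeq fun z => w (max Z z) :=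
    cauchySeq_of_le_tendsto_0' (fun z => b (max Z z)) (fun y z hyz => by
      rw [dist_comm, dist_eq_norm]
      exact hw _ _ (le_max_left Z y) (max_le_max_left Z hyz)) (hb.comp hmax)
  obtain ⟨c, hc⟩ := cauchySeq_tendsto_of_complete hcauchy
  refine ⟨c, fun y hy => le_of_tendsto (tendsto_const_nhds.sub hc).norm ?_⟩
  filter_upwards [eventually_ge_atTop y] with z hz
  rw [max_eq_right (hy.trans hz), norm_sub_rev]
  exact hw y z hy hz

theorem exists_sub_const_isBigO {w w' : ℝ → ℝ} (hw : ∀ z, 0 < z → HasDerivAt w (w' z) z) {β : ℝ}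
    (hβ : β ≠ 0) (hO : w' =O[atTop] fun z => z ^ (-β - 1)) :
    ∃ c, (fun z => w z - c) =O[atTop] fun z => z ^ (-β) := by
  obtain ⟨C, hC, hbound⟩ := hO.exists_pos
  obtain ⟨Z, hZ⟩ := eventually_atTop.1 (hbound.bound.and (eventually_gt_atTop 0))
  have hpos : 0 < Z := (hZ Z le_rfl).2
  have hnonneg (z : ℝ) (hz : Z ≤ z) (s : ℝ) : 0 ≤ z ^ s := Real.rpow_nonneg (hpos.le.trans hz) s
  have hZbound (z : ℝ) (hz : Z ≤ z) : ‖w' z‖ ≤ C * z ^ (-β - 1) := by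
    simpa only [Real.norm_of_nonneg (hnonneg z hz _)] using (hZ z hz).1
  have hsub := fun y z => norm_sub_le_of_norm_deriv_le_rpow hpos hβ hw hZbound (y := y) (z := z)
  rcases hβ.lt_or_gt with hneg | hβ_pos
  · refine ⟨w Z, .of_bound (-(C / β)) ?_⟩
    filter_upwards [eventually_ge_atTop Z] with z hz
    rw [Real.norm_of_nonneg (hnonneg z hz _)]
    have hcoeff : C / β < 0 := div_neg_of_pos_of_neg hC hneg
    nlinarith [hsub Z z le_rfl hz, hnonneg Z le_rfl (-β)]
  · have hcoeff : 0 < C / β := div_pos hC hβ_pos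
    obtain ⟨c, hc⟩ := exists_norm_sub_le_of_norm_sub_le (w := w) (Z := Z)
      (b := fun y => C / β * y ^ (-β))
      (fun y z hy hyz => (hsub y z hy hyz).trans (by nlinarith [hnonneg z (hy.trans hyz) (-β)]))
      (by simpa using (tendsto_rpow_neg_atTop hβ_pos).const_mul (C / β))
    refine ⟨c, .of_bound (C / β) ?_⟩
    filter_upwards [eventually_ge_atTop Z] with z hz
    rw [Real.norm_of_nonneg (hnonneg z hz _)]
    exact hc z hz

/-- `y` solves the Euler equation `z y' + β y = h` on `(0, ∞)`. -/
def IsEulerSolution (β : ℝ) (h y : ℝ → ℝ) : Prop :=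
  ∀ z, 0 < z → HasDerivAt y (z⁻¹ * (h z - β * y z)) z

theorem IsEulerSolution.sub {β : ℝ} {h₁ h₂ y₁ y₂ : ℝ → ℝ} (hy₁ : IsEulerSolution β h₁ y₁)
    (hy₂ : IsEulerSolution β h₂ y₂) :
    IsEulerSolution β (fun z => h₁ z - h₂ z) fun z => y₁ z - y₂ z := fun z hz =>
  ((hy₁ z hz).fun_sub (hy₂ z hz)).congr_deriv (by ring)

theorem IsEulerSolution.exists_sub_isBigO {β γ : ℝ} {h y : ℝ → ℝ} (hy : IsEulerSolution β h y)
    (hγ : γ ≠ β) (hO : h =O[atTop] fun z => z ^ (-γ)) :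
    ∃ c, (fun z => y z - c * z ^ (-β)) =O[atTop] fun z => z ^ (-γ) := by
  have hderiv (z : ℝ) (hz : 0 < z) :
      HasDerivAt (fun z => z ^ β * y z) (z ^ (β - 1) * h z) z := by
    refine ((Real.hasDerivAt_rpow_const (Or.inl hz.ne')).fun_mul (hy z hz)).congr_deriv ?_
    rw [Real.rpow_sub_one hz.ne']
    field_simp
    ring
  obtain ⟨c, hc⟩ := exists_sub_const_isBigO hderiv (sub_ne_zero.2 hγ) <|
    ((isBigO_refl (fun z : ℝ => z ^ (β - 1)) atTop).mul hO).congr' .rfl <| by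
      filter_upwards [eventually_gt_atTop 0] with z hz
      rw [← Real.rpow_add hz]
      ring_nf
  refine ⟨c, ((isBigO_refl (fun z : ℝ => z ^ (-β)) atTop).mul hc).congr' ?_ ?_⟩
  all_goals filter_upwards [eventually_gt_atTop 0] with z hz
  · have hcancel : z ^ (-β) * z ^ β = 1 := by
      rw [← Real.rpow_add hz, neg_add_cancel, Real.rpow_zero]
    linear_combination y z * hcancel
  · rw [← Real.rpow_add hz]
    ring_nf

/-- The partial sum `∑_{l < K} z ^ (-l / k) (c l + d l log z)` of a logarithmic expansion. -/
noncomputable def logSum (k : ℝ) (K : ℕ) (c d : ℕ → ℝ) (z : ℝ) : ℝ :=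
  ∑ l ∈ Finset.range K, z ^ (-(l : ℝ) / k) * (c l + d l * Real.log z)

section LogSum

variable {k : ℝ} {K : ℕ} {c d : ℕ → ℝ}

theorem logSum_sub (c₁ d₁ c₂ d₂ : ℕ → ℝ) (z : ℝ) :
    logSum k K (c₁ - c₂) (d₁ - d₂) z = logSum k K c₁ d₁ z - logSum k K c₂ d₂ z := by
  simp only [logSum, ← Finset.sum_sub_distrib, Pi.sub_apply]
  exact Finset.sum_congr rfl fun l _ => by ring

theorem logSum_smul (s : ℝ) (c d : ℕ → ℝ) (z : ℝ) :
    logSum k K (s • c) (s • d) z = s * logSum k K c d z := by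
  simp only [logSum, Finset.mul_sum, Pi.smul_apply, smul_eq_mul]
  exact Finset.sum_congr rfl fun l _ => by ring

theorem logSum_add_single {β : ℕ} (hβ : β < K) (s z : ℝ) :
    logSum k K (c + Pi.single β s) d z = logSum k K c d z + s * z ^ (-(β : ℝ) / k) := by
  have hsingle : s * z ^ (-(β : ℝ) / k)
      = ∑ l ∈ Finset.range K, z ^ (-(l : ℝ) / k) * (Pi.single β s : ℕ → ℝ) l := by
    rw [Finset.sum_eq_single_of_mem β (Finset.mem_range.2 hβ) fun l _ hl => by simp [hl],
      Pi.single_eq_same, mul_comm]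
  simp only [hsingle, logSum, ← Finset.sum_add_distrib, Pi.add_apply]
  exact Finset.sum_congr rfl fun l _ => by ring

theorem isEulerSolution_logSum {β : ℝ} {c' d' : ℕ → ℝ} (hd : ∀ l : ℕ, (β - l / k) * d' l = d l)
    (hc : ∀ l : ℕ, (β - l / k) * c' l + d' l = c l) :
    IsEulerSolution β (logSum k K c d) (logSum k K c' d') := by
  intro z hz
  refine (HasDerivAt.fun_sum fun l _ => (Real.hasDerivAt_rpow_const (Or.inl hz.ne')).fun_mul
    (((Real.hasDerivAt_log hz.ne').const_mul (d' l)).const_add (c' l))).congr_deriv ?_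
  simp only [logSum, Finset.mul_sum, ← Finset.sum_sub_distrib]
  refine Finset.sum_congr rfl fun l _ => ?_
  rw [Real.rpow_sub_one hz.ne', ← hd, ← hc]
  ring

/-- A logarithm absent from the right-hand side arises only from resonance, that is, from its term
in `z ^ (-β / k)`. -/
theorem exists_isEulerSolution_logSum (hk : k ≠ 0) {β : ℕ} (hd : d β = 0) :
    ∃ c' d', IsEulerSolution (β / k) (logSum k K c d) (logSum k K c' d') ∧
      (∀ l, c' l ≠ 0 → c l ≠ 0 ∨ d l ≠ 0) ∧ ∀ l, d' l ≠ 0 → l = β ∧ c l ≠ 0 ∨ d l ≠ 0 := by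
  have hne {l : ℕ} (hl : l ≠ β) : (β : ℝ) / k - l / k ≠ 0 :=
    sub_ne_zero.2 fun h => hl (by exact_mod_cast ((div_left_inj' hk).1 h).symm)
  let d' : ℕ → ℝ := fun l => if l = β then c β else d l / (β / k - l / k)
  let c' : ℕ → ℝ := fun l => if l = β then 0 else (c l - d' l) / (β / k - l / k)
  refine ⟨c', d', isEulerSolution_logSum (fun l => ?_) (fun l => ?_), fun l => ?_, fun l => ?_⟩
  all_goals rcases eq_or_ne l β with rfl | hl
  · simp [hd]
  · simp only [d', if_neg hl, mul_div_cancel₀ _ (hne hl)]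
  · simp [c', d']
  · simp only [c', if_neg hl, mul_div_cancel₀ _ (hne hl), sub_add_cancel]
  · simp [c']
  · simp only [c', d', if_neg hl]
    contrapose!
    rintro ⟨hcl, hdl⟩
    simp [hcl, hdl]
  · simp [d', hd]
  · simp only [d', if_neg hl]
    exact fun h => Or.inr (div_ne_zero_iff.1 h).1

end LogSum

/-- `y` agrees with the logarithmic sum of its first `K` terms up to `O(z ^ (-γ))`. -/
def HasLogExpansion (k : ℝ) (K : ℕ) (γ : ℝ) (y : ℝ → ℝ) (c d : ℕ → ℝ) : Prop :=
  (fun z => y z - logSum k K c d z) =O[atTop] fun z => z ^ (-γ)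

namespace HasLogExpansion

variable {k γ : ℝ} {K : ℕ} {y : ℝ → ℝ} {c d : ℕ → ℝ}

theorem zero_of_abs_le {B : ℝ} (hγ : γ ≤ 0) (hy : ∀ z, |y z| ≤ B) :
    HasLogExpansion k K γ y 0 0 := by
  refine .of_bound |B| ?_
  filter_upwards [eventually_ge_atTop 1] with z hz
  have hone : 1 ≤ ‖z ^ (-γ)‖ := (Real.one_le_rpow hz (neg_nonneg.2 hγ)).trans (le_abs_self _)
  simp only [logSum, Pi.zero_apply, zero_mul, add_zero, mul_zero, Finset.sum_const_zero, sub_zero]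
  exact ((hy z).trans (le_abs_self B)).trans (le_mul_of_one_le_right (abs_nonneg B) hone)

theorem const_mul (hy : HasLogExpansion k K γ y c d) (s : ℝ) :
    HasLogExpansion k K γ (fun z => s * y z) (s • c) (s • d) :=
  (hy.const_mul_left s).congr_left fun z => by rw [logSum_smul, mul_sub]

theorem inv_mul {k : ℕ} (hk : k ≠ 0) (hy : HasLogExpansion k K γ y c 0) :
    HasLogExpansion k (k + K) (γ + 1) (fun z => z⁻¹ * y z)
      (fun l => if l < k then 0 else c (l - k)) 0 := by
  refine ((isBigO_refl (fun z : ℝ => z⁻¹) atTop).mul hy).congr' ?_ ?_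
  all_goals filter_upwards [eventually_gt_atTop 0] with z hz
  · have hlow : ∑ l ∈ Finset.range k, z ^ (-(l : ℝ) / k) * (if l < k then 0 else c (l - k)) = 0 :=
      Finset.sum_eq_zero fun l hl => by rw [if_pos (Finset.mem_range.1 hl), mul_zero]
    simp only [logSum, Pi.zero_apply, zero_mul, add_zero, Finset.sum_range_add, hlow, zero_add,
      mul_sub, Finset.mul_sum]
    congr 1
    refine Finset.sum_congr rfl fun l _ => ?_
    have hexp : -((k + l : ℕ) : ℝ) / k = -1 + -(l : ℝ) / k := by
      push_cast
      field_simp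
      ring
    rw [if_neg (by omega), Nat.add_sub_cancel_left, hexp, Real.rpow_add hz, Real.rpow_neg_one,
      mul_assoc]
  · rw [neg_add_rev, Real.rpow_add hz, Real.rpow_neg_one]

theorem of_isEulerSolution (hk : k ≠ 0) {β : ℕ} (hβ : β < K) (hγ : γ ≠ β / k) {h : ℝ → ℝ}
    (hy : IsEulerSolution (β / k) h y) (hh : HasLogExpansion k K γ h c d) (hd : d β = 0) :
    ∃ c' d', HasLogExpansion k K γ y c' d' ∧ (∀ l, c' l ≠ 0 → l = β ∨ c l ≠ 0 ∨ d l ≠ 0) ∧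
      ∀ l, d' l ≠ 0 → l = β ∧ c l ≠ 0 ∨ d l ≠ 0 := by
  obtain ⟨c', d', hsol, hc', hd'⟩ := exists_isEulerSolution_logSum (K := K) (c := c) hk hd
  obtain ⟨s, hs⟩ := (hy.sub hsol).exists_sub_isBigO hγ hh
  refine ⟨c' + Pi.single β s, d', hs.congr_left fun z => ?_, fun l hcl => ?_, hd'⟩
  · rw [logSum_add_single hβ, neg_div]
    ring
  · rcases eq_or_ne l β with hl | hl
    · exact Or.inl hl
    · exact Or.inr (hc' l (by simpa [hl] using hcl))

theorem of_isEulerSolution_inv_mul {k : ℕ} (hk : k ≠ 0) (hK : 0 < K) (hγ : γ ≠ 0) {h : ℝ → ℝ}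
    (hh : HasLogExpansion k K γ h c 0) (hy : IsEulerSolution 1 (fun z => z⁻¹ * h z) y)
    (hc : c 0 = 0) :
    ∃ c', HasLogExpansion k (k + K) (γ + 1) y c' 0 ∧
      ∀ l, c' l ≠ 0 → l = k ∨ k ≤ l ∧ c (l - k) ≠ 0 := by
  have hk_cast : (k : ℝ) ≠ 0 := Nat.cast_ne_zero.2 hk
  obtain ⟨c', d', hexp, hc', hd'⟩ := of_isEulerSolution hk_cast (β := k) (by omega)
    (by simpa [div_self hk_cast] using hγ) (by rwa [div_self hk_cast]) (hh.inv_mul hk) rfl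
  have hd'_zero : d' = 0 := by
    ext l
    by_contra hl
    obtain ⟨rfl, hne⟩ | hne := hd' l hl
    · simp [hc] at hne
    · exact hne rfl
  refine ⟨c', hd'_zero ▸ hexp, fun l hl => ?_⟩
  obtain hlk | hne | hne := hc' l hl
  · exact Or.inl hlk
  · exact Or.inr (by simpa using hne)
  · exact absurd rfl hne

end HasLogExpansion

/-! ### Expansions of oscillatory integrals -/

namespace IsPhase

variable {E : Type*} [NormedAddCommGroup E] [NormedSpace ℝ E] [FiniteDimensional ℝ E]
  [Nontrivial E] [MeasurableSpace E] [BorelSpace E] {μ : Measure E} [μ.IsAddHaarMeasure]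
  {f : E → ℝ} {q p b K J : ℕ} {ρ κ γ : ℝ} {a : 𝓢(ℝ × E, ℝ)}

theorem exists_isEulerSolution_gradient (hf : IsPhase f q ρ κ) (ha : IsAmplitude ρ p a)
    (hp : 2 * q * b + q + 2 ≤ p) :
    ∃ a', IsAmplitude ρ (3 * q + p - 1) a' ∧
      IsEulerSolution 1 (fun z => z⁻¹ * oscInt μ f (b + 2) a' z) (oscInt μ f b a) := by
  obtain ⟨a', ha', hstep⟩ := hf.exists_gradient_step (μ := μ) ha hp
  refine ⟨a', ha', fun z hz => (hf.hasDerivAt_oscInt (by omega) ha z).congr_deriv ?_⟩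
  simp only [← hstep]
  field_simp
  ring

theorem exists_isEulerSolution_radial (hf : IsPhase f q ρ κ) {i : ℕ}
    (ha : IsAmplitude ρ (i + 2 * q * b) a) (hbi : b = 0 ∨ 1 ≤ i) :
    ∃ a', IsAmplitude ρ (4 * q + (i + 2 * q * b) + 1) a' ∧
      IsEulerSolution ((Module.finrank ℝ E + i : ℕ) / (q + 1 : ℕ))
        (fun z => ((q : ℝ) + 1)⁻¹ * oscInt μ f (b + 2) a' z) (oscInt μ f b a) := by
  obtain ⟨a', ha', hstep⟩ := hf.exists_radial_step (μ := μ) rfl ha hbi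
  refine ⟨a', ha', fun z hz => (hf.hasDerivAt_oscInt (by omega) ha z).congr_deriv ?_⟩
  simp only [← hstep]
  push_cast
  field_simp
  ring

theorem exists_hasLogExpansion_of_large_order (hf : IsPhase f q ρ κ) {r : ℕ}
    (hK : (q + 1) * r < K) (hγ : γ ≤ r) (hγ_ne : ∀ l : ℕ, γ ≠ l / (q + 1 : ℕ))
    (ha : IsAmplitude ρ ((q + 1) * r + 1 + 2 * q * b) a) :
    ∃ c : ℕ → ℝ, HasLogExpansion (q + 1 : ℕ) K γ (oscInt μ f b a) c 0 ∧
      ∀ l, c l ≠ 0 → q + 1 ∣ l ∧ 0 < l := by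
  induction r generalizing K b γ a with
  | zero =>
    obtain ⟨B, hB⟩ := hf.exists_abs_oscInt_le (μ := μ) (b := b) (by omega) ha
    exact ⟨0, .zero_of_abs_le (by simpa using hγ) hB, fun l hl => absurd rfl hl⟩
  | succ r ih =>
    have hrank : (q + 1) * (r + 1) = q + 1 + (q + 1) * r := by ring
    have horder : 2 * q * (b + 2) = 2 * q * b + 4 * q := by ring
    obtain ⟨a', ha', hsol⟩ := hf.exists_isEulerSolution_gradient (μ := μ) (b := b) ha
      (by rw [hrank]; omega)
    obtain ⟨K', rfl⟩ := le_iff_exists_add.1 (show q + 1 ≤ K by omega)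
    have hγ_sub_ne (l : ℕ) : γ - 1 ≠ l / (q + 1 : ℕ) := fun hl => hγ_ne (q + 1 + l) <| by
      rw [sub_eq_iff_eq_add.1 hl]
      push_cast
      field_simp
      ring
    obtain ⟨c, hc, hcl⟩ := ih (K := K') (b := b + 2) (by omega) (by push_cast at hγ; linarith)
      hγ_sub_ne (ha'.mono (by rw [hrank, horder]; omega))
    obtain ⟨c', hc', hcl'⟩ := hc.of_isEulerSolution_inv_mul q.succ_ne_zero (by omega)
      (by simpa using hγ_sub_ne 0) hsol (of_not_not fun hne => (hcl 0 hne).2.false)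
    refine ⟨c', by rwa [sub_add_cancel] at hc', fun l hl => ?_⟩
    obtain rfl | ⟨hle, hne⟩ := hcl' l hl
    · exact ⟨dvd_rfl, Nat.succ_pos q⟩
    · exact ⟨(Nat.dvd_sub_iff_left hle dvd_rfl).1 (hcl _ hne).1, by omega⟩

theorem exists_hasLogExpansion (hf : IsPhase f q ρ κ)
    (hK : Module.finrank ℝ E + (q + 1) * J + 1 < K) (hγ : γ ≤ J)
    (hγ_ne : ∀ l : ℕ, γ ≠ l / (q + 1 : ℕ)) {i s : ℕ} (his : i + s = (q + 1) * J + 1)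
    (ha : IsAmplitude ρ (i + 2 * q * b) a) (hbi : b = 0 ∨ 1 ≤ i) :
    ∃ c d : ℕ → ℝ, HasLogExpansion (q + 1 : ℕ) K γ (oscInt μ f b a) c d ∧
      (∀ l, c l ≠ 0 → q + 1 ∣ l ∨ Module.finrank ℝ E + i ≤ l) ∧
      ∀ l, d l ≠ 0 → q + 1 ∣ l ∧ Module.finrank ℝ E + i ≤ l := by
  induction s generalizing i b a with
  | zero =>
    obtain rfl : i = (q + 1) * J + 1 := his
    obtain ⟨c, hc, hcl⟩ :=
      hf.exists_hasLogExpansion_of_large_order (μ := μ) (K := K) (by omega) hγ hγ_ne ha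
    exact ⟨c, 0, hc, fun l hl => Or.inl (hcl l hl).1, fun l hl => absurd rfl hl⟩
  | succ s ih =>
    have horder : 2 * q * (b + 2) = 2 * q * b + 4 * q := by ring
    obtain ⟨a', ha', hsol⟩ := hf.exists_isEulerSolution_radial (μ := μ) ha hbi
    obtain ⟨c, d, hcd, hc, hd⟩ := ih (i := i + 1) (b := b + 2) (by omega)
      (ha'.mono (by rw [horder]; omega)) (Or.inr (by omega))
    have hs : ((q : ℝ) + 1)⁻¹ ≠ 0 := by positivity
    have hd_zero : d (Module.finrank ℝ E + i) = 0 := by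
      by_contra hne
      have := (hd _ hne).2
      omega
    obtain ⟨c', d', hexp, hc', hd'⟩ := HasLogExpansion.of_isEulerSolution
      (Nat.cast_ne_zero.2 (Nat.succ_ne_zero q)) (by omega) (hγ_ne _) hsol
      (hcd.const_mul ((q : ℝ) + 1)⁻¹) (by simp [hd_zero])
    simp only [Pi.smul_apply, smul_ne_zero_iff, hs, ne_eq, not_false_eq_true, true_and] at hc' hd'
    refine ⟨c', d', hexp, fun l hl => ?_, fun l hl => ?_⟩
    · obtain rfl | hne | hne := hc' l hl
      · exact Or.inr le_rfl
      · exact (hc l hne).imp_right (by omega)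
      · exact Or.inl (hd l hne).1
    · obtain ⟨rfl, hne⟩ | hne := hd' l hl
      · exact ⟨(hc _ hne).resolve_right (by omega), le_rfl⟩
      · exact ⟨(hd l hne).1, by have := (hd l hne).2; omega⟩

end IsPhase

/-! ### Full expansions -/

/-- `y` agrees with its terms up to index `N` up to `O(z ^ (-(N + 1) / k) log z)`. -/
def LogExpandsTo (k : ℝ) (N : ℕ) (y : ℝ → ℝ) (c d : ℕ → ℝ) : Prop :=
  (fun z => y z - logSum k (N + 1) c d z) =O[atTop] fun z => z ^ (-((N : ℝ) + 1) / k) * Real.log z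

theorem rpow_mul_log_isBigO {s t : ℝ} (hst : s ≤ t) (a b : ℝ) :
    (fun z : ℝ => z ^ s * (a + b * Real.log z)) =O[atTop] fun z => z ^ t * Real.log z := by
  refine IsBigO.mul (.of_bound 1 ?_)
    ((Real.isLittleO_const_log_atTop (c := a)).isBigO.add ((isBigO_refl _ _).const_mul_left b))
  filter_upwards [eventually_ge_atTop 1] with z hz
  have hnonneg (r : ℝ) : 0 ≤ z ^ r := Real.rpow_nonneg (zero_le_one.trans hz) r
  rw [one_mul, Real.norm_of_nonneg (hnonneg s), Real.norm_of_nonneg (hnonneg t)]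
  exact Real.rpow_le_rpow_of_exponent_le hz hst

theorem rpow_isBigO_rpow_mul_log {s t : ℝ} (hst : s ≤ t) :
    (fun z : ℝ => z ^ s) =O[atTop] fun z => z ^ t * Real.log z := by
  simpa using rpow_mul_log_isBigO hst 1 0

theorem logSum_sub_logSum_isBigO {k : ℝ} (hk : 0 < k) {N K : ℕ} (hN : N + 1 ≤ K) (c d : ℕ → ℝ) :
    (fun z => logSum k K c d z - logSum k (N + 1) c d z) =O[atTop]
      fun z => z ^ (-((N : ℝ) + 1) / k) * Real.log z := by
  simp only [logSum, ← Finset.sum_Ico_eq_sub _ hN]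
  refine .fun_sum fun l hl => rpow_mul_log_isBigO ?_ _ _
  have hNl : (N : ℝ) + 1 ≤ l := by exact_mod_cast (Finset.mem_Ico.1 hl).1
  gcongr

theorem HasLogExpansion.logExpandsTo {k γ : ℝ} (hk : 0 < k) {K N : ℕ} (hN : N + 1 ≤ K)
    (hγ : ((N : ℝ) + 1) / k ≤ γ) {y : ℝ → ℝ} {c d : ℕ → ℝ} (hy : HasLogExpansion k K γ y c d) :
    LogExpandsTo k N y c d :=
  ((hy.trans (rpow_isBigO_rpow_mul_log (by rw [neg_div]; linarith))).add
    (logSum_sub_logSum_isBigO hk hN c d)).congr_left fun z => by ring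

theorem eq_zero_of_add_mul_log_tendsto {a b : ℝ}
    (h : Tendsto (fun z => a + b * Real.log z) atTop (𝓝 0)) : a = 0 ∧ b = 0 := by
  have hinv : Tendsto (fun z => (Real.log z)⁻¹) atTop (𝓝 0) :=
    tendsto_inv_atTop_zero.comp Real.tendsto_log_atTop
  have hb_lim : Tendsto (fun z => (a + b * Real.log z) * (Real.log z)⁻¹) atTop
      (𝓝 (a * 0 + b)) := by
    refine ((hinv.const_mul a).add_const b).congr' ?_
    filter_upwards [eventually_gt_atTop 1] with z hz
    have hlog : Real.log z ≠ 0 := (Real.log_pos hz).ne'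
    field_simp
  obtain rfl : b = 0 := by simpa using tendsto_nhds_unique hb_lim (h.mul hinv)
  simpa using h

namespace LogExpandsTo

variable {k : ℝ} {M N : ℕ} {y : ℝ → ℝ} {c d c' d' : ℕ → ℝ}

theorem mono (hk : 0 < k) (hMN : M ≤ N) (hy : LogExpandsTo k N y c d) :
    LogExpandsTo k M y c d := by
  have hexp : -((N : ℝ) + 1) / k ≤ -((M : ℝ) + 1) / k := by gcongr
  have hremainder := rpow_mul_log_isBigO hexp 0 1
  simp only [zero_add, one_mul] at hremainder
  exact ((hy.trans hremainder).add
    (logSum_sub_logSum_isBigO hk (Nat.succ_le_succ hMN) c d)).congr_left fun z => by ring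

theorem last_eq_zero (hk : 0 < k) (hzero : LogExpandsTo k N 0 c d)
    (hlt : ∀ l < N, c l = 0 ∧ d l = 0) : c N = 0 ∧ d N = 0 := by
  have hlast (z : ℝ) :
      logSum k (N + 1) c d z = z ^ (-(N : ℝ) / k) * (c N + d N * Real.log z) := by
    rw [logSum, Finset.sum_range_succ, Finset.sum_eq_zero fun l hl => ?_, zero_add]
    simp [hlt l (Finset.mem_range.1 hl)]
  have hbound : (fun z => c N + d N * Real.log z) =O[atTop]
      fun z => z ^ (-(1 / k)) * Real.log z := by
    refine ((isBigO_refl (fun z : ℝ => z ^ ((N : ℝ) / k)) atTop).mul hzero).neg_left.congr' ?_ ?_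
    all_goals filter_upwards [eventually_gt_atTop 0] with z hz
    · have hcancel : z ^ ((N : ℝ) / k) * z ^ (-(N : ℝ) / k) = 1 := by
        rw [← Real.rpow_add hz, neg_div, add_neg_cancel, Real.rpow_zero]
      rw [hlast, Pi.zero_apply]
      linear_combination (c N + d N * Real.log z) * hcancel
    · rw [← mul_assoc, ← Real.rpow_add hz]
      ring_nf
  refine eq_zero_of_add_mul_log_tendsto (hbound.trans_tendsto ?_)
  refine (isLittleO_log_rpow_atTop (one_div_pos.2 hk)).tendsto_div_nhds_zero.congr' ?_
  filter_upwards [eventually_gt_atTop 0] with z hz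
  rw [Real.rpow_neg hz.le, div_eq_inv_mul]

theorem eq_zero (hk : 0 < k) (hzero : LogExpandsTo k N 0 c d) (l : ℕ) (hl : l ≤ N) :
    c l = 0 ∧ d l = 0 := by
  induction l using Nat.strong_induction_on with
  | _ l ih => exact (hzero.mono hk hl).last_eq_zero hk fun m hm => ih m hm (hm.le.trans hl)

theorem unique (hk : 0 < k) (hy : LogExpandsTo k N y c d) (hy' : LogExpandsTo k N y c' d') (l : ℕ)
    (hl : l ≤ N) : c l = c' l ∧ d l = d' l := by
  have hzero : LogExpandsTo k N 0 (c - c') (d - d') :=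
    (hy.sub hy').congr_left fun z => by rw [logSum_sub, Pi.zero_apply]; ring
  exact (hzero.eq_zero hk l hl).imp sub_eq_zero.1 sub_eq_zero.1

theorem exists_forall (hk : 0 < k) {p : ℕ → Prop}
    (h : ∀ N, ∃ c d : ℕ → ℝ, LogExpandsTo k N y c d ∧ ∀ l, d l ≠ 0 → p l) :
    ∃ c d : ℕ → ℝ, (∀ N, LogExpandsTo k N y c d) ∧ ∀ l, d l ≠ 0 → p l := by
  choose c d hcd hp using h
  refine ⟨fun l => c l l, fun l => d l l, fun N => (hcd N).congr_left fun z => ?_,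
    fun l hl => hp l l hl⟩
  congr 1
  refine Finset.sum_congr rfl fun l hl => ?_
  have hlN : l ≤ N := Finset.mem_range_succ_iff.1 hl
  obtain ⟨hc, hd⟩ := ((hcd N).mono hk hlN).unique hk (hcd l) l le_rfl
  rw [hc, hd]

end LogExpandsTo

theorem logSum_eq_add {k : ℕ} (hk : 0 < k) {c d : ℕ → ℝ} (hd : ∀ l, d l ≠ 0 → k ∣ l) (N : ℕ)
    (z : ℝ) : logSum k (N + 1) c d z
      = ∑ j ∈ Finset.range (N + 1), c j * z ^ (-(j : ℝ) / k)
        + ∑ j ∈ Finset.range (N / k + 1), d (k * j) * z ^ (-(j : ℝ)) * Real.log z := by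
  have hlog : ∑ j ∈ Finset.range (N / k + 1), d (k * j) * z ^ (-(j : ℝ)) * Real.log z
      = ∑ l ∈ Finset.range (N + 1), d l * z ^ (-(l : ℝ) / k) * Real.log z := by
    refine Finset.sum_of_injOn (fun j => k * j)
      (fun i _ j _ hij => Nat.eq_of_mul_eq_mul_left hk hij) (fun j hj => ?_)
      (fun l hl hl' => ?_) fun j _ => ?_
    · rw [Finset.mem_coe, Finset.mem_range_succ_iff] at hj ⊢
      exact (Nat.mul_le_mul_left k hj).trans (Nat.mul_div_le N k)
    · have hdl : d l = 0 := by
        by_contra hdl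
        obtain ⟨j, rfl⟩ := hd l hdl
        refine hl' ⟨j, ?_, rfl⟩
        rw [Finset.mem_coe, Finset.mem_range_succ_iff] at *
        exact (Nat.le_div_iff_mul_le hk).2 (by rwa [mul_comm])
      rw [hdl, zero_mul, zero_mul]
    · rw [Nat.cast_mul, neg_div, mul_div_cancel_left₀ _ (Nat.cast_ne_zero.2 hk.ne')]
  rw [hlog, logSum, ← Finset.sum_add_distrib]
  exact Finset.sum_congr rfl fun l _ => by ring

theorem eq_zero_of_tsupport_subset_ball {E : Type*} [NormedAddCommGroup E] {ρ : ℝ} {Θ : E → ℝ}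
    (hsupp : tsupport Θ ⊆ Metric.ball 0 ρ) {x : E}
    (hx : ρ < ‖x‖) : Θ x = 0 :=
  image_eq_zero_of_notMem_tsupport fun hmem => hx.not_gt (mem_ball_zero_iff.1 (hsupp hmem))

section CutOff

variable {E : Type*} [NormedAddCommGroup E] [NormedSpace ℝ E] [FiniteDimensional ℝ E] {ρ : ℝ}
  {Θ : E → ℝ}

theorem hasTemperateGrowth_of_tsupport_subset_ball (hΘ : ContDiff ℝ ∞ Θ)
    (hsupp : tsupport Θ ⊆ Metric.ball 0 ρ) : Θ.HasTemperateGrowth := by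
  have hcompact : HasCompactSupport Θ := (isCompact_closedBall 0 ρ).of_isClosed_subset
    (isClosed_tsupport Θ) (hsupp.trans Metric.ball_subset_closedBall)
  exact hcompact.hasTemperateGrowth hΘ

theorem isAmplitude_mulX_of_tsupport_subset_ball (hΘ : ContDiff ℝ ∞ Θ)
    (hsupp : tsupport Θ ⊆ Metric.ball 0 ρ) (g : 𝓢(ℝ × E, ℝ)) : IsAmplitude ρ 0 (mulX Θ g) :=
  ⟨fun t => vanishesToOrder_zero (hasTemperateGrowth_slice _ t), fun t x hx => by
    rw [mulX_apply _ _ _ (hasTemperateGrowth_of_tsupport_subset_ball hΘ hsupp),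
      eq_zero_of_tsupport_subset_ball hsupp hx, zero_mul]⟩

theorem oscInt_mulX_eq_of_tsupport_subset_ball [MeasurableSpace E] (μ : Measure E)
    (hΘ : ContDiff ℝ ∞ Θ) (hsupp : tsupport Θ ⊆ Metric.ball 0 ρ) {f F : E → ℝ}
    (hF : ∀ x, ‖x‖ ≤ ρ → F x = f x) (g : 𝓢(ℝ × E, ℝ)) (z : ℝ) :
    oscInt μ F 0 (mulX Θ g) z = ∫ x, g (z * f x, x) * Θ x ∂μ := by
  refine integral_congr_ae (.of_forall fun x => ?_)
  have hΘgrowth := hasTemperateGrowth_of_tsupport_subset_ball hΘ hsupp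
  obtain hx | hx := le_or_gt ‖x‖ ρ
  · simp only [mulX_apply _ _ _ hΘgrowth, hF x hx, pow_zero, div_one, mul_comm]
  · simp only [mulX_apply _ _ _ hΘgrowth, eq_zero_of_tsupport_subset_ball hsupp hx, zero_mul,
      zero_div, mul_zero]

end CutOff

section Expansion

variable {E : Type*} [NormedAddCommGroup E] [NormedSpace ℝ E] [FiniteDimensional ℝ E]
  [Nontrivial E] [MeasurableSpace E] [BorelSpace E] {μ : Measure E} [μ.IsAddHaarMeasure]

theorem IsPhase.exists_logExpandsTo_oscInt {f : E → ℝ} {q : ℕ} {ρ κ : ℝ} (hf : IsPhase f q ρ κ)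
    {a : 𝓢(ℝ × E, ℝ)} (ha : IsAmplitude ρ 0 a) :
    ∃ c d : ℕ → ℝ, (∀ N, LogExpandsTo (q + 1 : ℕ) N (oscInt μ f 0 a) c d) ∧
      ∀ l, d l ≠ 0 → q + 1 ∣ l := by
  have hk : (0 : ℝ) < (q + 1 : ℕ) := Nat.cast_pos.2 q.succ_pos
  refine LogExpandsTo.exists_forall hk fun N => ?_
  have horder : ((N : ℝ) + 3 / 2) / (q + 1 : ℕ) ≤ (N + 2 : ℕ) := by
    rw [div_le_iff₀ hk]
    push_cast
    nlinarith [(N.cast_nonneg : (0 : ℝ) ≤ N), (q.cast_nonneg : (0 : ℝ) ≤ q)]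
  have horder_ne (l : ℕ) : ((N : ℝ) + 3 / 2) / (q + 1 : ℕ) ≠ l / (q + 1 : ℕ) := by
    rw [ne_eq, div_left_inj' hk.ne']
    intro h
    have : 2 * N + 3 = 2 * l := by exact_mod_cast (by linarith : 2 * (N : ℝ) + 3 = 2 * l)
    omega
  obtain ⟨c, d, hcd, -, hd⟩ := hf.exists_hasLogExpansion (μ := μ) (b := 0) (i := 0)
    (K := Module.finrank ℝ E + (q + 1) * (N + 2) + 2) (by omega) horder horder_ne
    (zero_add _) (by simpa using ha) (Or.inl rfl)
  refine ⟨c, d, hcd.logExpandsTo hk ?_ ?_, fun l hl => (hd l hl).1⟩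
  · nlinarith
  · gcongr
    norm_num

end Expansion

theorem fderiv_ne_zero_of_gradient_ne_zero {H : Type*} [NormedAddCommGroup H]
    [InnerProductSpace ℝ H] [CompleteSpace H] {h : H → ℝ} {x : H} (hx : gradient h x ≠ 0) :
    fderiv ℝ h x ≠ 0 :=
  fun hcrit => hx (by rw [gradient, hcrit, map_zero])

theorem isLittleO_norm_pow_of_abs_le {E : Type*} [SeminormedAddCommGroup E] {u : E → ℝ} {m : ℕ}
    (hu : ∃ C δ : ℝ, 0 < C ∧ 0 < δ ∧ ∀ x, ‖x‖ < δ → |u x| ≤ C * ‖x‖ ^ (m + 1)) :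
    u =o[𝓝 0] fun x => ‖x‖ ^ m := by
  obtain ⟨C, δ, -, hδ, hC⟩ := hu
  refine IsBigO.trans_isLittleO (.of_bound C ?_) (isLittleO_norm_pow_norm_pow m.lt_succ_self)
  filter_upwards [Metric.ball_mem_nhds 0 hδ] with x hx
  simpa using hC x (mem_ball_zero_iff.1 hx)

end PrincipalType

open PrincipalType in
theorem principal_type_full_expansion_general {E : Type*} [NormedAddCommGroup E]
    [NormedSpace ℝ E] [FiniteDimensional ℝ E] [Nontrivial E] [MeasurableSpace E] [BorelSpace E]
    (μ : Measure E) [μ.IsAddHaarMeasure] {k : ℕ} (hk : k ≠ 0) {f fk : E → ℝ}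
    (hf : ContDiff ℝ (⊤ : ℕ∞) f) (hhom : ∀ c : ℝ, 0 < c → ∀ x, fk (c • x) = c ^ k * fk x)
    (hprincipal : ∀ x, x ≠ 0 → fk x = 0 → fderiv ℝ fk x ≠ 0)
    (hjet : (fun x => f x - fk x) =o[nhds 0] fun x => ‖x‖ ^ k) :
    ∃ ε : ℝ, 0 < ε ∧ ∀ (g : SchwartzMap (ℝ × E) ℝ) (Θ : E → ℝ), ContDiff ℝ (⊤ : ℕ∞) Θ →
      tsupport Θ ⊆ Metric.ball 0 ε → ∃ c d : ℕ → ℝ, ∀ N : ℕ,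
        (fun z : ℝ => (∫ x, g (z * f x, x) * Θ x ∂μ)
            - (∑ j ∈ Finset.range (N + 1), c j * z ^ (-(j : ℝ) / k))
            - ∑ j ∈ Finset.range (N / k + 1), d j * z ^ (-(j : ℝ)) * Real.log z)
          =O[atTop] fun z : ℝ => z ^ (-((N : ℝ) + 1) / k) * Real.log z := by
  obtain ⟨q, rfl⟩ := Nat.exists_eq_succ_of_ne_zero hk
  obtain ⟨F, ρ, κ, hF, hFf⟩ := exists_isPhase hf hhom hprincipal hjet
  refine ⟨ρ, hF.radius_pos, fun g Θ hΘ hsupp => ?_⟩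
  obtain ⟨c, d, hcd, hd⟩ := hF.exists_logExpandsTo_oscInt (μ := μ)
    (isAmplitude_mulX_of_tsupport_subset_ball hΘ hsupp g)
  refine ⟨c, fun j => d ((q + 1) * j), fun N => (hcd N).congr_left fun z => ?_⟩
  rw [oscInt_mulX_eq_of_tsupport_subset_ball μ hΘ hsupp hFf, logSum_eq_add q.succ_pos hd, sub_sub]

/-- Theorem 1.5 (existence of the expansion under the principal-type condition (H1)):
if the `k`-jet `f_k` of `f` at the critical point has no critical points on `{f_k = 0} \ {0}`,
then `I_s(z)` admits a full expansion in powers `z^{-j/k}` and terms `z^{-j} log z`. -/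
theorem principal_type_full_expansion
    (n k : ℕ) (hn : 1 ≤ n) (hk : 2 ≤ k)
    (f fk : EuclideanSpace ℝ (Fin n) → ℝ)
    (hf : ContDiff ℝ (⊤ : ℕ∞) f) (hf0 : f 0 = 0) (hgrad0 : gradient f 0 = 0)
    (hfk_ne : fk ≠ 0)
    (hfk_hom : ∀ c : ℝ, 0 < c → ∀ x, fk (c • x) = c ^ k * fk x)
    (hfk_H1 : ∀ x : EuclideanSpace ℝ (Fin n), x ≠ 0 → fk x = 0 → gradient fk x ≠ 0)
    (hjet : ∃ C δ : ℝ, 0 < C ∧ 0 < δ ∧ ∀ x : EuclideanSpace ℝ (Fin n),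
      ‖x‖ < δ → |f x - fk x| ≤ C * ‖x‖ ^ (k + 1))
    (g : SchwartzMap (ℝ × EuclideanSpace ℝ (Fin n)) ℝ) :
    ∃ ε : ℝ, 0 < ε ∧ ∀ Θ : EuclideanSpace ℝ (Fin n) → ℝ,
      ContDiff ℝ (⊤ : ℕ∞) Θ → HasCompactSupport Θ →
      tsupport Θ ⊆ Metric.ball 0 ε → (∀ᶠ x in nhds 0, Θ x = 1) →
      (∀ x, 0 ≤ Θ x ∧ Θ x ≤ 1) →
      ∃ c d : ℕ → ℝ, ∀ N : ℕ,
        (fun z : ℝ =>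
            (∫ x, g (z * f x, x) * Θ x) -
            (∑ j ∈ Finset.range (N + 1), c j * z ^ (-(j : ℝ) / k)) -
            ∑ j ∈ Finset.range (N / k + 1), d j * z ^ (-(j : ℝ)) * Real.log z)
          =O[atTop] fun z : ℝ => z ^ (-((N : ℝ) + 1) / k) * Real.log z := by
  have : NeZero n := ⟨by omega⟩
  obtain ⟨ε, hε, hexp⟩ := principal_type_full_expansion_general volume (by omega) hf hfk_hom
    (fun x hx h₀ => PrincipalType.fderiv_ne_zero_of_gradient_ne_zero (hfk_H1 x hx h₀))
    (PrincipalType.isLittleO_norm_pow_of_abs_le hjet)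
  exact ⟨ε, hε, fun Θ hΘ _ hsupp _ _ => hexp g Θ hΘ hsupp⟩
end

section
/- Let n ≥ 1, k ∈ ℕ, C > 0 and z > 0. Let f : ℝⁿ → ℝ be measurable and let h : ℝ × ℝⁿ → ℂ be such that for each x, t ↦ h(t,x) is a Schwartz function of t, the partial derivatives ∂_t^j h belong to L¹(ℝ × ℝⁿ) for all j ≤ k, and |f(x)| ≥ C for every x for which h(·,x) is not identically zero. Then the error integral E(z) = ∫_{ℝⁿ} ∫_ℝ e^{i z t f(x)} h(t,x) dt dx satisfies |E(z)| ≤ (C z)^{-k} ‖∂_t^k h‖_{L¹(ℝ × ℝⁿ)}. In particular E(z) = O(z^{-k}) as z → ∞. -/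
open MeasureTheory Filter Asymptotics

open scoped FourierTransform

/-!
On each fiber the inner integral is the Fourier transform of `h(·, x)` at frequency `-z f(x) / 2π`.
Integrating by parts `k` times divides it by `(z f(x))^k`, up to a unimodular factor, and replaces
`h(·, x)` by its `k`-th derivative. Wherever `h(·, x)` does not vanish identically this gains at
least `(C z)^k`, and Fubini's theorem turns the remaining fiber norms into the joint `L¹` norm.
-/

section Fiber

variable {E : Type*} [NormedAddCommGroup E] [NormedSpace ℂ E] {g : ℝ → E} {k : ℕ}

theorem integral_exp_smul_eq_fourier (g : ℝ → E) (a : ℝ) :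
    ∫ t : ℝ, Complex.exp (Complex.I * a * t) • g t = 𝓕 g (-a / (2 * Real.pi)) := by
  rw [Real.fourier_real_eq_integral_exp_smul]
  congr 1 with t
  have hphase : -2 * Real.pi * t * (-a / (2 * Real.pi)) = a * t := by
    field_simp [Real.pi_ne_zero]
  rw [hphase]
  push_cast
  ring_nf

theorem pow_mul_norm_fourier_le_integral_norm_iteratedDeriv (hg : ContDiff ℝ k g)
    (hint : ∀ j ≤ k, Integrable (iteratedDeriv j g)) (w : ℝ) :
    (2 * Real.pi * |w|) ^ k * ‖𝓕 g w‖ ≤ ∫ t, ‖iteratedDeriv k g t‖ := by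
  have hderiv : 𝓕 (iteratedDeriv k g) w = (2 * Real.pi * Complex.I * w) ^ k • 𝓕 g w :=
    congrFun (Real.fourier_iteratedDeriv (N := k) (mod_cast hg)
      (fun j hj => hint j (mod_cast hj)) le_rfl) w
  have hfactor : ‖(2 * Real.pi * Complex.I * w : ℂ)‖ = 2 * Real.pi * |w| := by
    simp [abs_of_pos Real.pi_pos]
  calc (2 * Real.pi * |w|) ^ k * ‖𝓕 g w‖ = ‖𝓕 (iteratedDeriv k g) w‖ := by
        rw [hderiv, norm_smul, norm_pow, hfactor]
    _ ≤ ∫ t, ‖iteratedDeriv k g t‖ :=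
        VectorFourier.norm_fourierIntegral_le_integral_norm _ _ _ _ _

theorem abs_pow_mul_norm_integral_exp_smul_le (hg : ContDiff ℝ k g)
    (hint : ∀ j ≤ k, Integrable (iteratedDeriv j g)) (a : ℝ) :
    |a| ^ k * ‖∫ t : ℝ, Complex.exp (Complex.I * a * t) • g t‖ ≤
      ∫ t, ‖iteratedDeriv k g t‖ := by
  have hfrequency : 2 * Real.pi * |-a / (2 * Real.pi)| = |a| := by
    rw [abs_div, abs_neg, abs_of_pos Real.two_pi_pos, mul_div_cancel₀ _ Real.two_pi_pos.ne']
  simpa only [integral_exp_smul_eq_fourier, hfrequency] using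
    pow_mul_norm_fourier_le_integral_norm_iteratedDeriv hg hint (-a / (2 * Real.pi))

theorem norm_integral_exp_smul_le_of_le_abs (hg : ContDiff ℝ k g)
    (hint : ∀ j ≤ k, Integrable (iteratedDeriv j g)) {a b : ℝ} (hb : 0 < b)
    (hab : (∃ t, g t ≠ 0) → b ≤ |a|) :
    ‖∫ t : ℝ, Complex.exp (Complex.I * a * t) • g t‖ ≤
      (b ^ k)⁻¹ * ∫ t, ‖iteratedDeriv k g t‖ := by
  by_cases hne : ∃ t, g t ≠ 0
  · rw [le_inv_mul_iff₀ (pow_pos hb k)]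
    calc b ^ k * ‖∫ t : ℝ, Complex.exp (Complex.I * a * t) • g t‖
        ≤ |a| ^ k * ‖∫ t : ℝ, Complex.exp (Complex.I * a * t) • g t‖ := by
          gcongr
          exact hab hne
      _ ≤ ∫ t, ‖iteratedDeriv k g t‖ := abs_pow_mul_norm_integral_exp_smul_le hg hint a
  · push Not at hne
    simp only [hne, smul_zero, integral_zero, norm_zero]
    positivity

end Fiber

section Family

variable {X E : Type*} [MeasurableSpace X] {μ : Measure X}
  [NormedAddCommGroup E] [NormedSpace ℂ E] {h : ℝ × X → E} {k : ℕ} {φ : X → ℝ} {b : ℝ}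

theorem ae_norm_integral_exp_smul_le_of_le_abs
    (hsmooth : ∀ᵐ x ∂μ, ContDiff ℝ k fun t => h (t, x))
    (hfiber : ∀ j ≤ k, ∀ᵐ x ∂μ, Integrable (iteratedDeriv j fun t => h (t, x)))
    (hb : 0 < b) (hφ : ∀ᵐ x ∂μ, (∃ t, h (t, x) ≠ 0) → b ≤ |φ x|) :
    ∀ᵐ x ∂μ, ‖∫ t : ℝ, Complex.exp (Complex.I * φ x * t) • h (t, x)‖ ≤
      (b ^ k)⁻¹ * ∫ t, ‖iteratedDeriv k (fun t => h (t, x)) t‖ := by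
  have hfiber_all : ∀ᵐ x ∂μ, ∀ j ≤ k, Integrable (iteratedDeriv j fun t => h (t, x)) := by
    simpa only [ae_all_iff] using hfiber
  filter_upwards [hsmooth, hfiber_all, hφ] with x hsmooth_x hfiber_x hφ_x
  exact norm_integral_exp_smul_le_of_le_abs hsmooth_x hfiber_x hb hφ_x

theorem aestronglyMeasurable_integral_exp_smul [SFinite μ]
    (hh : AEStronglyMeasurable h (volume.prod μ)) (hφ : AEMeasurable φ μ) :
    AEStronglyMeasurable (fun x => ∫ t : ℝ, Complex.exp (Complex.I * φ x * t) • h (t, x)) μ := by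
  have hphase : AEStronglyMeasurable
      (fun p : ℝ × X => Complex.exp (Complex.I * φ p.2 * p.1)) (volume.prod μ) := by
    have hφ_snd : AEMeasurable (fun p : ℝ × X => (φ p.2 : ℂ)) (volume.prod μ) :=
      hφ.complex_ofReal.comp_snd
    exact ((hφ_snd.const_mul _).mul (by fun_prop)).cexp.aestronglyMeasurable
  exact (hphase.smul hh).prod_swap.integral_prod_right'

end Family

theorem norm_integral_le_mul_integral_norm_prod {T X E F : Type*} [MeasurableSpace T]
    [MeasurableSpace X] {ν : Measure T} {μ : Measure X} [SFinite ν] [SFinite μ]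
    [NormedAddCommGroup E] [NormedSpace ℝ E] [NormedAddCommGroup F] {u : X → E} {G : T × X → F}
    {c : ℝ} (hG : Integrable G (ν.prod μ)) (hu : ∀ᵐ x ∂μ, ‖u x‖ ≤ c * ∫ t, ‖G (t, x)‖ ∂ν) :
    ‖∫ x, u x ∂μ‖ ≤ c * ∫ p, ‖G p‖ ∂(ν.prod μ) := by
  rw [integral_prod_symm _ hG.norm, ← integral_const_mul]
  exact norm_integral_le_of_norm_le (hG.integral_norm_prod_right.const_mul c) hu

theorem isBigO_rpow_neg_of_norm_le_inv_pow_mul {F : Type*} [Norm F] {u : ℝ → F} {C M : ℝ} {k : ℕ}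
    (hu : ∀ z, 0 < z → ‖u z‖ ≤ ((C * z) ^ k)⁻¹ * M) :
    u =O[atTop] fun z : ℝ => z ^ (-(k : ℝ)) := by
  refine IsBigO.of_bound ((C ^ k)⁻¹ * M) ?_
  filter_upwards [eventually_gt_atTop 0] with z hz
  calc ‖u z‖ ≤ ((C * z) ^ k)⁻¹ * M := hu z hz
    _ = (C ^ k)⁻¹ * M * ‖z ^ (-(k : ℝ))‖ := by
      rw [Real.rpow_neg hz.le, Real.rpow_natCast, norm_inv, norm_pow, Real.norm_of_nonneg hz.le,
        mul_pow, mul_inv]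
      ring

theorem localization_error_bound_general {X E : Type*} [MeasurableSpace X] {μ : Measure X}
    [SFinite μ] [NormedAddCommGroup E] [NormedSpace ℂ E] [CompleteSpace E] {k : ℕ} {C : ℝ}
    (hC : 0 < C) {f : X → ℝ} (hf : AEMeasurable f μ)
    {h : ℝ × X → E} (hh : AEStronglyMeasurable h (volume.prod μ))
    (hsmooth : ∀ᵐ x ∂μ, ContDiff ℝ k fun t => h (t, x))
    (hfiber : ∀ j < k, ∀ᵐ x ∂μ, Integrable (iteratedDeriv j fun t => h (t, x)))
    (hjoint : Integrable (fun p : ℝ × X => iteratedDeriv k (fun t => h (t, p.2)) p.1)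
      (volume.prod μ))
    (hlower : ∀ᵐ x ∂μ, (∃ t, h (t, x) ≠ 0) → C ≤ |f x|) :
    (∀ z : ℝ, 0 < z →
      Integrable (fun x => ∫ t : ℝ, Complex.exp (Complex.I * z * t * f x) • h (t, x)) μ) ∧
    (∀ z : ℝ, 0 < z →
      ‖∫ x, (∫ t : ℝ, Complex.exp (Complex.I * z * t * f x) • h (t, x)) ∂μ‖ ≤
        ((C * z) ^ k)⁻¹ *
          ∫ p, ‖iteratedDeriv k (fun t => h (t, p.2)) p.1‖ ∂(volume.prod μ)) ∧
    (fun z : ℝ => ∫ x, (∫ t : ℝ, Complex.exp (Complex.I * z * t * f x) • h (t, x)) ∂μ)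
      =O[atTop] fun z : ℝ => z ^ (-(k : ℝ)) := by
  have hexp (z : ℝ) (x : X) (t : ℝ) :
      Complex.I * z * t * f x = Complex.I * (z * f x : ℝ) * t := by
    push_cast
    ring
  have hphase (z : ℝ) (hz : 0 < z) : ∀ᵐ x ∂μ, (∃ t, h (t, x) ≠ 0) → C * z ≤ |z * f x| := by
    filter_upwards [hlower] with x hx hne
    rw [abs_mul, abs_of_pos hz, mul_comm C]
    gcongr
    exact hx hne
  have hfiber_le : ∀ j ≤ k, ∀ᵐ x ∂μ, Integrable (iteratedDeriv j fun t => h (t, x)) :=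
    fun j hj => hj.lt_or_eq.elim (hfiber j) fun hjk => hjk ▸ hjoint.prod_left_ae
  have hdecay (z : ℝ) (hz : 0 < z) :=
    ae_norm_integral_exp_smul_le_of_le_abs hsmooth hfiber_le (mul_pos hC hz) (hphase z hz)
  rw [and_iff_left_of_imp isBigO_rpow_neg_of_norm_le_inv_pow_mul]
  simp only [hexp]
  exact ⟨fun z hz => (hjoint.integral_norm_prod_right.const_mul _).mono'
      (aestronglyMeasurable_integral_exp_smul hh (hf.const_mul z)) (hdecay z hz),
    fun z hz => norm_integral_le_mul_integral_norm_prod hjoint (hdecay z hz)⟩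

/-- Localization lemma: if `|f| ≥ C` on the `t`-support of `h`, then the error integral
`E(z) = ∫∫ e^{iztf(x)} h(t,x) dt dx` satisfies `|E(z)| ≤ (Cz)^{-k} ‖∂_t^k h‖_{L¹}`,
so in particular `E(z) = O(z^{-k})` as `z → ∞`. -/
theorem localization_error_bound
    (n k : ℕ) (hn : 1 ≤ n) (C : ℝ) (hC : 0 < C)
    (f : EuclideanSpace ℝ (Fin n) → ℝ) (hf : Measurable f)
    (h : ℝ × EuclideanSpace ℝ (Fin n) → ℂ)
    (hschwartz : ∀ x, ∃ s : SchwartzMap ℝ ℂ, ∀ t, h (t, x) = s t)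
    (hL1 : ∀ j ≤ k, Integrable (fun p : ℝ × EuclideanSpace ℝ (Fin n) =>
      iteratedDeriv j (fun t => h (t, p.2)) p.1))
    (hlower : ∀ x, (∃ t, h (t, x) ≠ 0) → C ≤ |f x|) :
    (∀ z : ℝ, 0 < z →
      ‖∫ x, ∫ t : ℝ, Complex.exp (Complex.I * z * t * f x) * h (t, x)‖ ≤
        ((C * z) ^ k)⁻¹ *
          ∫ p : ℝ × EuclideanSpace ℝ (Fin n),
            ‖iteratedDeriv k (fun t => h (t, p.2)) p.1‖) ∧
    (fun z : ℝ => ∫ x, ∫ t : ℝ, Complex.exp (Complex.I * z * t * f x) * h (t, x))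
      =O[atTop] fun z : ℝ => z ^ (-(k : ℝ)) := by
  have hh : Integrable h := by simpa only [iteratedDeriv_zero] using hL1 0 k.zero_le
  have hsmooth (x) : ContDiff ℝ k fun t => h (t, x) := by
    obtain ⟨s, hs⟩ := hschwartz x
    exact funext hs ▸ mod_cast s.smooth k
  exact (localization_error_bound_general hC hf.aemeasurable hh.aestronglyMeasurable
    (ae_of_all _ hsmooth) (fun j hj => (hL1 j hj.le).prod_left_ae) (hL1 k le_rfl)
    (ae_of_all _ hlower)).2
end

section
/- Let k ≥ 1 be an integer and let a : ℝ × ℝ → ℝ be smooth and compactly supported. Then the integral J(z) = ∫_0^∞ a(z u^k, u) du admits the full asymptotic expansion, as z → ∞: for every N ∈ ℕ, J(z) = Σ_{j=0}^{N} (1/(k · j!)) z^{-(j+1)/k} ∫_0^∞ τ^{(j+1−k)/k} (∂₂^j a)(τ, 0) dτ + O(z^{-(N+2)/k}), where ∂₂^j a denotes the j-th partial derivative of a in its second argument. (In distributional language, the j-th coefficient is the universal distribution d_j = (1/k)(1/j!)(τ₊^{(j+1−k)/k} ⊗ δ₀^{(j)}) applied to a.) -/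
open MeasureTheory Filter Asymptotics

/-! On the curve `τ = z * u ^ p` the integrand vanishes once `u` exceeds a constant times
`z ^ (-1 / p)`. Replacing `a (τ, ·)` by its Taylor polynomial of degree `N` at `0` therefore costs
an error of size `u ^ (N + 1)` over an interval of length `O(z ^ (-1 / p))`, that is
`O(z ^ (-(N + 2) / p))` in total, while the substitution `τ = z * u ^ p` turns each Taylor term
into the corresponding term of the expansion. -/

section Slice

variable {𝕜 E F : Type*} [NontriviallyNormedField 𝕜] [NormedAddCommGroup E] [NormedSpace 𝕜 E]
  [NormedAddCommGroup F] [NormedSpace 𝕜 F] {f : F × 𝕜 → E} {n : ℕ}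

theorem iteratedDeriv_slice_eq_iteratedFDeriv (hf : ContDiff 𝕜 n f) (x : F) (t : 𝕜) :
    iteratedDeriv n (fun v => f (x, v)) t = iteratedFDeriv 𝕜 n f (x, t) fun _ => (0, 1) := by
  have hslice : (fun v => f (x, v)) =
      (fun q => f ((x, 0) + q)) ∘ ContinuousLinearMap.inr 𝕜 F 𝕜 := by
    ext v
    simp
  have hshift : ContDiff 𝕜 n fun q => f ((x, 0) + q) := by fun_prop
  rw [iteratedDeriv_eq_iteratedFDeriv, hslice,
    ContinuousLinearMap.iteratedFDeriv_comp_right _ hshift t le_rfl, iteratedFDeriv_comp_add_left]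
  simp

theorem continuous_iteratedDeriv_slice (hf : ContDiff 𝕜 n f) :
    Continuous fun q : F × 𝕜 => iteratedDeriv n (fun v => f (q.1, v)) q.2 := by
  simp only [iteratedDeriv_slice_eq_iteratedFDeriv hf]
  have := hf.continuous_iteratedFDeriv'
  fun_prop

theorem continuous_iteratedDeriv_slice_left (hf : ContDiff 𝕜 n f) (t : 𝕜) :
    Continuous fun x => iteratedDeriv n (fun v => f (x, v)) t :=
  (continuous_iteratedDeriv_slice hf).comp (Continuous.prodMk_left t)

end Slice

section Maclaurin

variable {E F : Type*} [NormedAddCommGroup E] [NormedSpace ℝ E]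
  [NormedAddCommGroup F] [NormedSpace ℝ F] {n : ℕ}

/-- The remainder at `t` of the Taylor expansion of `f` at `0` up to and including degree `n`.
Applied to `a (τ, ·)`, it is the integrand of the error of the asymptotic expansion. It is written
with `iteratedDeriv` rather than `taylorWithinEval` so that it does not refer to an interval. -/
noncomputable def maclaurinRemainder (n : ℕ) (f : ℝ → E) (t : ℝ) : E :=
  f t - ∑ j ∈ Finset.range (n + 1), (t ^ j / j.factorial) • iteratedDeriv j f 0

theorem maclaurinRemainder_zero_fun (n : ℕ) (t : ℝ) :
    maclaurinRemainder n (fun _ => (0 : E)) t = 0 := by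
  simp [maclaurinRemainder]

theorem norm_maclaurinRemainder_le {f : ℝ → E} (hf : ContDiff ℝ (n + 1) f) {C t : ℝ} (ht : 0 < t)
    (hC : ∀ y ∈ Set.Icc 0 t, ‖iteratedDeriv (n + 1) f y‖ ≤ C) :
    ‖maclaurinRemainder n f t‖ ≤ C / n.factorial * t ^ (n + 1) := by
  have hwithin : ∀ j ≤ n + 1, ∀ y ∈ Set.Icc 0 t,
      iteratedDerivWithin j f (Set.Icc 0 t) y = iteratedDeriv j f y := fun j hj y hy =>
    iteratedDerivWithin_eq_iteratedDeriv (uniqueDiffOn_Icc ht)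
      (hf.of_le (by exact_mod_cast hj)).contDiffAt hy
  have htaylor : maclaurinRemainder n f t = f t - taylorWithinEval f n (Set.Icc 0 t) 0 t := by
    rw [maclaurinRemainder, taylor_within_apply]
    congr 1
    refine Finset.sum_congr rfl fun j hj => ?_
    rw [hwithin j (Finset.mem_range.1 hj).le 0 (Set.left_mem_Icc.2 ht.le), sub_zero, div_eq_inv_mul]
  calc ‖maclaurinRemainder n f t‖
      ≤ C * (t - 0) ^ (n + 1) / n.factorial := by
        rw [htaylor]
        refine taylor_mean_remainder_bound ht.le hf.contDiffOn (Set.right_mem_Icc.2 ht.le) ?_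
        intro y hy
        rw [hwithin (n + 1) le_rfl y hy]
        exact hC y hy
    _ = C / n.factorial * t ^ (n + 1) := by ring

theorem continuous_maclaurinRemainder_slice {f : F × ℝ → E} (hf : ContDiff ℝ n f) :
    Continuous fun q : F × ℝ => maclaurinRemainder n (fun v => f (q.1, v)) q.2 := by
  refine hf.continuous.sub (continuous_finsetSum _ fun j hj => ?_)
  have hfj : ContDiff ℝ j f := hf.of_le (by exact_mod_cast Finset.mem_range_succ_iff.1 hj)
  have hderiv : Continuous fun q : F × ℝ => iteratedDeriv j (fun v => f (q.1, v)) 0 :=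
    (continuous_iteratedDeriv_slice_left hfj 0).comp continuous_fst
  fun_prop

theorem exists_norm_maclaurinRemainder_slice_le_of_isCompact {f : F × ℝ → E}
    (hf : ContDiff ℝ (n + 1) f) {K : Set F} (hK : IsCompact K) (T : ℝ) :
    ∃ C, ∀ x ∈ K, ∀ t ∈ Set.Ioc 0 T,
      ‖maclaurinRemainder n (fun v => f (x, v)) t‖ ≤ C * t ^ (n + 1) := by
  obtain ⟨C, hC⟩ := (hK.prod (isCompact_Icc (a := 0) (b := T))).exists_bound_of_continuousOn
    (continuous_iteratedDeriv_slice (n := n + 1) (by exact_mod_cast hf)).continuousOn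
  refine ⟨C / n.factorial, fun x hx t ht => ?_⟩
  have hslice : ContDiff ℝ (n + 1) fun v => f (x, v) := by fun_prop
  exact norm_maclaurinRemainder_le hslice ht.1 fun y hy =>
    hC (x, y) ⟨hx, hy.1, hy.2.trans ht.2⟩

end Maclaurin

section Curve

variable {E : Type*} [NormedAddCommGroup E] {p r z : ℝ}

theorem lt_mul_rpow_of_mem_Ioi_sdiff_Ioc (hp : 0 < p) (hr : 0 ≤ r) (hz : 0 < z) {u : ℝ}
    (hu : u ∈ Set.Ioi 0 \ Set.Ioc 0 ((r / z) ^ p⁻¹)) : r < z * u ^ p := by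
  obtain ⟨hu0 : 0 < u, hu1⟩ := hu
  have hlt : (r / z) ^ p⁻¹ < u := by
    by_contra! hle
    exact hu1 ⟨hu0, hle⟩
  rwa [Real.rpow_inv_lt_iff_of_pos (by positivity) hu0.le hp, div_lt_iff₀' hz] at hlt

theorem integrableOn_Ioi_comp_mul_rpow {g : ℝ × ℝ → E} (hp : 0 < p) (hr : 0 ≤ r) (hz : 0 < z)
    (hg : Continuous g) (hgr : ∀ τ u, r < τ → g (τ, u) = 0) :
    IntegrableOn (fun u => g (z * u ^ p, u)) (Set.Ioi 0) := by
  have hcont : Continuous fun u => g (z * u ^ p, u) := by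
    have := Real.continuous_rpow_const hp.le
    fun_prop
  exact (hcont.integrableOn_Icc.mono_set Set.Ioc_subset_Icc_self).of_forall_sdiff_eq_zero
    measurableSet_Ioi fun u hu => hgr _ u (lt_mul_rpow_of_mem_Ioi_sdiff_Ioc hp hr hz hu)

variable [NormedSpace ℝ E]

theorem integral_Ioi_rpow_smul_comp_rpow (hp : 0 < p) (s : ℝ) (b : ℝ → E) :
    ∫ u in Set.Ioi (0 : ℝ), u ^ s • b (u ^ p) =
      (1 / p) • ∫ τ in Set.Ioi (0 : ℝ), τ ^ ((s + 1 - p) / p) • b τ := by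
  rw [← integral_comp_rpow_Ioi_of_pos (g := fun τ => τ ^ ((s + 1 - p) / p) • b τ) hp,
    ← integral_smul]
  refine setIntegral_congr_fun measurableSet_Ioi fun u (hu : 0 < u) => ?_
  have hexponent : (p - 1) + p * ((s + 1 - p) / p) = s := by
    field_simp
    ring
  have hpow : u ^ (p - 1) * (u ^ p) ^ ((s + 1 - p) / p) = u ^ s := by
    rw [← Real.rpow_mul hu.le, ← Real.rpow_add hu, hexponent]
  simp only [smul_smul]
  rw [← hpow]
  field_simp

theorem integral_Ioi_rpow_smul_comp_mul_left (hz : 0 < z) (q : ℝ) (b : ℝ → E) :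
    ∫ x in Set.Ioi (0 : ℝ), x ^ q • b (z * x) =
      z ^ (-(q + 1)) • ∫ τ in Set.Ioi (0 : ℝ), τ ^ q • b τ := by
  have hpow : z ^ (-(q + 1)) = z ^ (-q) * z⁻¹ := by
    rw [neg_add, Real.rpow_add hz, Real.rpow_neg_one]
  have hscale := integral_comp_mul_left_Ioi (fun τ => τ ^ q • b τ) 0 hz
  rw [mul_zero] at hscale
  rw [hpow, mul_smul, ← hscale, ← integral_smul]
  refine setIntegral_congr_fun measurableSet_Ioi fun x (hx : 0 < x) => ?_
  simp only [smul_smul]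
  rw [Real.mul_rpow hz.le hx.le, ← mul_assoc, ← Real.rpow_add hz, neg_add_cancel, Real.rpow_zero,
    one_mul]

theorem integral_Ioi_rpow_smul_comp_mul_rpow (hp : 0 < p) (hz : 0 < z) (s : ℝ) (b : ℝ → E) :
    ∫ u in Set.Ioi (0 : ℝ), u ^ s • b (z * u ^ p) =
      (1 / p * z ^ (-(s + 1) / p)) •
        ∫ τ in Set.Ioi (0 : ℝ), τ ^ ((s + 1 - p) / p) • b τ := by
  have hexponent : -((s + 1 - p) / p + 1) = -(s + 1) / p := by
    field_simp
    ring
  rw [integral_Ioi_rpow_smul_comp_rpow hp s fun x => b (z * x),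
    integral_Ioi_rpow_smul_comp_mul_left hz, smul_smul, hexponent]

theorem norm_integral_Ioi_comp_mul_rpow_le {g : ℝ × ℝ → E} {C : ℝ} {n : ℕ} (hp : 0 < p)
    (hr : 0 ≤ r) (hz : 0 < z) (hrz : r ≤ z) (hgr : ∀ τ u, r < τ → g (τ, u) = 0)
    (hgC : ∀ τ ∈ Set.Icc 0 r, ∀ u ∈ Set.Ioc (0 : ℝ) 1, ‖g (τ, u)‖ ≤ C * u ^ n) :
    ‖∫ u in Set.Ioi (0 : ℝ), g (z * u ^ p, u)‖ ≤ C * ((r / z) ^ p⁻¹) ^ (n + 1) := by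
  have hC : 0 ≤ C := by
    simpa using (norm_nonneg _).trans (hgC 0 ⟨le_rfl, hr⟩ 1 ⟨one_pos, le_rfl⟩)
  set T := (r / z) ^ p⁻¹
  have hT0 : 0 ≤ T := by positivity
  have hT1 : T ≤ 1 :=
    Real.rpow_le_one (by positivity) (div_le_one_of_le₀ hrz hz.le) (by positivity)
  have hbound : ∀ u ∈ Set.Ioc 0 T, ‖g (z * u ^ p, u)‖ ≤ C * T ^ n := by
    rintro u ⟨hu0, huT⟩
    rcases le_or_gt (z * u ^ p) r with hle | hlt
    · calc ‖g (z * u ^ p, u)‖ ≤ C * u ^ n := hgC _ ⟨by positivity, hle⟩ u ⟨hu0, huT.trans hT1⟩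
        _ ≤ C * T ^ n := by gcongr
    · rw [hgr _ u hlt, norm_zero]
      positivity
  calc ‖∫ u in Set.Ioi (0 : ℝ), g (z * u ^ p, u)‖
      = ‖∫ u in Set.Ioc 0 T, g (z * u ^ p, u)‖ := by
        rw [setIntegral_eq_of_subset_of_forall_sdiff_eq_zero measurableSet_Ioi
          Set.Ioc_subset_Ioi_self fun u hu =>
            hgr _ u (lt_mul_rpow_of_mem_Ioi_sdiff_Ioc hp hr hz hu)]
    _ ≤ C * T ^ n * volume.real (Set.Ioc 0 T) :=
        norm_setIntegral_le_of_norm_le_const measure_Ioc_lt_top hbound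
    _ = C * T ^ (n + 1) := by
        rw [Real.volume_real_Ioc_of_le hT0, sub_zero, mul_assoc, ← pow_succ]

theorem isBigO_integral_Ioi_comp_mul_rpow {g : ℝ × ℝ → E} {C : ℝ} {n : ℕ} (hp : 0 < p) (hr : 0 ≤ r)
    (hgr : ∀ τ u, r < τ → g (τ, u) = 0)
    (hgC : ∀ τ ∈ Set.Icc 0 r, ∀ u ∈ Set.Ioc (0 : ℝ) 1, ‖g (τ, u)‖ ≤ C * u ^ n) :
    (fun z : ℝ => ∫ u in Set.Ioi (0 : ℝ), g (z * u ^ p, u))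
      =O[atTop] fun z => z ^ (-((n : ℝ) + 1) / p) := by
  refine IsBigO.of_bound (C * r ^ (((n : ℝ) + 1) / p)) ?_
  filter_upwards [eventually_gt_atTop 0, eventually_ge_atTop r] with z hz hrz
  have hpow : ((r / z) ^ p⁻¹) ^ (n + 1) = r ^ (((n : ℝ) + 1) / p) * z ^ (-((n : ℝ) + 1) / p) := by
    rw [← Real.rpow_mul_natCast (by positivity), inv_mul_eq_div, Nat.cast_add_one,
      Real.div_rpow hr hz.le, neg_div, Real.rpow_neg hz.le, div_eq_mul_inv]
  calc ‖∫ u in Set.Ioi (0 : ℝ), g (z * u ^ p, u)‖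
      ≤ C * ((r / z) ^ p⁻¹) ^ (n + 1) := norm_integral_Ioi_comp_mul_rpow_le hp hr hz hrz hgr hgC
    _ = C * r ^ (((n : ℝ) + 1) / p) * ‖z ^ (-((n : ℝ) + 1) / p)‖ := by
        rw [hpow, Real.norm_of_nonneg (by positivity), mul_assoc]

theorem integral_maclaurinRemainder_slice_comp_mul_rpow {a : ℝ × ℝ → E} {N : ℕ} (hp : 0 < p)
    (hr : 0 ≤ r) (hz : 0 < z) (ha : ContDiff ℝ N a) (har : ∀ τ u, r < τ → a (τ, u) = 0) :
    ∫ u in Set.Ioi (0 : ℝ), maclaurinRemainder N (fun v => a (z * u ^ p, v)) u =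
      (∫ u in Set.Ioi (0 : ℝ), a (z * u ^ p, u)) -
        ∑ j ∈ Finset.range (N + 1), (1 / (p * j.factorial) * z ^ (-((j : ℝ) + 1) / p)) •
          ∫ τ in Set.Ioi (0 : ℝ),
            τ ^ (((j : ℝ) + 1 - p) / p) • iteratedDeriv j (fun u => a (τ, u)) 0 := by
  have hterm : ∀ j ∈ Finset.range (N + 1), IntegrableOn
      (fun u => (u ^ j / (j.factorial : ℝ)) • iteratedDeriv j (fun v => a (z * u ^ p, v)) 0)
      (Set.Ioi 0) := by
    intro j hj
    have haj : ContDiff ℝ j a := ha.of_le (by exact_mod_cast Finset.mem_range_succ_iff.1 hj)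
    have hderiv : Continuous fun q : ℝ × ℝ => iteratedDeriv j (fun v => a (q.1, v)) 0 :=
      (continuous_iteratedDeriv_slice_left haj 0).comp continuous_fst
    refine integrableOn_Ioi_comp_mul_rpow
      (g := fun q => (q.2 ^ j / (j.factorial : ℝ)) • iteratedDeriv j (fun v => a (q.1, v)) 0)
      hp hr hz (by fun_prop) fun τ u hτ => ?_
    simp [har τ _ hτ]
  simp only [maclaurinRemainder]
  rw [integral_sub (integrableOn_Ioi_comp_mul_rpow hp hr hz ha.continuous har)
    (integrable_finsetSum _ hterm), integral_finsetSum _ hterm]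
  congr 1
  refine Finset.sum_congr rfl fun j _ => ?_
  have hsubst := integral_Ioi_rpow_smul_comp_mul_rpow hp hz j
    fun τ => iteratedDeriv j (fun v => a (τ, v)) 0
  simp only [Real.rpow_natCast] at hsubst
  simp only [div_eq_inv_mul (_ ^ j : ℝ), mul_smul (j.factorial : ℝ)⁻¹, integral_smul, hsubst]
  rw [smul_smul]
  congr 1
  field_simp

end Curve

theorem extremum_model_expansion_general {E : Type*} [NormedAddCommGroup E] [NormedSpace ℝ E]
    [CompleteSpace E] {p r : ℝ} (hp : 0 < p) {N : ℕ} {a : ℝ × ℝ → E} (ha : ContDiff ℝ (N + 1) a)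
    (har : ∀ τ u, r < τ → a (τ, u) = 0) :
    (fun z : ℝ =>
        (∫ u in Set.Ioi (0 : ℝ), a (z * u ^ p, u)) -
        ∑ j ∈ Finset.range (N + 1), (1 / (p * j.factorial) * z ^ (-((j : ℝ) + 1) / p)) •
          ∫ τ in Set.Ioi (0 : ℝ),
            τ ^ (((j : ℝ) + 1 - p) / p) • iteratedDeriv j (fun u => a (τ, u)) 0)
      =O[atTop] fun z : ℝ => z ^ (-((N : ℝ) + 2) / p) := by
  have hr : 0 ≤ max r 0 := le_max_right r 0
  have har' : ∀ τ u, max r 0 < τ → a (τ, u) = 0 := fun τ u hτ =>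
    har τ u ((le_max_left r 0).trans_lt hτ)
  obtain ⟨C, hC⟩ := exists_norm_maclaurinRemainder_slice_le_of_isCompact ha
    (isCompact_Icc (a := 0) (b := max r 0)) 1
  have hremainder := isBigO_integral_Ioi_comp_mul_rpow
    (g := fun q => maclaurinRemainder N (fun v => a (q.1, v)) q.2) hp hr
    (fun τ u hτ => by simp only [har' τ _ hτ, maclaurinRemainder_zero_fun]) hC
  refine hremainder.congr' ?_ (.of_forall fun z => ?_)
  · filter_upwards [eventually_gt_atTop 0] with z hz
    exact integral_maclaurinRemainder_slice_comp_mul_rpow hp hr hz (ha.of_le (by simp)) har'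
  · push_cast
    ring_nf

/-- For `a` smooth compactly supported, `J(z) = ∫_0^∞ a(zu^k, u) du` has the full asymptotic
expansion `J(z) ~ Σ_j (1/(k j!)) z^{-(j+1)/k} ∫_0^∞ τ^{(j+1-k)/k} ∂₂^j a(τ,0) dτ`. -/
theorem extremum_model_expansion
    (k : ℕ) (hk : 1 ≤ k) (a : ℝ × ℝ → ℝ)
    (ha : ContDiff ℝ (⊤ : ℕ∞) a) (hasupp : HasCompactSupport a) :
    ∀ N : ℕ,
      (fun z : ℝ =>
          (∫ u in Set.Ioi (0:ℝ), a (z * u ^ k, u)) -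
          ∑ j ∈ Finset.range (N + 1),
            (1 / (k * (Nat.factorial j) : ℝ)) * z ^ (-((j : ℝ) + 1) / k) *
              ∫ τ in Set.Ioi (0:ℝ),
                τ ^ (((j : ℝ) + 1 - k) / k) * iteratedDeriv j (fun u => a (τ, u)) 0)
        =O[atTop] fun z : ℝ => z ^ (-((N : ℝ) + 2) / k) := by
  intro N
  obtain ⟨r, hr⟩ := hasupp.isBounded.exists_norm_le
  have har : ∀ τ u, r < τ → a (τ, u) = 0 := fun τ u hτ =>
    image_eq_zero_of_notMem_tsupport fun hmem =>
      (hτ.trans_le ((Real.le_norm_self τ).trans (norm_fst_le (τ, u)))).not_ge (hr _ hmem)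
  have haN : ContDiff ℝ (N + 1) a := ha.of_le (by exact_mod_cast le_top)
  simpa only [Real.rpow_natCast, smul_eq_mul] using
    extremum_model_expansion_general (p := k) (Nat.cast_pos.2 hk) haN har
end
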